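/- Let D and G be strictly pseudoconvex domains in ℂⁿ (n ≥ 2) with the closure of D compactly contained in G. Then G ∖ cl(D) is a domain which is Gromov hyperbolic with respect to its Kobayashi distance. -/

import Mathlib

open Metric Set

noncomputable section

/-- Inverse hyperbolic tangent: `artanh t = (1/2) * log ((1+t)/(1-t))`. -/
def artanh (x : ℝ) : ℝ := Real.log ((1 + x) / (1 - x)) / 2

variable {E : Type*} [NormedAddCommGroup E] [NormedSpace ℂ E]

/-- The Lempert function of a set `D ⊆ E`:
`l_D(z,w) = inf { artanh |α| : ∃ φ : 𝔻 → D holomorphic, φ 0 = z, φ α = w }`. -/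
def lempert (D : Set E) (z w : E) : ℝ :=
  sInf { r : ℝ | ∃ α : ℂ, ‖α‖ < 1 ∧
    (∃ φ : ℂ → E, DifferentiableOn ℂ φ (ball 0 1) ∧ MapsTo φ (ball 0 1) D ∧
      φ 0 = z ∧ φ α = w) ∧ r = artanh ‖α‖ }

/-- The Kobayashi pseudodistance: infimum of `∑ l_D(z_{i-1}, z_i)` over all finite
chains of points `z = c 0, c 1, …, c m = w` in `D`. -/
def kobayashi (D : Set E) (z w : E) : ℝ :=
  sInf { r : ℝ | ∃ (m : ℕ) (c : ℕ → E), c 0 = z ∧ c m = w ∧ (∀ i ≤ m, c i ∈ D) ∧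
    r = ∑ i ∈ Finset.range m, lempert D (c i) (c (i + 1)) }

/-- The Carathéodory pseudodistance:
`c_D(z,w) = sup { artanh |f w| : f : D → 𝔻 holomorphic, f z = 0 }`. -/
def caratheodory (D : Set E) (z w : E) : ℝ :=
  sSup { r : ℝ | ∃ f : E → ℂ, DifferentiableOn ℂ f D ∧ MapsTo f D (ball 0 1) ∧
    f z = 0 ∧ r = artanh ‖f w‖ }

/-- `(D, d)` is Gromov hyperbolic if
`sup_{p,q,x,w ∈ D} ( min{(p,x)_w, (x,q)_w} − (p,q)_w ) < ∞`, where
`(x,y)_z = d x z + d z y - d x y` is the Gromov product. -/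
def GromovHyperbolicWith (D : Set E) (d : E → E → ℝ) : Prop :=
  ∃ C : ℝ, ∀ p ∈ D, ∀ q ∈ D, ∀ x ∈ D, ∀ w ∈ D,
    min (d p w + d w x - d p x) (d x w + d w q - d x q) - (d p w + d w q - d p q) ≤ C

end

noncomputable section LeviForm

variable {n : ℕ}

/-- The standard basis vector `e_j` of `ℂⁿ`. -/
def stdBasis (j : Fin n) : EuclideanSpace ℂ (Fin n) := EuclideanSpace.single j 1

/-- The second-order Wirtinger derivative `∂²ρ/∂z_j∂z̄_k` at `p` of a real-valued `ρ`,
where `∂/∂z_j = (∂/∂x_j − i·∂/∂y_j)/2` and `∂/∂z̄_j = (∂/∂x_j + i·∂/∂y_j)/2`, expressed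
through the real Hessian of `ρ` (`∂/∂x_j`, `∂/∂y_j` are the derivatives in the real
directions `e_j` and `i·e_j`). -/
def wirtinger2 (ρ : EuclideanSpace ℂ (Fin n) → ℝ) (p : EuclideanSpace ℂ (Fin n))
    (j k : Fin n) : ℂ :=
  (((iteratedFDeriv ℝ 2 ρ p ![stdBasis j, stdBasis k] +
      iteratedFDeriv ℝ 2 ρ p ![Complex.I • stdBasis j, Complex.I • stdBasis k] : ℝ) : ℂ) +
    Complex.I * ((iteratedFDeriv ℝ 2 ρ p ![stdBasis j, Complex.I • stdBasis k] -
      iteratedFDeriv ℝ 2 ρ p ![Complex.I • stdBasis j, stdBasis k] : ℝ) : ℂ)) / 4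

/-- The Levi form `Σ_{j,k} (∂²ρ/∂z_j∂z̄_k)(p) X_j conj(X_k)` of `ρ` at `p` applied
to `X ∈ ℂⁿ`. (It is a real number when `ρ` is real-valued; we take it in `ℂ`.) -/
def leviForm (ρ : EuclideanSpace ℂ (Fin n) → ℝ) (p : EuclideanSpace ℂ (Fin n))
    (X : EuclideanSpace ℂ (Fin n)) : ℂ :=
  ∑ j, ∑ k, wirtinger2 ρ p j k * X j * starRingEnd ℂ (X k)

/-- The Wirtinger derivative `(∂ρ/∂z_j)(p) = ((∂ρ/∂x_j)(p) − i·(∂ρ/∂y_j)(p))/2` of a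
real-valued function `ρ`. -/
def wirtingerDeriv (ρ : EuclideanSpace ℂ (Fin n) → ℝ) (p : EuclideanSpace ℂ (Fin n))
    (j : Fin n) : ℂ :=
  (((fderiv ℝ ρ p (stdBasis j) : ℝ) : ℂ) -
    Complex.I * ((fderiv ℝ ρ p (Complex.I • stdBasis j) : ℝ) : ℂ)) / 2

end LeviForm

/-- A bounded domain `D ⊆ ℂⁿ` is strictly pseudoconvex if it has a `C²` defining
function `ρ` on a neighborhood of `∂D` (`D` given locally by `{ρ < 0}`, `∇ρ ≠ 0` on
`∂D`) whose Levi form is positive on nonzero complex tangent vectors: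
`Σ_j (∂ρ/∂z_j)(p) X_j = 0`, `X ≠ 0` implies `Σ_{j,k} (∂²ρ/∂z_j∂z̄_k)(p) X_j conj(X_k) > 0`. -/
def IsStrictlyPseudoconvex {n : ℕ} (D : Set (EuclideanSpace ℂ (Fin n))) : Prop :=
  Bornology.IsBounded D ∧
  ∃ (U : Set (EuclideanSpace ℂ (Fin n))) (ρ : EuclideanSpace ℂ (Fin n) → ℝ),
    IsOpen U ∧ frontier D ⊆ U ∧ ContDiffOn ℝ 2 ρ U ∧
    (∀ p ∈ frontier D, fderiv ℝ ρ p ≠ 0) ∧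
    D ∩ U = { z ∈ U | ρ z < 0 } ∧
    ∀ p ∈ frontier D, ∀ X : EuclideanSpace ℂ (Fin n), X ≠ 0 →
      (∑ j, wirtingerDeriv ρ p j * X j) = 0 → 0 < (leviForm ρ p X).re

/-!
Put `Ω = G \ closure D`. Let `δ` be minus a defining function of `G`, and let `Q z w` be
`δ z + δ w + ‖z - w‖²` plus the size of the complex normal component of `w - z`; this is a
quasi-metric near `∂G`. There the Kobayashi distance of `Ω` satisfies the Balogh–Bonk estimate
`k(z, w) = log (Q z w) - log (δ z) / 2 - log (δ w) / 2 + O(1)`, and the quasi-triangle inequality of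
`Q` becomes Gromov's four-point inequality for `k`.

The upper estimate moves both points inwards, along complex normal discs, to a depth comparable to
`Q z w`, where they lie on a common disc. For the lower estimate one measures the variation of
`log |P| / 2` along analytic discs, for Levi polynomials `P` at two points of `∂G`, truncated so
that the functions become constant away from these points. Both arguments are local at `∂G`.

Near `∂D` the domain `Ω` is pseudoconcave, and as `n ≥ 2` there are small discs attached to
`closure D` from outside along complex tangent directions. They show that `k` remains bounded near
`∂D`, so that `∂D` does not influence hyperbolicity. They also show that the complement of
`closure D` is connected: on the closure of a bounded component, the norm would be maximal at the
centre of a disc inside the closure. Then `Ω` is the intersection of two connected open sets which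
cover the simply connected space `ℂⁿ`, and such an intersection is connected.
-/

open Filter Topology

section Kobayashi

variable {E : Type*} [NormedAddCommGroup E] [NormedSpace ℂ E] {D : Set E} {φ : ℂ → E} {α : ℂ}

lemma artanh_eq_real_artanh {x : ℝ} (hx : x ∈ Icc (-1) 1) : artanh x = Real.artanh x := by
  rw [Real.artanh_eq_half_log hx, artanh]
  ring

lemma artanh_zero : artanh 0 = 0 := by simp [artanh]

lemma artanh_nonneg {x : ℝ} (h0 : 0 ≤ x) (h1 : x ≤ 1) : 0 ≤ artanh x := by
  rw [artanh_eq_real_artanh ⟨by linarith, h1⟩]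
  exact Real.artanh_nonneg h0

/-- A holomorphic map from the open unit disc to `D`, encoded as a function on all of `ℂ` whose
values off the disc are irrelevant. -/
structure IsAnalyticDisc (D : Set E) (φ : ℂ → E) : Prop where
  differentiableOn : DifferentiableOn ℂ φ (ball 0 1)
  mapsTo : MapsTo φ (ball 0 1) D

namespace IsAnalyticDisc

lemma mem (hφ : IsAnalyticDisc D φ) (hα : ‖α‖ < 1) : φ α ∈ D :=
  hφ.mapsTo (by simpa using hα)

lemma zero_mem (hφ : IsAnalyticDisc D φ) : φ 0 ∈ D := hφ.mem (by simp)

lemma comp (hφ : IsAnalyticDisc D φ) {f : ℂ → ℂ} (hf : IsAnalyticDisc (ball 0 1) f) :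
    IsAnalyticDisc D (φ ∘ f) :=
  ⟨hφ.differentiableOn.comp hf.differentiableOn hf.mapsTo, hφ.mapsTo.comp hf.mapsTo⟩

end IsAnalyticDisc

/-- The automorphism `z ↦ (z + a) / (1 + ā z)` of the unit disc, taking `0` to `a` and `-a`
to `0`. -/
noncomputable def discShift (a z : ℂ) : ℂ := (z + a) / (1 + starRingEnd ℂ a * z)

@[simp] lemma discShift_zero (a : ℂ) : discShift a 0 = a := by simp [discShift]

@[simp] lemma discShift_neg_self (a : ℂ) : discShift a (-a) = 0 := by simp [discShift]

lemma one_add_conj_mul_ne_zero {a z : ℂ} (ha : ‖a‖ < 1) (hz : ‖z‖ < 1) :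
    1 + starRingEnd ℂ a * z ≠ 0 := by
  intro h
  have hnorm : ‖starRingEnd ℂ a * z‖ = 1 := by
    rw [show starRingEnd ℂ a * z = -1 by linear_combination h]
    simp
  rw [norm_mul, RCLike.norm_conj] at hnorm
  nlinarith [norm_nonneg a, norm_nonneg z]

lemma norm_discShift_lt_one {a z : ℂ} (ha : ‖a‖ < 1) (hz : ‖z‖ < 1) : ‖discShift a z‖ < 1 := by
  rw [discShift, norm_div, div_lt_one (norm_pos_iff.2 (one_add_conj_mul_ne_zero ha hz))]
  have identity :
      ‖1 + starRingEnd ℂ a * z‖ ^ 2 - ‖z + a‖ ^ 2 = (1 - ‖a‖ ^ 2) * (1 - ‖z‖ ^ 2) := by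
    simp only [← Complex.normSq_eq_norm_sq, Complex.normSq_apply, Complex.add_re, Complex.add_im,
      Complex.mul_re, Complex.mul_im, Complex.one_re, Complex.one_im, Complex.conj_re,
      Complex.conj_im]
    ring
  have hpos : 0 < (1 - ‖a‖ ^ 2) * (1 - ‖z‖ ^ 2) := by
    apply mul_pos <;> nlinarith [norm_nonneg a, norm_nonneg z]
  exact lt_of_pow_lt_pow_left₀ 2 (norm_nonneg _) (by linarith)

lemma isAnalyticDisc_discShift {a : ℂ} (ha : ‖a‖ < 1) :
    IsAnalyticDisc (ball 0 1) (discShift a) where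
  differentiableOn := DifferentiableOn.div (by fun_prop) (by fun_prop) fun _ hz =>
    one_add_conj_mul_ne_zero ha (by simpa using hz)
  mapsTo _ hz := by simpa using norm_discShift_lt_one ha (by simpa using hz)

/-- The set of numbers `artanh |α|` whose infimum is the Lempert function. -/
def lempertCosts (D : Set E) (z w : E) : Set ℝ :=
  {r | ∃ α : ℂ, ‖α‖ < 1 ∧ (∃ φ, IsAnalyticDisc D φ ∧ φ 0 = z ∧ φ α = w) ∧ r = artanh ‖α‖}

lemma lempert_eq_sInf_lempertCosts (D : Set E) (z w : E) :
    lempert D z w = sInf (lempertCosts D z w) := by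
  refine congrArg sInf (Set.ext fun r => exists_congr fun α => ?_)
  refine and_congr_right fun _ => and_congr_left fun _ => exists_congr fun φ => ?_
  exact ⟨fun ⟨hd, hm, h⟩ => ⟨⟨hd, hm⟩, h⟩, fun ⟨hφ, h⟩ => ⟨hφ.1, hφ.2, h⟩⟩

lemma nonneg_of_mem_lempertCosts {z w : E} {r : ℝ} (hr : r ∈ lempertCosts D z w) : 0 ≤ r := by
  obtain ⟨α, hα, -, rfl⟩ := hr
  exact artanh_nonneg (norm_nonneg _) hα.le

lemma lempert_nonneg (D : Set E) (z w : E) : 0 ≤ lempert D z w := by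
  rw [lempert_eq_sInf_lempertCosts]
  exact Real.sInf_nonneg fun _ => nonneg_of_mem_lempertCosts

lemma IsAnalyticDisc.lempert_le (hφ : IsAnalyticDisc D φ) (hα : ‖α‖ < 1) :
    lempert D (φ 0) (φ α) ≤ artanh ‖α‖ := by
  rw [lempert_eq_sInf_lempertCosts]
  exact csInf_le ⟨0, fun _ => nonneg_of_mem_lempertCosts⟩ ⟨α, hα, ⟨φ, hφ, rfl, rfl⟩, rfl⟩

lemma lempertCosts_subset_swap (D : Set E) (z w : E) :
    lempertCosts D z w ⊆ lempertCosts D w z := by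
  rintro _ ⟨α, hα, ⟨φ, hφ, rfl, rfl⟩, rfl⟩
  exact ⟨-α, by simpa using hα,
    ⟨_, hφ.comp (isAnalyticDisc_discShift hα), by simp, by simp⟩, by simp⟩

lemma lempert_symm (D : Set E) (z w : E) : lempert D z w = lempert D w z := by
  rw [lempert_eq_sInf_lempertCosts, lempert_eq_sInf_lempertCosts,
    (lempertCosts_subset_swap D z w).antisymm (lempertCosts_subset_swap D w z)]

/-- The lengths of the finite chains whose infimum is the Kobayashi pseudodistance. -/
def chainLengths (D : Set E) (z w : E) : Set ℝ :=
  {r | ∃ (m : ℕ) (c : ℕ → E), c 0 = z ∧ c m = w ∧ (∀ i ≤ m, c i ∈ D) ∧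
    r = ∑ i ∈ Finset.range m, lempert D (c i) (c (i + 1))}

lemma nonneg_of_mem_chainLengths {z w : E} {r : ℝ} (hr : r ∈ chainLengths D z w) : 0 ≤ r := by
  obtain ⟨m, c, -, -, -, rfl⟩ := hr
  exact Finset.sum_nonneg fun i _ => lempert_nonneg _ _ _

lemma kobayashi_nonneg (D : Set E) (z w : E) : 0 ≤ kobayashi D z w :=
  Real.sInf_nonneg fun _ => nonneg_of_mem_chainLengths

lemma kobayashi_le_of_mem_chainLengths {z w : E} {r : ℝ} (hr : r ∈ chainLengths D z w) :
    kobayashi D z w ≤ r :=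
  csInf_le ⟨0, fun _ => nonneg_of_mem_chainLengths⟩ hr

lemma lempert_mem_chainLengths {z w : E} (hz : z ∈ D) (hw : w ∈ D) :
    lempert D z w ∈ chainLengths D z w := by
  refine ⟨1, fun i => if i = 0 then z else w, by simp, by simp, fun i _ => ?_, by simp⟩
  by_cases h : i = 0 <;> simp [h, hz, hw]

lemma kobayashi_le_lempert {z w : E} (hz : z ∈ D) (hw : w ∈ D) :
    kobayashi D z w ≤ lempert D z w :=
  kobayashi_le_of_mem_chainLengths (lempert_mem_chainLengths hz hw)

lemma IsAnalyticDisc.kobayashi_le (hφ : IsAnalyticDisc D φ) (hα : ‖α‖ < 1) :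
    kobayashi D (φ 0) (φ α) ≤ artanh ‖α‖ :=
  (kobayashi_le_lempert hφ.zero_mem (hφ.mem hα)).trans (hφ.lempert_le hα)

lemma sub_le_kobayashi_of_sub_le_lempert {U : E → ℝ}
    (hU : ∀ x ∈ D, ∀ y ∈ D, U y - U x ≤ lempert D x y) {z w : E} (hz : z ∈ D) (hw : w ∈ D) :
    U w - U z ≤ kobayashi D z w := by
  refine le_csInf ⟨_, lempert_mem_chainLengths hz hw⟩ ?_
  rintro r ⟨m, c, rfl, rfl, hc, rfl⟩
  rw [← Finset.sum_range_sub (fun i => U (c i))]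
  refine Finset.sum_le_sum fun i hi => hU _ (hc _ ?_) _ (hc _ ?_) <;>
    · have := Finset.mem_range.1 hi
      omega

lemma add_mem_chainLengths {x y z : E} {r s : ℝ} (hr : r ∈ chainLengths D x y)
    (hs : s ∈ chainLengths D y z) : r + s ∈ chainLengths D x z := by
  obtain ⟨m, c, rfl, rfl, hc, rfl⟩ := hr
  obtain ⟨k, d, hd0, rfl, hd, rfl⟩ := hs
  have concat_add (i : ℕ) : (if m + i ≤ m then c (m + i) else d (m + i - m)) = d i := by
    rcases i.eq_zero_or_pos with rfl | hi
    · simp [hd0]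
    · rw [if_neg (by omega), Nat.add_sub_cancel_left]
  refine ⟨m + k, fun i => if i ≤ m then c i else d (i - m), by simp, concat_add k,
    fun i hi => ?_, ?_⟩
  · by_cases h : i ≤ m
    · simpa [h] using hc i h
    · simpa [h] using hd _ (by omega)
  · rw [Finset.sum_range_add]
    congr 1 <;> refine Finset.sum_congr rfl fun i hi => ?_
    · have := Finset.mem_range.1 hi
      beta_reduce
      rw [if_pos (by omega), if_pos (by omega)]
    · beta_reduce
      rw [concat_add, add_assoc, concat_add]

lemma kobayashi_triangle {x y z : E} (hx : x ∈ D) (hy : y ∈ D) (hz : z ∈ D) :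
    kobayashi D x z ≤ kobayashi D x y + kobayashi D y z := by
  refine le_of_forall_pos_le_add fun ε hε => ?_
  obtain ⟨r, hr, hrε⟩ := exists_lt_of_csInf_lt ⟨_, lempert_mem_chainLengths hx hy⟩
    (lt_add_of_pos_right (kobayashi D x y) (half_pos hε))
  obtain ⟨s, hs, hsε⟩ := exists_lt_of_csInf_lt ⟨_, lempert_mem_chainLengths hy hz⟩
    (lt_add_of_pos_right (kobayashi D y z) (half_pos hε))
  linarith [kobayashi_le_of_mem_chainLengths (add_mem_chainLengths hr hs)]

lemma chainLengths_subset_swap (D : Set E) (x y : E) :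
    chainLengths D x y ⊆ chainLengths D y x := by
  rintro r ⟨m, c, rfl, rfl, hc, rfl⟩
  refine ⟨m, fun i => c (m - i), by simp, by simp, fun i _ => hc _ (by omega), ?_⟩
  rw [← Finset.sum_range_reflect]
  refine Finset.sum_congr rfl fun i hi => ?_
  have := Finset.mem_range.1 hi
  rw [lempert_symm]
  congr 2 <;> omega

lemma kobayashi_symm (D : Set E) (x y : E) : kobayashi D x y = kobayashi D y x :=
  congrArg sInf ((chainLengths_subset_swap D x y).antisymm (chainLengths_subset_swap D y x))

lemma kobayashi_self {x : E} (hx : x ∈ D) : kobayashi D x x = 0 :=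
  (kobayashi_le_of_mem_chainLengths ⟨0, fun _ => x, rfl, rfl, fun _ _ => hx, by simp⟩).antisymm
    (kobayashi_nonneg _ _ _)

end Kobayashi

section Subunit

variable {E : Type*} [NormedAddCommGroup E] [NormedSpace ℂ E] {Ω : Set E} {U : E → ℝ} {φ : ℂ → E}

/-- A function whose variation along every analytic disc is, to first order at the centre, at most
that of the Poincaré metric. Such functions bound the Kobayashi distance from below. -/
def IsSubunit (Ω : Set E) (U : E → ℝ) : Prop :=
  ∀ φ : ℂ → E, IsAnalyticDisc Ω φ → ∀ ε > 0, ∀ᶠ ζ in 𝓝 (0 : ℂ),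
    |U (φ ζ) - U (φ 0)| ≤ (1 + ε) * ‖ζ‖

lemma discShift_ofReal_apply {s t : ℝ} (hs : 1 - t * s ≠ 0) (ht : 1 - t * t ≠ 0) :
    discShift (t : ℂ) (((s - t) / (1 - t * s) : ℝ) : ℂ) = s := by
  rw [discShift, Complex.conj_ofReal]
  norm_cast
  have hden : 1 + t * ((s - t) / (1 - t * s)) = (1 - t * t) / (1 - t * s) := by
    field_simp
    ring
  rw [hden, div_div_eq_mul_div, div_eq_iff ht, add_mul, div_mul_cancel₀ _ hs]
  ring

lemma IsSubunit.eventually_abs_sub_le (hU : IsSubunit Ω U) (hφ : IsAnalyticDisc Ω φ) {t : ℝ}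
    (ht : |t| < 1) {ε : ℝ} (hε : 0 < ε) :
    ∀ᶠ s : ℝ in 𝓝 t, |U (φ s) - U (φ t)| ≤ (1 + ε) * |s - t| / (1 - t * s) := by
  have hpos : 0 < 1 - t * t := by nlinarith [abs_lt.1 ht]
  have htendsto :
      Tendsto (fun s : ℝ => (((s - t) / (1 - t * s) : ℝ) : ℂ)) (𝓝 t) (𝓝 0) := by
    have hcont : ContinuousAt (fun s : ℝ => (((s - t) / (1 - t * s) : ℝ) : ℂ)) t :=
      Complex.continuous_ofReal.continuousAt.comp
        (ContinuousAt.div (by fun_prop) (by fun_prop) hpos.ne')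
    simpa using hcont.tendsto
  have heventually : ∀ᶠ s : ℝ in 𝓝 t, 0 < 1 - t * s :=
    (by fun_prop : ContinuousAt (fun s : ℝ => 1 - t * s) t).eventually_const_lt hpos
  have hdisc := hφ.comp (isAnalyticDisc_discShift (a := t) (by simpa using ht))
  filter_upwards [htendsto.eventually (hU _ hdisc ε hε), heventually] with s hs hsp
  rw [Function.comp_apply, Function.comp_apply, discShift_ofReal_apply hsp.ne' hpos.ne',
    discShift_zero] at hs
  refine hs.trans_eq ?_
  rw [Complex.norm_real, Real.norm_eq_abs, abs_div, abs_of_pos hsp, mul_div_assoc]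

lemma IsSubunit.continuousAt_comp_ofReal (hU : IsSubunit Ω U) (hφ : IsAnalyticDisc Ω φ) {t : ℝ}
    (ht : |t| < 1) : ContinuousAt (fun s : ℝ => U (φ s)) t := by
  have hpos : 0 < 1 - t * t := by nlinarith [abs_lt.1 ht]
  rw [ContinuousAt, tendsto_iff_dist_tendsto_zero]
  have hcont : ContinuousAt (fun s : ℝ => (1 + 1) * |s - t| / (1 - t * s)) t :=
    ContinuousAt.div (by fun_prop) (by fun_prop) hpos.ne'
  exact squeeze_zero' (.of_forall fun _ => dist_nonneg)
    (hU.eventually_abs_sub_le hφ ht one_pos) (by simpa using hcont.tendsto)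

lemma hasDerivAt_artanh {t : ℝ} (ht : |t| < 1) : HasDerivAt artanh (1 / (1 - t * t)) t := by
  obtain ⟨h1, h2⟩ := abs_lt.1 ht
  have hplus : 0 < 1 + t := by linarith
  have hminus : 0 < 1 - t := by linarith
  have hquot : HasDerivAt (fun x : ℝ => (1 + x) / (1 - x))
      ((1 * (1 - t) - (1 + t) * (-1)) / (1 - t) ^ 2) t :=
    ((hasDerivAt_id t).const_add 1).div ((hasDerivAt_id t).const_sub 1) hminus.ne'
  refine ((hquot.log (div_pos hplus hminus).ne').div_const 2).congr_deriv ?_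
  rw [show 1 - t * t = (1 - t) * (1 + t) by ring]
  field_simp
  ring

lemma IsSubunit.frequently_slope_lt (hU : IsSubunit Ω U) (hφ : IsAnalyticDisc Ω φ) {t r : ℝ}
    (ht : |t| < 1) (hr : 1 / (1 - t * t) < r) :
    ∃ᶠ s in 𝓝[>] t, slope (fun s : ℝ => U (φ s)) t s < r := by
  have hpos : 0 < 1 - t * t := by nlinarith [abs_lt.1 ht]
  obtain ⟨ε, hεr, hε⟩ : ∃ ε, (1 + ε) / (1 - t * t) < r ∧ 0 < ε := by
    have hcont : ContinuousAt (fun ε : ℝ => (1 + ε) / (1 - t * t)) 0 := by fun_prop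
    have hlt : (1 + 0) / (1 - t * t) < r := by rwa [add_zero]
    have hright : ∀ᶠ ε in 𝓝[>] (0 : ℝ), (1 + ε) / (1 - t * t) < r :=
      nhdsWithin_le_nhds (hcont.eventually_lt_const hlt)
    exact (hright.and self_mem_nhdsWithin).exists
  have hlt : ∀ᶠ s : ℝ in 𝓝 t, (1 + ε) / (1 - t * s) < r := by
    have hcont : ContinuousAt (fun s : ℝ => (1 + ε) / (1 - t * s)) t :=
      ContinuousAt.div (by fun_prop) (by fun_prop) hpos.ne'
    exact hcont.eventually_lt_const hεr
  apply Eventually.frequently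
  filter_upwards [nhdsWithin_le_nhds (hU.eventually_abs_sub_le hφ ht hε),
    nhdsWithin_le_nhds hlt, self_mem_nhdsWithin] with s hs hsr hts
  have hst : 0 < s - t := sub_pos.2 hts
  rw [slope_def_field]
  refine lt_of_le_of_lt ?_ hsr
  rw [div_le_iff₀ hst, div_mul_eq_mul_div]
  rw [abs_of_pos hst] at hs
  exact (le_abs_self _).trans hs

lemma IsSubunit.sub_le_artanh_of_nonneg (hU : IsSubunit Ω U) (hφ : IsAnalyticDisc Ω φ) {τ : ℝ}
    (h0 : 0 ≤ τ) (h1 : τ < 1) : U (φ τ) - U (φ 0) ≤ artanh τ := by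
  have habs {t : ℝ} (ht : t ∈ Icc 0 τ) : |t| < 1 :=
    abs_lt.2 ⟨by linarith [ht.1], ht.2.trans_lt h1⟩
  refine image_le_of_liminf_slope_right_le_deriv_boundary
    (f := fun t : ℝ => U (φ t) - U (φ 0)) (B := artanh) (B' := fun t => 1 / (1 - t * t))
    (fun t ht => ?_) (by simp [artanh_zero]) (fun t ht => ?_) (fun t ht => ?_)
    (fun t ht r hr => ?_) ⟨h0, le_rfl⟩
  · have hcont := hU.continuousAt_comp_ofReal hφ (habs ht)
    exact (hcont.sub continuousAt_const).continuousWithinAt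
  · exact (hasDerivAt_artanh (habs ht)).continuousAt.continuousWithinAt
  · exact (hasDerivAt_artanh (habs (Ico_subset_Icc_self ht))).hasDerivWithinAt
  · have hfreq := hU.frequently_slope_lt hφ (habs (Ico_subset_Icc_self ht)) hr
    simpa only [slope_def_field, sub_sub_sub_cancel_right] using hfreq

lemma IsSubunit.sub_le_artanh (hU : IsSubunit Ω U) (hφ : IsAnalyticDisc Ω φ) {α : ℂ}
    (hα : ‖α‖ < 1) : U (φ α) - U (φ 0) ≤ artanh ‖α‖ := by
  rcases eq_or_ne α 0 with rfl | hα0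
  · simp [artanh_zero]
  have hnorm : ‖α‖ ≠ 0 := norm_ne_zero_iff.2 hα0
  have hrot : IsAnalyticDisc (ball 0 1) fun ζ : ℂ => ζ * (α / ‖α‖) :=
    ⟨by fun_prop, fun ζ hζ => by simpa [hnorm] using hζ⟩
  have hα : (‖α‖ : ℂ) * (α / ‖α‖) = α := mul_div_cancel₀ _ (by exact_mod_cast hnorm)
  simpa [hα] using hU.sub_le_artanh_of_nonneg (hφ.comp hrot) (norm_nonneg α) ‹_›

/-- Any two points of `Ω` lie on a common analytic disc. Equivalently, no infimum defining the
Lempert function on `Ω` is over the empty set, where it would take the junk value `0`. -/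
def AnalyticDiscConnected (Ω : Set E) : Prop :=
  ∀ x ∈ Ω, ∀ y ∈ Ω, ∃ α : ℂ, ‖α‖ < 1 ∧ ∃ φ, IsAnalyticDisc Ω φ ∧ φ 0 = x ∧ φ α = y

lemma IsSubunit.sub_le_kobayashi (hU : IsSubunit Ω U) (hΩ : AnalyticDiscConnected Ω) {z w : E}
    (hz : z ∈ Ω) (hw : w ∈ Ω) : U w - U z ≤ kobayashi Ω z w := by
  refine sub_le_kobayashi_of_sub_le_lempert (fun x hx y hy => ?_) hz hw
  obtain ⟨α, hα, hdisc⟩ := hΩ x hx y hy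
  rw [lempert_eq_sInf_lempertCosts]
  refine le_csInf ⟨_, α, hα, hdisc, rfl⟩ ?_
  rintro _ ⟨β, hβ, ⟨φ, hφ, rfl, rfl⟩, rfl⟩
  exact hU.sub_le_artanh hφ hβ

end Subunit

section HalfPlane

variable {b : ℂ → ℂ} {s : ℝ} {ζ : ℂ}

lemma norm_add_conj_sq_sub_norm_sub_sq (b β : ℂ) :
    ‖b + starRingEnd ℂ β‖ ^ 2 - ‖b - β‖ ^ 2 = 4 * b.re * β.re := by
  simp only [← Complex.normSq_eq_norm_sq, Complex.normSq_apply, Complex.add_re, Complex.add_im,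
    Complex.sub_re, Complex.sub_im, Complex.conj_re, Complex.conj_im]
  ring

/-- The Schwarz lemma for maps to the right half-plane, read through the Cayley transform
`w ↦ (w - b 0) / (w + conj (b 0))`. -/
lemma mul_norm_sub_le_of_re_pos (hd : DifferentiableOn ℂ b (ball 0 s))
    (hpos : ∀ ζ ∈ ball (0 : ℂ) s, 0 < (b ζ).re) (hζ : ζ ∈ ball (0 : ℂ) s) :
    s * ‖b ζ - b 0‖ ≤ ‖ζ‖ * ‖b ζ + starRingEnd ℂ (b 0)‖ := by
  have hs : 0 < s := nonempty_ball.1 ⟨_, hζ⟩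
  have h0 : 0 < (b 0).re := hpos 0 (by simpa using hs)
  have hne : ∀ ζ ∈ ball (0 : ℂ) s, b ζ + starRingEnd ℂ (b 0) ≠ 0 := fun ζ hζ h => by
    have hre := congrArg Complex.re h
    rw [Complex.add_re, Complex.conj_re, Complex.zero_re] at hre
    linarith [hpos ζ hζ]
  have hschwarz := Complex.dist_le_div_mul_dist_of_mapsTo_ball (c := (0 : ℂ)) (R₁ := s) (R₂ := 1)
    (f := fun ζ => (b ζ - b 0) / (b ζ + starRingEnd ℂ (b 0))) (z := ζ)
    ((hd.sub_const _).div (hd.add_const _) hne) (fun ζ hζ => ?_) hζ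
  · simp only [sub_self, zero_div, dist_zero_right, norm_div] at hschwarz
    rw [div_le_iff₀ (norm_pos_iff.2 (hne ζ hζ))] at hschwarz
    calc s * ‖b ζ - b 0‖ ≤ s * (1 / s * ‖ζ‖ * ‖b ζ + starRingEnd ℂ (b 0)‖) := by gcongr
      _ = ‖ζ‖ * ‖b ζ + starRingEnd ℂ (b 0)‖ := by field_simp
  · simp only [sub_self, zero_div, mem_closedBall, dist_zero_right, norm_div]
    refine div_le_one_of_le₀ (le_of_sq_le_sq ?_ (norm_nonneg _)) (norm_nonneg _)
    linarith [norm_add_conj_sq_sub_norm_sub_sq (b ζ) (b 0), mul_pos (hpos ζ hζ) h0]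

/-- Harnack's inequality for the positive harmonic function `Re b`, with the constant `4` in place
of the optimal `1 + ‖ζ‖ / s ≤ 2`. -/
lemma sub_norm_mul_re_le_of_re_pos (hd : DifferentiableOn ℂ b (ball 0 s))
    (hpos : ∀ ζ ∈ ball (0 : ℂ) s, 0 < (b ζ).re) (hζ : ζ ∈ ball (0 : ℂ) s) :
    (s - ‖ζ‖) * (b ζ).re ≤ s * (4 * (b 0).re) := by
  have hs : 0 < s := nonempty_ball.1 ⟨_, hζ⟩
  have hζs : 0 < s - ‖ζ‖ := by simpa using hζ
  have h0 : 0 < (b 0).re := hpos 0 (by simpa using hs)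
  have hb : 0 < (b ζ).re := hpos ζ hζ
  set X := ‖b ζ + starRingEnd ℂ (b 0)‖
  have hbX : (b ζ).re ≤ X := by
    have hre := Complex.re_le_norm (b ζ + starRingEnd ℂ (b 0))
    rw [Complex.add_re, Complex.conj_re] at hre
    linarith
  have hsq : (s ^ 2 - ‖ζ‖ ^ 2) * X ^ 2 ≤ s ^ 2 * (4 * (b ζ).re * (b 0).re) := by
    have hschwarz : (s * ‖b ζ - b 0‖) ^ 2 ≤ (‖ζ‖ * X) ^ 2 := by
      gcongr ?_ ^ 2
      exact mul_norm_sub_le_of_re_pos hd hpos hζ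
    rw [← norm_add_conj_sq_sub_norm_sub_sq]
    linarith
  have hprod : s * (b ζ).re * ((s - ‖ζ‖) * (b ζ).re) ≤ s * (b ζ).re * (s * (4 * (b 0).re)) := by
    calc s * (b ζ).re * ((s - ‖ζ‖) * (b ζ).re)
        ≤ (s ^ 2 - ‖ζ‖ ^ 2) * (b ζ).re ^ 2 := by
          nlinarith [mul_nonneg (mul_nonneg (norm_nonneg ζ) hζs.le) (sq_nonneg (b ζ).re)]
      _ ≤ (s ^ 2 - ‖ζ‖ ^ 2) * X ^ 2 := by
          gcongr
          nlinarith [norm_nonneg ζ]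
      _ ≤ s ^ 2 * (4 * (b ζ).re * (b 0).re) := hsq
      _ = s * (b ζ).re * (s * (4 * (b 0).re)) := by ring
  exact le_of_mul_le_mul_left hprod (by positivity)

end HalfPlane

section ThinDiscs

lemma norm_cos_sub_cos_re_le {w : ℂ} (hw : |w.im| ≤ 1) :
    ‖Complex.cos w - Complex.cos w.re‖ ≤ 2 * |w.im| := by
  have hsplit : Complex.cos w - Complex.cos w.re =
      (Complex.exp (w.re * Complex.I) * (Real.exp (-w.im) - 1 : ℝ) +
        Complex.exp ((-w.re : ℝ) * Complex.I) * (Real.exp w.im - 1 : ℝ)) / 2 := by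
    have hpos : w * Complex.I = w.re * Complex.I + (-w.im : ℝ) := by
      conv_lhs => rw [← Complex.re_add_im w]
      push_cast
      linear_combination (w.im : ℂ) * Complex.I_mul_I
    have hneg : -w * Complex.I = (-w.re : ℝ) * Complex.I + (w.im : ℝ) := by
      push_cast at hpos ⊢
      linear_combination -hpos
    rw [Complex.cos, Complex.cos, hpos, hneg, Complex.exp_add, Complex.exp_add]
    push_cast
    ring
  have hexp {y : ℝ} (hy : |y| ≤ 1) : ‖((Real.exp y - 1 : ℝ) : ℂ)‖ ≤ 2 * |y| := by
    simpa only [Complex.norm_real, Real.norm_eq_abs] using Real.abs_exp_sub_one_le hy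
  rw [hsplit, norm_div, Complex.norm_two, div_le_iff₀ two_pos]
  refine (norm_add_le _ _).trans ?_
  rw [norm_mul, norm_mul, Complex.norm_exp_ofReal_mul_I, Complex.norm_exp_ofReal_mul_I]
  linarith [hexp hw, abs_neg w.im ▸ hexp ((abs_neg w.im).trans_le hw)]

/-- The map `ζ ↦ κ log ((1 + ζ) / (1 - ζ))` of the unit disc into a horizontal strip of
half-width `2πκ`. -/
noncomputable def stripMap (κ : ℝ) (ζ : ℂ) : ℂ :=
  κ * (Complex.log (1 + ζ) - Complex.log (1 - ζ))

lemma differentiableOn_stripMap (κ : ℝ) : DifferentiableOn ℂ (stripMap κ) (ball 0 1) := by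
  have hre {ζ : ℂ} (hζ : ζ ∈ ball (0 : ℂ) 1) : |ζ.re| < 1 :=
    (Complex.abs_re_le_norm ζ).trans_lt (by simpa using hζ)
  refine DifferentiableOn.const_mul (.sub (.clog (by fun_prop) fun ζ hζ => .inl ?_)
    (.clog (by fun_prop) fun ζ hζ => .inl ?_)) _
  · simpa using (by linarith [abs_lt.1 (hre hζ)] : 0 < 1 + ζ.re)
  · simpa using (abs_lt.1 (hre hζ)).2

lemma abs_im_stripMap_le {κ : ℝ} (hκ : 0 ≤ κ) (ζ : ℂ) : |(stripMap κ ζ).im| ≤ 8 * κ := by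
  rw [stripMap, Complex.im_ofReal_mul, Complex.sub_im, Complex.log_im, Complex.log_im, abs_mul,
    abs_of_nonneg hκ, mul_comm]
  gcongr
  linarith [abs_sub (1 + ζ).arg (1 - ζ).arg, Complex.abs_arg_le_pi (1 + ζ),
    Complex.abs_arg_le_pi (1 - ζ), Real.pi_le_four]

lemma exists_stripMap_eq_pi {κ : ℝ} (hκ : κ ≠ 0) : ∃ α : ℂ, ‖α‖ < 1 ∧ stripMap κ α = Real.pi := by
  set a := Real.tanh (Real.pi / (2 * κ)) with ha
  have ha1 : |a| < 1 := Real.abs_tanh_lt_one _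
  obtain ⟨h1, h2⟩ := abs_lt.1 ha1
  refine ⟨a, by simpa using ha1, ?_⟩
  have hartanh := Real.artanh_eq_half_log (x := a) ⟨h1.le, h2.le⟩
  rw [ha, Real.artanh_tanh, ← ha, Real.log_div (by linarith) (by linarith)] at hartanh
  have hreal : κ * (Real.log (1 + a) - Real.log (1 - a)) = Real.pi := by
    field_simp at hartanh
    linarith
  rw [stripMap, ← Complex.ofReal_one, ← Complex.ofReal_add, ← Complex.ofReal_sub,
    ← Complex.ofReal_log (by linarith), ← Complex.ofReal_log (by linarith)]
  exact_mod_cast hreal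

/-- The cosine folds a thin strip onto a thin neighbourhood of a segment. -/
lemma exists_isAnalyticDisc_thickening_unitInterval {ε : ℝ} (hε : 0 < ε) :
    ∃ (h : ℂ → ℂ) (α : ℂ), ‖α‖ < 1 ∧ h 0 = 0 ∧ h α = 1 ∧
      IsAnalyticDisc (thickening ε ((fun t : ℝ => (t : ℂ)) '' Icc 0 1)) h := by
  obtain ⟨κ, hκ0, hκ1, hκε⟩ : ∃ κ : ℝ, 0 < κ ∧ 8 * κ ≤ 1 ∧ 8 * κ < ε :=
    ⟨min 1 (ε / 2) / 8, by positivity, by linarith [min_le_left 1 (ε / 2)],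
      by linarith [min_le_right 1 (ε / 2)]⟩
  obtain ⟨α, hα, hαπ⟩ := exists_stripMap_eq_pi hκ0.ne'
  refine ⟨fun ζ => (1 - Complex.cos (stripMap κ ζ)) / 2, α, hα, by simp [stripMap], ?_, ?_, ?_⟩
  · simp only [hαπ, Complex.cos_pi]
    norm_num
  · exact (((differentiableOn_stripMap κ).ccos).const_sub 1).div_const 2
  · intro ζ _
    set w := stripMap κ ζ
    have him : |w.im| ≤ 8 * κ := abs_im_stripMap_le hκ0.le ζ
    refine mem_thickening_iff.2
      ⟨_, ⟨(1 - Real.cos w.re) / 2, ⟨?_, ?_⟩, rfl⟩, ?_⟩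
    · linarith [Real.cos_le_one w.re]
    · linarith [Real.neg_one_le_cos w.re]
    · have hdiff : (1 - Complex.cos w) / 2 - (((1 - Real.cos w.re) / 2 : ℝ) : ℂ) =
          -(Complex.cos w - Complex.cos w.re) / 2 := by
        push_cast
        ring
      rw [dist_eq_norm, hdiff, norm_div, norm_neg, Complex.norm_two, div_lt_iff₀ two_pos]
      linarith [norm_cos_sub_cos_re_le (him.trans hκ1)]

variable {E : Type*} [NormedAddCommGroup E] [NormedSpace ℂ E] {Ω : Set E}

lemma exists_differentiable_joining (hΩ : IsOpen Ω) {x y : E} (hxy : JoinedIn Ω x y) :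
    ∃ P : ℂ → E, Differentiable ℂ P ∧ P 0 = x ∧ P 1 = y ∧
      (fun t : ℝ => (t : ℂ)) '' Icc 0 1 ⊆ P ⁻¹' Ω := by
  obtain ⟨γ, hγ⟩ := hxy
  let f : C(unitInterval, E) := γ.toContinuousMap
  obtain ⟨ε, hε, hεΩ⟩ := (isCompact_range f.continuous).exists_thickening_subset_open hΩ
    (by rintro _ ⟨t, rfl⟩; exact hγ t)
  obtain ⟨n, hn, hn0⟩ := (((Metric.tendsto_nhds.1 (bernsteinApproximation_uniform f)) ε hε).and
    (eventually_gt_atTop 0)).exists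
  let P : ℂ → E := fun ζ => ∑ k : Fin (n + 1),
    ((n.choose k : ℂ) * ζ ^ (k : ℕ) * (1 - ζ) ^ (n - (k : ℕ))) • f (bernstein.z k)
  have hP (t : unitInterval) : P ((t : ℝ) : ℂ) = bernsteinApproximation n f t := by
    rw [bernsteinApproximation.apply]
    refine Finset.sum_congr rfl fun k _ => ?_
    rw [bernstein_apply, ← Complex.coe_smul]
    push_cast
    rfl
  refine ⟨P, fun ζ => .fun_sum fun k _ => .smul_const (by fun_prop) _, ?_, ?_, ?_⟩
  · simpa [bernsteinApproximation.apply_zero, f] using hP 0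
  · simpa [bernsteinApproximation.apply_one hn0.ne', f] using hP 1
  · rintro _ ⟨t, ht, rfl⟩
    refine hεΩ (mem_thickening_iff.2 ⟨f ⟨t, ht⟩, ⟨_, rfl⟩, ?_⟩)
    exact hP ⟨t, ht⟩ ▸ (ContinuousMap.dist_apply_le_dist _).trans_lt hn

theorem analyticDiscConnected_of_isOpen (hΩ : IsOpen Ω) (hc : IsPreconnected Ω) :
    AnalyticDiscConnected Ω := by
  intro x hx y hy
  have hpath : IsPathConnected Ω := (hΩ.isConnected_iff_isPathConnected).1 ⟨⟨x, hx⟩, hc⟩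
  obtain ⟨P, hP, rfl, rfl, hPΩ⟩ := exists_differentiable_joining hΩ (hpath.joinedIn x hx y hy)
  have hsegment : IsCompact ((fun t : ℝ => (t : ℂ)) '' Icc 0 1) :=
    isCompact_Icc.image Complex.continuous_ofReal
  obtain ⟨ε, hε, hεΩ⟩ := hsegment.exists_thickening_subset_open (hΩ.preimage hP.continuous) hPΩ
  obtain ⟨h, α, hα, h0, hα1, hh⟩ := exists_isAnalyticDisc_thickening_unitInterval hε
  exact ⟨α, hα, P ∘ h, ⟨hP.comp_differentiableOn hh.differentiableOn,
    fun ζ hζ => hεΩ (hh.mapsTo hζ)⟩, by simp [h0], by simp [hα1]⟩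

end ThinDiscs

section PeakFunctions

variable {E : Type*} [NormedAddCommGroup E] {Ω : Set E} {φ : ℂ → E} {p : E}

lemma exists_first_exit {η : ℝ} (hφ : ContinuousOn φ (ball 0 1)) {ζ : ℂ} (hζ : ‖ζ‖ < 1)
    (hexit : η ≤ dist (φ ζ) p) : ∃ ζ₀ : ℂ, ‖ζ₀‖ ≤ ‖ζ‖ ∧ η ≤ dist (φ ζ₀) p ∧
      ∀ ξ : ℂ, ‖ξ‖ < ‖ζ₀‖ → dist (φ ξ) p < η := by
  have hcont : ContinuousOn (fun ξ => dist (φ ξ) p) (closedBall (0 : ℂ) ‖ζ‖) := by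
    have := hφ.mono (closedBall_subset_ball hζ)
    fun_prop
  have hcompact : IsCompact (closedBall (0 : ℂ) ‖ζ‖ ∩ (fun ξ => dist (φ ξ) p) ⁻¹' Ici η) :=
    (isCompact_closedBall _ _).of_isClosed_subset
      (hcont.preimage_isClosed_of_isClosed isClosed_closedBall isClosed_Ici) inter_subset_left
  obtain ⟨ζ₀, ⟨hζ₀, hexit₀⟩, hmin⟩ :=
    hcompact.exists_isMinOn ⟨ζ, by simp, hexit⟩ continuous_norm.continuousOn
  rw [mem_closedBall_zero_iff] at hζ₀
  refine ⟨ζ₀, hζ₀, hexit₀, fun ξ hξ => ?_⟩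
  by_contra! hcon
  exact hξ.not_ge (hmin ⟨mem_closedBall_zero_iff.2 (hξ.le.trans hζ₀), hcon⟩)

variable [NormedSpace ℂ E]

lemma IsAnalyticDisc.dist_le_of_diam_le (hφ : IsAnalyticDisc Ω φ) {M : ℝ}
    (hM : ∀ x ∈ Ω, ∀ y ∈ Ω, dist x y ≤ M) {ζ ξ : ℂ} (hζ : ‖ζ‖ < 1) (hξ : dist ξ ζ < 1 - ‖ζ‖) :
    dist (φ ξ) (φ ζ) ≤ M / (1 - ‖ζ‖) * dist ξ ζ := by
  have hball : ball ζ (1 - ‖ζ‖) ⊆ ball (0 : ℂ) 1 := ball_subset_ball' (by simp)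
  exact Complex.dist_le_div_mul_dist_of_mapsTo_ball (hφ.differentiableOn.mono hball)
    (fun x hx => hM _ (hφ.mapsTo (hball hx)) _ (hφ.mem hζ)) hξ

lemma exists_norm_eq_sub_dist_eq {ζ : ℂ} {δ : ℝ} (h0 : 0 ≤ δ) (hδ : δ ≤ ‖ζ‖) :
    ∃ ξ : ℂ, ‖ξ‖ = ‖ζ‖ - δ ∧ dist ξ ζ = δ := by
  have hcancel : δ / ‖ζ‖ * ‖ζ‖ = δ := div_mul_cancel_of_imp fun h => le_antisymm (h ▸ hδ) h0
  have hle : δ / ‖ζ‖ ≤ 1 := div_le_one_of_le₀ hδ (norm_nonneg _)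
  refine ⟨((1 - δ / ‖ζ‖ : ℝ) : ℂ) * ζ, ?_, ?_⟩
  · rw [norm_mul, Complex.norm_real, Real.norm_of_nonneg (by linarith)]
    linarith
  · have hsub : ((1 - δ / ‖ζ‖ : ℝ) : ℂ) * ζ - ζ = -(((δ / ‖ζ‖ : ℝ) : ℂ) * ζ) := by
      push_cast
      ring
    rw [dist_eq_norm, hsub, norm_neg, norm_mul, Complex.norm_real,
      Real.norm_of_nonneg (by positivity), hcancel]

/-- `f` is an entire local peak function for `Ω` at the exterior point `p`: near `p`, its real
part grows quadratically on `Ω`. In the usual normalisation, `exp (-f)` is the peak function. -/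
structure IsPeakFunction (Ω : Set E) (p : E) (η c : ℝ) (f : E → ℂ) : Prop where
  c_pos : 0 < c
  notMem : p ∉ Ω
  differentiable : Differentiable ℂ f
  le_re : ∀ x ∈ Ω, dist x p < η → c * dist x p ^ 2 ≤ (f x).re

lemma IsPeakFunction.mono {Ω' : Set E} {η η' c : ℝ} {f : E → ℂ} (h : IsPeakFunction Ω p η c f)
    (hΩ : Ω' ⊆ Ω) (hη : η' ≤ η) : IsPeakFunction Ω' p η' c f :=
  ⟨h.c_pos, fun hp => h.notMem (hΩ hp), h.differentiable,
    fun x hx hxp => h.le_re x (hΩ hx) (hxp.trans_le hη)⟩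

/-- Discs in `Ω` centred near `p` stay near `p` up to a distance from the unit circle controlled
by the value of `Re f` at the centre. -/
def LocalizesDiscs (Ω : Set E) (p : E) (η C : ℝ) (f : E → ℂ) : Prop :=
  ∀ φ, IsAnalyticDisc Ω φ → dist (φ 0) p < η / 2 →
    ∀ ζ : ℂ, ‖ζ‖ < 1 → ‖ζ‖ < 1 - C * (f (φ 0)).re → dist (φ ζ) p < η

variable {η c C m : ℝ} {f : E → ℂ}

lemma IsPeakFunction.re_pos (hf : IsPeakFunction Ω p η c f) {x : E} (hx : x ∈ Ω)
    (hxp : dist x p < η) : 0 < (f x).re := by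
  have hc := hf.c_pos
  have hdist : 0 < dist x p := dist_pos.2 fun h => hf.notMem (h ▸ hx)
  exact (by positivity : 0 < c * dist x p ^ 2).trans_le (hf.le_re x hx hxp)

/-- A disc leaving the ball of radius `η` at modulus `t` is, by the Schwarz lemma, still at
distance at least `η / 2` from `p` at modulus `t - κ (1 - t)`; Harnack's inequality for `Re f ∘ φ`
on the disc of radius `t` then bounds `1 - t` by `Re f (φ 0)`. -/
lemma IsPeakFunction.mul_one_sub_le_of_exit (hf : IsPeakFunction Ω p η c f)
    (hφ : IsAnalyticDisc Ω φ) {κ M : ℝ} (hM : ∀ x ∈ Ω, ∀ y ∈ Ω, dist x y ≤ M) (hκ0 : 0 < κ)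
    (hκ1 : κ < 1) (hκM : M * κ ≤ η / 2) (h0 : dist (φ 0) p < η / 2) {ζ₀ : ℂ} (hζ₀ : ‖ζ₀‖ < 1)
    (hexit : η ≤ dist (φ ζ₀) p) (hin : ∀ ξ : ℂ, ‖ξ‖ < ‖ζ₀‖ → dist (φ ξ) p < η) :
    κ * (1 - ‖ζ₀‖) * (c * (η / 2) ^ 2) ≤ 4 * (f (φ 0)).re := by
  have hη : 0 < η := by linarith [dist_nonneg (x := φ 0) (y := p)]
  have hc := hf.c_pos
  set t := ‖ζ₀‖ with ht
  have ht1 : 0 < 1 - t := sub_pos.2 hζ₀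
  have hfar {ξ : ℂ} (hξ : dist ξ ζ₀ ≤ κ * (1 - t)) : η / 2 ≤ dist (φ ξ) p := by
    have hschwarz := hφ.dist_le_of_diam_le hM hζ₀ (ξ := ξ) (hξ.trans_lt (by nlinarith))
    have hM0 : 0 ≤ M := dist_nonneg.trans (hM _ hφ.zero_mem _ hφ.zero_mem)
    have hsmall : M / (1 - t) * dist ξ ζ₀ ≤ M * κ := by
      calc M / (1 - t) * dist ξ ζ₀ ≤ M / (1 - t) * (κ * (1 - t)) := by gcongr
        _ = M * κ := by field_simp
    linarith [dist_triangle_left (φ ζ₀) p (φ ξ)]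
  have hκt : κ * (1 - t) < t := by
    by_contra! hcon
    exact (hfar (by simpa [ht] using hcon)).not_gt h0
  obtain ⟨ξ, hξ, hξζ₀⟩ := exists_norm_eq_sub_dist_eq (by positivity) hκt.le
  have hξt : ξ ∈ ball (0 : ℂ) t := by
    rw [mem_ball_zero_iff, hξ]
    linarith [mul_pos hκ0 ht1]
  have hsub : ball (0 : ℂ) t ⊆ ball 0 1 := ball_subset_ball hζ₀.le
  have hin' {ξ : ℂ} (hξ : ξ ∈ ball (0 : ℂ) t) : dist (φ ξ) p < η := hin ξ (by simpa using hξ)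
  have harnack := sub_norm_mul_re_le_of_re_pos (b := fun ξ => f (φ ξ))
    (hf.differentiable.comp_differentiableOn (hφ.differentiableOn.mono hsub))
    (fun ξ hξ => hf.re_pos (hφ.mapsTo (hsub hξ)) (hin' hξ)) hξt
  calc κ * (1 - t) * (c * (η / 2) ^ 2)
      ≤ κ * (1 - t) * (c * dist (φ ξ) p ^ 2) := by
        gcongr
        exact hfar hξζ₀.le
    _ ≤ (t - ‖ξ‖) * (f (φ ξ)).re := by
        rw [hξ, sub_sub_cancel]
        gcongr
        exact hf.le_re _ (hφ.mapsTo (hsub hξt)) (hin' hξt)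
    _ ≤ t * (4 * (f (φ 0)).re) := harnack
    _ ≤ 1 * (4 * (f (φ 0)).re) := by
        have := hf.re_pos hφ.zero_mem (by linarith)
        gcongr
    _ = 4 * (f (φ 0)).re := one_mul _

lemma exists_localizesDiscs (hη : 0 < η) (hc : 0 < c) {M : ℝ} (hM0 : 0 ≤ M) :
    ∃ C > 0, ∀ (Ω : Set E) (p : E) (f : E → ℂ), (∀ x ∈ Ω, ∀ y ∈ Ω, dist x y ≤ M) →
      IsPeakFunction Ω p η c f → LocalizesDiscs Ω p η C f := by
  obtain ⟨κ, hκ0, hκ1, hκM⟩ : ∃ κ : ℝ, 0 < κ ∧ κ < 1 ∧ M * κ ≤ η / 2 := by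
    refine ⟨η / (2 * (M + η)), by positivity, ?_, ?_⟩
    · rw [div_lt_one (by positivity)]
      linarith
    · rw [← mul_div_assoc, div_le_div_iff₀ (by positivity) two_pos]
      nlinarith
  refine ⟨16 / (κ * c * η ^ 2), by positivity, fun Ω p f hM hf φ hφ h0 ζ hζ hζC => ?_⟩
  by_contra! hexit
  obtain ⟨ζ₀, hζ₀, hexit₀, hin⟩ :=
    exists_first_exit hφ.differentiableOn.continuousOn hζ hexit
  have hbound := hf.mul_one_sub_le_of_exit hφ hM hκ0 hκ1 hκM h0 (hζ₀.trans_lt hζ) hexit₀ hin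
  have : 1 - ‖ζ₀‖ ≤ 16 / (κ * c * η ^ 2) * (f (φ 0)).re := by
    rw [div_mul_eq_mul_div, le_div_iff₀ (by positivity)]
    linarith
  linarith

/-- The profile `(log s - C s) / 2` of the truncated gauges; the linear correction absorbs the
loss in the localization of discs. -/
noncomputable def gaugeProfile (C s : ℝ) : ℝ := (Real.log s - C * s) / 2

lemma hasDerivAt_gaugeProfile {s : ℝ} (hs : s ≠ 0) :
    HasDerivAt (gaugeProfile C) ((1 / s - C) / 2) s :=
  (((Real.hasDerivAt_log hs).sub ((hasDerivAt_id s).const_mul C)).div_const 2).congr_deriv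
    (by simp)

lemma eventually_abs_gaugeProfile_sub_le {s ε : ℝ} (hs : 0 < s) (hCs : C * s < 1) (hε : 0 < ε) :
    ∀ᶠ y in 𝓝 s, |gaugeProfile C y - gaugeProfile C s| ≤
      (1 + ε) * ((1 / s - C) / 2) * |y - s| := by
  have hpos : 0 < (1 / s - C) / 2 := by
    have : C < 1 / s := by rwa [lt_div_iff₀ hs]
    linarith
  have hlittle := (hasDerivAt_gaugeProfile (C := C) hs.ne').isLittleO
  filter_upwards [hlittle.def (mul_pos hε hpos)] with y hy
  rw [Real.norm_eq_abs, Real.norm_eq_abs, smul_eq_mul] at hy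
  have htri := abs_sub_abs_le_abs_sub (gaugeProfile C y - gaugeProfile C s)
    ((y - s) * ((1 / s - C) / 2))
  rw [abs_mul, abs_of_pos hpos] at htri
  linarith

open Classical in
/-- The gauge `log ‖f‖ / 2` of a peak function, corrected and truncated at the level `‖f‖ = m` so
as to be constant away from `p`. -/
noncomputable def peakGauge (p : E) (η C m : ℝ) (f : E → ℂ) (x : E) : ℝ :=
  if dist x p < η then gaugeProfile C (min ‖f x‖ m) else gaugeProfile C m

/-- A truncation level so small that the gauge of a peak function is constant at distance more than
`η / 4` from `p`, and that `C m` is a proper fraction of the unit disc. -/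
structure IsTruncationLevel (η c C m : ℝ) : Prop where
  C_pos : 0 < C
  m_pos : 0 < m
  C_mul_lt : C * m < 1
  lt_mul_sq : m < c * (η / 4) ^ 2

/-- The region where the gauge of a peak function may vary. -/
def peakRegion (p : E) (η m : ℝ) (f : E → ℂ) : Set E := {x | dist x p < η / 2 ∧ ‖f x‖ ≤ m}

/-- The half-plane Schwarz lemma bounds the speed of `‖g‖` at `0` by `2 Re g(0) / s`, while the
profile has slope `(1 / ‖g 0‖ - C) / 2`. -/
lemma eventually_abs_gaugeProfile_min_norm_sub_le {g : ℂ → ℂ} {s : ℝ}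
    (hg : DifferentiableOn ℂ g (ball 0 s)) (hpos : ∀ ζ ∈ ball 0 s, 0 < (g ζ).re)
    (hCg : C * ‖g 0‖ < 1) (hs : 1 - C * ‖g 0‖ ≤ s) (hm : ‖g 0‖ ≤ m) {ε : ℝ} (hε : 0 < ε) :
    ∀ᶠ ζ in 𝓝 (0 : ℂ),
      |gaugeProfile C (min ‖g ζ‖ m) - gaugeProfile C ‖g 0‖| ≤ (1 + ε) * ‖ζ‖ := by
  have hs0 : 0 < s := by linarith
  have hcont : ContinuousAt g 0 := hg.continuousOn.continuousAt (ball_mem_nhds _ hs0)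
  have hre : 0 < (g 0).re := hpos 0 (mem_ball_self hs0)
  have hnorm : 0 < ‖g 0‖ := hre.trans_le (Complex.re_le_norm _)
  obtain ⟨d, hd⟩ : ∃ d, d = (1 + ε / 2) * ((1 / ‖g 0‖ - C) / 2) := ⟨_, rfl⟩
  have hdg : d * (2 * ‖g 0‖) = (1 + ε / 2) * (1 - C * ‖g 0‖) := by
    rw [hd]
    field_simp
  have hd0 : 0 < d := pos_of_mul_pos_left (hdg ▸ by nlinarith : 0 < d * (2 * ‖g 0‖)) (by positivity)
  have hmin : ContinuousAt (fun ζ => min ‖g ζ‖ m) 0 := hcont.norm.min continuousAt_const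
  have hprofile : ∀ᶠ ζ in 𝓝 (0 : ℂ), |gaugeProfile C (min ‖g ζ‖ m) - gaugeProfile C ‖g 0‖| ≤
      d * |min ‖g ζ‖ m - ‖g 0‖| := by
    rw [ContinuousAt, min_eq_left hm] at hmin
    exact hd ▸ hmin.eventually (eventually_abs_gaugeProfile_sub_le hnorm hCg (half_pos hε))
  have hsum : ContinuousAt (fun ζ => d * ‖g ζ + starRingEnd ℂ (g 0)‖) 0 :=
    continuousAt_const.mul (hcont.add continuousAt_const).norm
  have hspeed : ∀ᶠ ζ in 𝓝 (0 : ℂ), d * ‖g ζ + starRingEnd ℂ (g 0)‖ < (1 + ε) * s := by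
    suffices d * ‖g 0 + starRingEnd ℂ (g 0)‖ < (1 + ε) * s from hsum.eventually_lt_const this
    rw [Complex.add_conj, Complex.norm_real, Real.norm_of_nonneg (by positivity)]
    calc d * (2 * (g 0).re) ≤ d * (2 * ‖g 0‖) := by gcongr; exact Complex.re_le_norm _
      _ = (1 + ε / 2) * (1 - C * ‖g 0‖) := hdg
      _ < (1 + ε) * (1 - C * ‖g 0‖) := by gcongr; linarith
      _ ≤ (1 + ε) * s := by gcongr
  filter_upwards [hprofile, hspeed, ball_mem_nhds (0 : ℂ) hs0] with ζ hprofile hspeed hζ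
  have hmin : |min ‖g ζ‖ m - ‖g 0‖| ≤ ‖g ζ - g 0‖ := by
    refine le_trans ?_ (abs_norm_sub_norm_le _ _)
    simpa [min_eq_left hm] using abs_min_sub_min_le_max ‖g ζ‖ m ‖g 0‖ m
  refine le_of_mul_le_mul_left ?_ hs0
  calc s * |gaugeProfile C (min ‖g ζ‖ m) - gaugeProfile C ‖g 0‖|
      ≤ s * (d * ‖g ζ - g 0‖) := by gcongr; exact hprofile.trans (by gcongr)
    _ = d * (s * ‖g ζ - g 0‖) := by ring
    _ ≤ d * (‖ζ‖ * ‖g ζ + starRingEnd ℂ (g 0)‖) :=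
        mul_le_mul_of_nonneg_left (mul_norm_sub_le_of_re_pos hg hpos hζ) hd0.le
    _ = d * ‖g ζ + starRingEnd ℂ (g 0)‖ * ‖ζ‖ := by ring
    _ ≤ (1 + ε) * s * ‖ζ‖ := by gcongr
    _ = s * ((1 + ε) * ‖ζ‖) := by ring

lemma IsPeakFunction.eventually_abs_peakGauge_sub_le (hf : IsPeakFunction Ω p η c f)
    (hloc : LocalizesDiscs Ω p η C f) (hC : 0 < C) (hCm : C * m < 1) (hφ : IsAnalyticDisc Ω φ)
    (h0 : φ 0 ∈ peakRegion p η m f) {ε : ℝ} (hε : 0 < ε) :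
    ∀ᶠ ζ in 𝓝 (0 : ℂ),
      |peakGauge p η C m f (φ ζ) - peakGauge p η C m f (φ 0)| ≤ (1 + ε) * ‖ζ‖ := by
  obtain ⟨hdist, hm⟩ := h0
  have hdist' : dist (φ 0) p < η := by linarith [dist_nonneg (x := φ 0) (y := p)]
  have hre : 0 < (f (φ 0)).re := hf.re_pos hφ.zero_mem hdist'
  have hC_norm : C * ‖f (φ 0)‖ < 1 := lt_of_le_of_lt (by gcongr) hCm
  have hC_re : C * (f (φ 0)).re ≤ C * ‖f (φ 0)‖ := by gcongr; exact Complex.re_le_norm _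
  obtain ⟨s, hs⟩ : ∃ s, s = 1 - C * (f (φ 0)).re := ⟨_, rfl⟩
  have hs1 : s ≤ 1 := by linarith [mul_pos hC hre]
  have hin : ∀ ζ ∈ ball (0 : ℂ) s, dist (φ ζ) p < η := fun ζ hζ => by
    rw [mem_ball_zero_iff] at hζ
    exact hloc φ hφ hdist ζ (hζ.trans_le hs1) (hs ▸ hζ)
  have hsub : ball (0 : ℂ) s ⊆ ball 0 1 := ball_subset_ball hs1
  have hgauge := eventually_abs_gaugeProfile_min_norm_sub_le (g := fun ζ => f (φ ζ))
    (hf.differentiable.comp_differentiableOn (hφ.differentiableOn.mono hsub))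
    (fun ζ hζ => hf.re_pos (hφ.mapsTo (hsub hζ)) (hin ζ hζ)) hC_norm (by linarith) hm hε
  filter_upwards [hgauge, ball_mem_nhds (0 : ℂ) (by linarith : 0 < s)] with ζ hζ hζs
  rwa [peakGauge, peakGauge, if_pos (hin ζ hζs), if_pos hdist', min_eq_left hm]

lemma IsPeakFunction.peakGauge_of_lt_dist (hf : IsPeakFunction Ω p η c f) (hη : 0 ≤ η)
    (hm : m < c * (η / 4) ^ 2) {x : E} (hx : x ∈ Ω) (hxp : η / 4 < dist x p) :
    peakGauge p η C m f x = gaugeProfile C m := by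
  have hc := hf.c_pos
  unfold peakGauge
  split_ifs with hdist
  · have hle : m ≤ ‖f x‖ := by
      calc m ≤ c * (η / 4) ^ 2 := hm.le
        _ ≤ c * dist x p ^ 2 := by gcongr
        _ ≤ ‖f x‖ := (hf.le_re x hx hdist).trans (Complex.re_le_norm _)
    rw [min_eq_right hle]
  · rfl

lemma IsPeakFunction.eventually_peakGauge_eq (hf : IsPeakFunction Ω p η c f) (hη : 0 < η)
    (hm : m < c * (η / 4) ^ 2) (hφ : IsAnalyticDisc Ω φ) (h0 : φ 0 ∉ peakRegion p η m f) :
    ∀ᶠ ζ in 𝓝 (0 : ℂ), peakGauge p η C m f (φ ζ) = gaugeProfile C m := by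
  have hcont : ContinuousAt φ 0 :=
    hφ.differentiableOn.continuousOn.continuousAt (ball_mem_nhds _ one_pos)
  by_cases hdist : dist (φ 0) p < η / 2
  · have hlt : m < ‖f (φ 0)‖ := not_le.1 fun hle => h0 ⟨hdist, hle⟩
    filter_upwards [(hf.differentiable.continuous.continuousAt.comp hcont).norm.eventually_const_lt
      hlt] with ζ hζ
    rw [Function.comp_apply] at hζ
    rw [peakGauge, min_eq_right hζ.le, ite_self]
  · have hlt : η / 4 < dist (φ 0) p := by linarith
    filter_upwards [(hcont.dist continuousAt_const).eventually_const_lt hlt,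
      ball_mem_nhds (0 : ℂ) one_pos] with ζ hζ hζ1
    exact hf.peakGauge_of_lt_dist hη.le hm (hφ.mapsTo hζ1) hζ

lemma IsPeakFunction.isSubunit_peakGauge (hf : IsPeakFunction Ω p η c f)
    (hloc : LocalizesDiscs Ω p η C f) (hη : 0 < η) (hm : IsTruncationLevel η c C m) :
    IsSubunit Ω (peakGauge p η C m f) := by
  intro φ hφ ε hε
  by_cases h0 : φ 0 ∈ peakRegion p η m f
  · exact hf.eventually_abs_peakGauge_sub_le hloc hm.C_pos hm.C_mul_lt hφ h0 hε
  · have hconst := hf.eventually_peakGauge_eq (C := C) hη hm.lt_mul_sq hφ h0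
    filter_upwards [hconst] with ζ hζ
    rw [hζ, hconst.self_of_nhds, sub_self, abs_zero]
    positivity

lemma IsPeakFunction.isSubunit_peakGauge_sub {q : E} {g : E → ℂ} (hf : IsPeakFunction Ω p η c f)
    (hg : IsPeakFunction Ω q η c g) (hlocf : LocalizesDiscs Ω p η C f)
    (hlocg : LocalizesDiscs Ω q η C g) (hη : 0 < η) (hm : IsTruncationLevel η c C m)
    (hdisj : ∀ x ∈ Ω, x ∈ peakRegion p η m f → x ∉ peakRegion q η m g) :
    IsSubunit Ω (fun x => peakGauge p η C m f x - peakGauge q η C m g x) := by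
  intro φ hφ ε hε
  by_cases h0 : φ 0 ∈ peakRegion p η m f
  · have hconst := hg.eventually_peakGauge_eq (C := C) hη hm.lt_mul_sq hφ
      (hdisj _ hφ.zero_mem h0)
    filter_upwards [hconst, hf.isSubunit_peakGauge hlocf hη hm φ hφ ε hε] with ζ hζ hle
    rw [hζ, hconst.self_of_nhds]
    simpa using hle
  · have hconst := hf.eventually_peakGauge_eq (C := C) hη hm.lt_mul_sq hφ h0
    filter_upwards [hconst, hg.isSubunit_peakGauge hlocg hη hm φ hφ ε hε] with ζ hζ hle
    rw [hζ, hconst.self_of_nhds, abs_sub_comm]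
    simpa using hle

lemma IsPeakFunction.localizesDiscs_mono (hf : IsPeakFunction Ω p η c f)
    (hloc : LocalizesDiscs Ω p η C f) {A : ℝ} (hCA : C ≤ A) : LocalizesDiscs Ω p η A f := by
  intro φ hφ h0 ζ hζ hζA
  have hre : 0 < (f (φ 0)).re :=
    hf.re_pos hφ.zero_mem (by linarith [dist_nonneg (x := φ 0) (y := p)])
  refine hloc φ hφ h0 ζ hζ (hζA.trans_le ?_)
  gcongr

lemma exists_forall_isTruncationLevel (hη : 0 < η) (hc : 0 < c) (hC : 0 < C) :
    ∃ m₀ > 0, ∀ m, 0 < m → m ≤ m₀ → IsTruncationLevel η c C m := by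
  refine ⟨min (1 / (2 * C)) (c * (η / 4) ^ 2 / 2), by positivity, fun m hm hm₀ => ?_⟩
  have hpos : 0 < c * (η / 4) ^ 2 := by positivity
  have hmC := hm₀.trans (min_le_left _ _)
  rw [le_div_iff₀ (by positivity)] at hmC
  exact ⟨hC, hm, by linarith, by linarith [hm₀.trans (min_le_right _ _), hpos]⟩

lemma half_log_sub_one_le_gaugeProfile {s : ℝ} (h : C * s ≤ 1) :
    (Real.log s - 1) / 2 ≤ gaugeProfile C s := by
  unfold gaugeProfile
  linarith

lemma IsPeakFunction.peakGauge_le (hf : IsPeakFunction Ω p η c f)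
    (hm : IsTruncationLevel η c C m) {x : E} (hx : x ∈ Ω) (hxp : dist x p < η) :
    peakGauge p η C m f x ≤ Real.log ‖f x‖ / 2 := by
  have hnorm : 0 < ‖f x‖ := (hf.re_pos hx hxp).trans_le (Complex.re_le_norm _)
  have hmin : 0 < min ‖f x‖ m := lt_min hnorm hm.m_pos
  rw [peakGauge, if_pos hxp, gaugeProfile]
  have := mul_pos hm.C_pos hmin
  linarith [Real.log_le_log hmin (min_le_left ‖f x‖ m)]

lemma IsPeakFunction.peakGauge_of_notMem_peakRegion (hf : IsPeakFunction Ω p η c f) (hη : 0 < η)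
    (hm : IsTruncationLevel η c C m) {x : E} (hx : x ∈ Ω) (hxf : x ∉ peakRegion p η m f) :
    peakGauge p η C m f x = gaugeProfile C m := by
  by_cases hdist : dist x p < η / 2
  · have hlt : m < ‖f x‖ := not_le.1 fun hle => hxf ⟨hdist, hle⟩
    rw [peakGauge, min_eq_right hlt.le, ite_self]
  · exact hf.peakGauge_of_lt_dist hη.le hm.lt_mul_sq hx (by linarith)

omit [NormedSpace ℂ E] in
lemma half_log_sub_one_le_peakGauge (hm : IsTruncationLevel η c C m) {s : ℝ} (hs : 0 < s)
    (hsm : s ≤ m) {x : E} (hsf : dist x p < η → s ≤ ‖f x‖) :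
    (Real.log s - 1) / 2 ≤ peakGauge p η C m f x := by
  have hprofile {t : ℝ} (hst : s ≤ t) (htm : t ≤ m) :
      (Real.log s - 1) / 2 ≤ gaugeProfile C t := by
    have hCt : C * t ≤ C * m := mul_le_mul_of_nonneg_left htm hm.C_pos.le
    refine le_trans ?_ (half_log_sub_one_le_gaugeProfile (hCt.trans hm.C_mul_lt.le))
    linarith [Real.log_le_log hs hst]
  unfold peakGauge
  split_ifs with hdist
  · exact hprofile (le_min (hsf hdist) hsm) (min_le_right _ _)
  · exact hprofile hsm le_rfl

end PeakFunctions

section QuasiMetrics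

/-- `Q` is a quasi-metric on `S` with constant `A`: it is symmetric and satisfies the triangle
inequality up to the factor `A`. No separation is required. -/
structure IsQuasiMetricOn {X : Type*} (S : Set X) (A : ℝ) (Q : X → X → ℝ) : Prop where
  one_le : 1 ≤ A
  symm_le : ∀ x ∈ S, ∀ y ∈ S, Q y x ≤ A * Q x y
  triangle_le : ∀ x ∈ S, ∀ y ∈ S, ∀ z ∈ S, Q x z ≤ A * (Q x y + Q y z)

lemma IsQuasiMetricOn.mono {X : Type*} {S : Set X} {A B : ℝ} {Q : X → X → ℝ}
    (hQ : IsQuasiMetricOn S A Q) (hnonneg : ∀ x ∈ S, ∀ y ∈ S, 0 ≤ Q x y) (hAB : A ≤ B) :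
    IsQuasiMetricOn S B Q where
  one_le := hQ.one_le.trans hAB
  symm_le x hx y hy :=
    (hQ.symm_le x hx y hy).trans (mul_le_mul_of_nonneg_right hAB (hnonneg x hx y hy))
  triangle_le x hx y hy z hz := (hQ.triangle_le x hx y hy z hz).trans
    (mul_le_mul_of_nonneg_right hAB (add_nonneg (hnonneg x hx y hy) (hnonneg y hy z hz)))

lemma IsQuasiMetricOn.subset {X : Type*} {S S' : Set X} {A : ℝ} {Q : X → X → ℝ}
    (hQ : IsQuasiMetricOn S A Q) (hS : S' ⊆ S) : IsQuasiMetricOn S' A Q where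
  one_le := hQ.one_le
  symm_le x hx y hy := hQ.symm_le x (hS hx) y (hS hy)
  triangle_le x hx y hy z hz := hQ.triangle_le x (hS hx) y (hS hy) z (hS hz)

/-- The points of `Ω` at distance less than `r` from `K`. -/
def collar {X : Type*} [PseudoMetricSpace X] (Ω K : Set X) (r : ℝ) : Set X :=
  {z | z ∈ Ω ∧ ∃ q ∈ K, dist z q < r}

lemma collar_mono {X : Type*} [PseudoMetricSpace X] {Ω K : Set X} {r s : ℝ} (hrs : r ≤ s) :
    collar Ω K r ⊆ collar Ω K s := fun _ hz =>
  ⟨hz.1, hz.2.imp fun _ hq => ⟨hq.1, hq.2.trans_le hrs⟩⟩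

lemma le_dist_of_notMem_collar {X : Type*} [PseudoMetricSpace X] {Ω K : Set X} {r : ℝ} {z q : X}
    (hz : z ∈ Ω) (hzr : z ∉ collar Ω K r) (hq : q ∈ K) : r ≤ dist z q :=
  not_lt.1 fun hlt => hzr ⟨hz, q, hq, hlt⟩

end QuasiMetrics

section LowerEstimate

variable {E : Type*} [NormedAddCommGroup E] [NormedSpace ℂ E] {Ω K : Set E} {Q : E → E → ℝ}
  {δ : E → ℝ} {a : E → E → ℂ} {η c A m r : ℝ} {p q z w : E}

/-- `p` is, up to the factor `A`, a point of `K` closest to `z`, as measured by the quasi-metric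
`Q`, by the peak function `a p`, and in comparison with the height `δ z`. -/
structure IsFoot (K : Set E) (Q : E → E → ℝ) (δ : E → ℝ) (a : E → E → ℂ) (η A : ℝ) (z p : E) :
    Prop where
  mem : p ∈ K
  dist_lt : dist z p < η / 4
  le_mul : Q z p ≤ A * δ z
  norm_le : ‖a p z‖ ≤ A * δ z

omit [NormedSpace ℂ E] in
lemma IsFoot.mono {B : ℝ} (h : IsFoot K Q δ a η A z p) (hδ : 0 ≤ δ z) (hAB : A ≤ B) :
    IsFoot K Q δ a η B z p where
  mem := h.mem
  dist_lt := h.dist_lt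
  le_mul := h.le_mul.trans (mul_le_mul_of_nonneg_right hAB hδ)
  norm_le := h.norm_le.trans (mul_le_mul_of_nonneg_right hAB hδ)

/-- The situation in which truncated gauges bound the Kobayashi distance from below: a family of
peak functions `a p`, indexed by the boundary piece `K`, dominates a quasi-metric `Q` near `K`, and
the points at distance less than `r` from `K` have feet in `K`. -/
structure IsPeakSystem (Ω K : Set E) (Q : E → E → ℝ) (δ : E → ℝ) (a : E → E → ℂ)
    (η c A r : ℝ) : Prop where
  η_pos : 0 < η
  c_pos : 0 < c
  r_le : r ≤ η
  isQuasiMetricOn : IsQuasiMetricOn (K ∪ collar Ω K η) A Q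
  isPeakFunction : ∀ p ∈ K, IsPeakFunction Ω p η c (a p)
  localizesDiscs : ∀ p ∈ K, LocalizesDiscs Ω p η A (a p)
  le_mul_norm : ∀ p ∈ K, ∀ x ∈ Ω, dist x p < η → Q p x ≤ A * ‖a p x‖
  exists_foot : ∀ z ∈ collar Ω K r, ∃ p, IsFoot K Q δ a η A z p
  height_pos : ∀ z ∈ collar Ω K r, 0 < δ z
  pos : ∀ z ∈ collar Ω K r, ∀ w ∈ collar Ω K r, 0 < Q z w
  le : ∀ z ∈ collar Ω K r, ∀ w ∈ collar Ω K r, Q z w ≤ A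

namespace IsPeakSystem

lemma A_pos (sys : IsPeakSystem Ω K Q δ a η c A r) : 0 < A :=
  one_pos.trans_le sys.isQuasiMetricOn.one_le

lemma mem_of_mem_collar (sys : IsPeakSystem Ω K Q δ a η c A r) (hz : z ∈ collar Ω K r) :
    z ∈ K ∪ collar Ω K η :=
  Or.inr ⟨hz.1, hz.2.imp fun _ hq => ⟨hq.1, hq.2.trans_le sys.r_le⟩⟩

lemma le_norm_of_isFoot (sys : IsPeakSystem Ω K Q δ a η c A r) (hz : z ∈ collar Ω K r)
    (hw : w ∈ collar Ω K r) (hp : IsFoot K Q δ a η A z p) {s : ℝ}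
    (hs : A ^ 2 * (δ z + s) ≤ Q z w) (hwp : dist w p < η) : s ≤ ‖a p w‖ := by
  have hA := sys.A_pos
  have hle : A ^ 2 * (δ z + s) ≤ A ^ 2 * (δ z + ‖a p w‖) := by
    calc A ^ 2 * (δ z + s) ≤ Q z w := hs
      _ ≤ A * (Q z p + Q p w) := sys.isQuasiMetricOn.triangle_le _ (sys.mem_of_mem_collar hz) _
          (Or.inl hp.mem) _ (sys.mem_of_mem_collar hw)
      _ ≤ A * (A * δ z + A * ‖a p w‖) := by
          gcongr
          · exact hp.le_mul
          · exact sys.le_mul_norm p hp.mem w hw.1 hwp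
      _ = A ^ 2 * (δ z + ‖a p w‖) := by ring
  linarith [le_of_mul_le_mul_left hle (by positivity)]

lemma peakGauge_le_of_isFoot (sys : IsPeakSystem Ω K Q δ a η c A r)
    (hm : IsTruncationLevel η c A m) (hz : z ∈ Ω) (hp : IsFoot K Q δ a η A z p) :
    peakGauge p η A m (a p) z ≤ Real.log (A * δ z) / 2 := by
  have hf := sys.isPeakFunction p hp.mem
  have hdist : dist z p < η := by linarith [hp.dist_lt, sys.η_pos]
  have hnorm : 0 < ‖a p z‖ := (hf.re_pos hz hdist).trans_le (Complex.re_le_norm _)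
  linarith [hf.peakGauge_le hm hz hdist, Real.log_le_log hnorm hp.norm_le]

lemma sub_log_le_kobayashi_of_isFoot (sys : IsPeakSystem Ω K Q δ a η c A r)
    (hΩ : AnalyticDiscConnected Ω) (hm : IsTruncationLevel η c A m) (hz : z ∈ collar Ω K r)
    (hw : w ∈ collar Ω K r) (hp : IsFoot K Q δ a η A z p) (hmQ : A ^ 2 * (δ z + m) ≤ Q z w) :
    (Real.log m - 1) / 2 - Real.log (A * δ z) / 2 ≤ kobayashi Ω z w := by
  have hsub := (sys.isPeakFunction p hp.mem).isSubunit_peakGauge (sys.localizesDiscs p hp.mem)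
    sys.η_pos hm
  have hgauge := half_log_sub_one_le_peakGauge hm hm.m_pos le_rfl
    (sys.le_norm_of_isFoot hz hw hp hmQ)
  linarith [hsub.sub_le_kobayashi hΩ hz.1 hw.1, sys.peakGauge_le_of_isFoot hm hz.1 hp]

lemma notMem_peakRegion_of_isFoot (sys : IsPeakSystem Ω K Q δ a η c A r)
    (hz : z ∈ collar Ω K r) (hw : w ∈ collar Ω K r) (hp : IsFoot K Q δ a η A z p)
    (hq : IsFoot K Q δ a η A w q) (hm : 0 < m) (hmQ : A ^ 5 * (δ z + δ w + 2 * m) < Q z w) {x : E}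
    (hx : x ∈ Ω) (hxp : x ∈ peakRegion p η m (a p)) : x ∉ peakRegion q η m (a q) := by
  rintro ⟨hxq, hxqm⟩
  obtain ⟨hxp, hxpm⟩ := hxp
  have hη := sys.η_pos
  have hA := sys.A_pos
  have hQ := sys.isQuasiMetricOn
  have hz' := sys.mem_of_mem_collar hz
  have hw' := sys.mem_of_mem_collar hw
  have hx' : x ∈ K ∪ collar Ω K η := Or.inr ⟨hx, p, hp.mem, by linarith⟩
  have hpx : Q p x ≤ A * m := (sys.le_mul_norm p hp.mem x hx (by linarith)).trans (by gcongr)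
  have hqx : Q q x ≤ A * m := (sys.le_mul_norm q hq.mem x hx (by linarith)).trans (by gcongr)
  have hxq : Q x q ≤ A * (A * m) := (hQ.symm_le q (Or.inl hq.mem) x hx').trans (by gcongr)
  have hqw : Q q w ≤ A * (A * δ w) :=
    (hQ.symm_le w hw' q (Or.inl hq.mem)).trans (by gcongr; exact hq.le_mul)
  have hδz := sys.height_pos z hz
  refine hmQ.not_ge ?_
  calc Q z w ≤ A * (Q z p + Q p w) := hQ.triangle_le _ hz' _ (Or.inl hp.mem) _ hw'
    _ ≤ A * (Q z p + A * (Q p x + Q x w)) := by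
        gcongr
        exact hQ.triangle_le _ (Or.inl hp.mem) _ hx' _ hw'
    _ ≤ A * (Q z p + A * (Q p x + A * (Q x q + Q q w))) := by
        gcongr
        exact hQ.triangle_le _ hx' _ (Or.inl hq.mem) _ hw'
    _ ≤ A * (A * δ z + A * (A * m + A * (A * (A * m) + A * (A * δ w)))) := by
        gcongr
        exact hp.le_mul
    _ = A ^ 2 * δ z + A ^ 3 * m + A ^ 5 * (m + δ w) := by ring
    _ ≤ A ^ 5 * δ z + A ^ 5 * m + A ^ 5 * (m + δ w) := by
        gcongr ?_ * _ + ?_ * _ + _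
        · exact pow_le_pow_right₀ hQ.one_le (by norm_num)
        · exact pow_le_pow_right₀ hQ.one_le (by norm_num)
    _ = A ^ 5 * (δ z + δ w + 2 * m) := by ring

lemma sub_log_sub_log_le_kobayashi_of_isFoot (sys : IsPeakSystem Ω K Q δ a η c A r)
    (hΩ : AnalyticDiscConnected Ω) (hm : IsTruncationLevel η c A m) (hz : z ∈ collar Ω K r)
    (hw : w ∈ collar Ω K r) (hp : IsFoot K Q δ a η A z p) (hq : IsFoot K Q δ a η A w q)
    (hmQ : A ^ 5 * (δ z + δ w + 2 * m) < Q z w) (hzm : A * δ z ≤ m) (hwm : A * δ w ≤ m) :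
    Real.log m - 1 - Real.log (A * δ z) / 2 - Real.log (A * δ w) / 2 ≤ kobayashi Ω z w := by
  have hη := sys.η_pos
  have hf := sys.isPeakFunction p hp.mem
  have hg := sys.isPeakFunction q hq.mem
  have hdisj {x : E} (hx : x ∈ Ω) (hxp : x ∈ peakRegion p η m (a p)) :
      x ∉ peakRegion q η m (a q) :=
    sys.notMem_peakRegion_of_isFoot hz hw hp hq hm.m_pos hmQ hx hxp
  have hsub := hf.isSubunit_peakGauge_sub hg (sys.localizesDiscs p hp.mem)
    (sys.localizesDiscs q hq.mem) hη hm (fun _ => hdisj)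
  have hkob := hsub.sub_le_kobayashi hΩ hz.1 hw.1
  have hwp := hf.peakGauge_of_notMem_peakRegion hη hm hw.1
    fun h => hdisj hw.1 h ⟨by linarith [hq.dist_lt], hq.norm_le.trans hwm⟩
  have hzq := hg.peakGauge_of_notMem_peakRegion hη hm hz.1
    (hdisj hz.1 ⟨by linarith [hp.dist_lt], hp.norm_le.trans hzm⟩)
  rw [hwp, hzq] at hkob
  linarith [half_log_sub_one_le_gaugeProfile hm.C_mul_lt.le, sys.peakGauge_le_of_isFoot hm hz.1 hp,
    sys.peakGauge_le_of_isFoot hm hw.1 hq]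

lemma exists_isTruncationLevel_mul (sys : IsPeakSystem Ω K Q δ a η c A r) :
    ∃ κ > 0, 4 * A ^ 5 * κ ≤ 1 ∧ ∀ z ∈ collar Ω K r, ∀ w ∈ collar Ω K r,
      IsTruncationLevel η c A (κ * Q z w) := by
  have hA := sys.A_pos
  obtain ⟨m₀, hm₀, hlevel⟩ := exists_forall_isTruncationLevel sys.η_pos sys.c_pos hA
  have hκ : 0 < min (1 / (4 * A ^ 5)) (m₀ / A) := by positivity
  have hκ_le := min_le_left (1 / (4 * A ^ 5)) (m₀ / A)
  rw [le_div_iff₀ (by positivity)] at hκ_le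
  refine ⟨_, hκ, by linarith, fun z hz w hw => hlevel _ (mul_pos hκ (sys.pos z hz w hw)) ?_⟩
  calc min (1 / (4 * A ^ 5)) (m₀ / A) * Q z w ≤ m₀ / A * A := by
        have := sys.pos z hz w hw
        gcongr
        · exact min_le_right _ _
        · exact sys.le z hz w hw
    _ = m₀ := div_mul_cancel₀ _ hA.ne'

lemma exists_half_log_sub_le_kobayashi (sys : IsPeakSystem Ω K Q δ a η c A r)
    (hΩ : AnalyticDiscConnected Ω) :
    ∃ B, ∀ z ∈ collar Ω K r, ∀ w ∈ collar Ω K r,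
      (Real.log (Q z w) - Real.log (δ z)) / 2 - B ≤ kobayashi Ω z w := by
  obtain ⟨κ, hκ, hκA, hlevel⟩ := sys.exists_isTruncationLevel_mul
  have hA := sys.A_pos
  refine ⟨max (Real.log (2 * A ^ 2) / 2) ((1 + Real.log A - Real.log κ) / 2),
    fun z hz w hw => ?_⟩
  have hδ := sys.height_pos z hz
  have hQ := sys.pos z hz w hw
  obtain ⟨p, hp⟩ := sys.exists_foot z hz
  by_cases hcase : Q z w ≤ 2 * A ^ 2 * δ z
  · have hlog := Real.log_le_log hQ hcase
    rw [Real.log_mul (by positivity) hδ.ne'] at hlog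
    linarith [kobayashi_nonneg Ω z w, le_max_left (Real.log (2 * A ^ 2) / 2)
      ((1 + Real.log A - Real.log κ) / 2)]
  · have hA5 : A ^ 2 ≤ A ^ 5 := pow_le_pow_right₀ sys.isQuasiMetricOn.one_le (by norm_num)
    have hm : A ^ 2 * (κ * Q z w) ≤ Q z w / 4 := by
      calc A ^ 2 * (κ * Q z w) ≤ A ^ 5 * (κ * Q z w) := by gcongr
        _ = 4 * A ^ 5 * κ * (Q z w / 4) := by ring
        _ ≤ 1 * (Q z w / 4) := by gcongr
        _ = Q z w / 4 := one_mul _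
    have hkob := sys.sub_log_le_kobayashi_of_isFoot hΩ (hlevel z hz w hw) hz hw hp (by linarith)
    rw [Real.log_mul hκ.ne' hQ.ne', Real.log_mul hA.ne' hδ.ne'] at hkob
    linarith [le_max_right (Real.log (2 * A ^ 2) / 2) ((1 + Real.log A - Real.log κ) / 2)]

/-- When the heights are not small compared with `Q z w`, one truncated gauge suffices, since
`log (Q z w)` is at most the larger of `log (δ z)`, `log (δ w)` up to a constant. -/
lemma exists_log_sub_le_kobayashi_of_le_mul (sys : IsPeakSystem Ω K Q δ a η c A r)
    (hΩ : AnalyticDiscConnected Ω) {T : ℝ} (hT : 0 < T) :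
    ∃ B, ∀ z ∈ collar Ω K r, ∀ w ∈ collar Ω K r, Q z w ≤ T * (δ z + δ w) →
      Real.log (Q z w) - Real.log (δ z) / 2 - Real.log (δ w) / 2 - B ≤ kobayashi Ω z w := by
  obtain ⟨B, hB⟩ := sys.exists_half_log_sub_le_kobayashi hΩ
  have hlogA := Real.log_nonneg sys.isQuasiMetricOn.one_le
  refine ⟨B + Real.log A / 2 + Real.log (2 * T) / 2, fun z hz w hw hQT => ?_⟩
  have hδz := sys.height_pos z hz
  have hδw := sys.height_pos w hw
  have hQ := sys.pos z hz w hw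
  have hlog {x : ℝ} (hx : 0 < x) (hle : Q z w ≤ 2 * T * x) :
      Real.log (Q z w) ≤ Real.log (2 * T) + Real.log x := by
    rw [← Real.log_mul (by positivity) hx.ne']
    exact Real.log_le_log hQ hle
  rcases le_total (δ z) (δ w) with hle | hle
  · linarith [hlog hδw (by nlinarith), hB z hz w hw]
  · have hsymm := Real.log_le_log hQ (sys.isQuasiMetricOn.symm_le _ (sys.mem_of_mem_collar hw) _
      (sys.mem_of_mem_collar hz))
    rw [Real.log_mul sys.A_pos.ne' (sys.pos w hw z hz).ne'] at hsymm
    linarith [hlog hδz (by nlinarith), kobayashi_symm Ω w z ▸ hB w hw z hz]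

/-- When the heights are small compared with `Q z w`, the two truncated gauges at the feet of `z`
and `w` have disjoint active regions and their difference is a single subunit function. -/
lemma exists_log_sub_le_kobayashi_of_mul_lt (sys : IsPeakSystem Ω K Q δ a η c A r)
    (hΩ : AnalyticDiscConnected Ω) :
    ∃ T > 0, ∃ B, ∀ z ∈ collar Ω K r, ∀ w ∈ collar Ω K r, T * (δ z + δ w) < Q z w →
      Real.log (Q z w) - Real.log (δ z) / 2 - Real.log (δ w) / 2 - B ≤ kobayashi Ω z w := by
  obtain ⟨κ, hκ, hκA, hlevel⟩ := sys.exists_isTruncationLevel_mul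
  have hA := sys.A_pos
  obtain ⟨T, hTA, hTκ⟩ : ∃ T, 2 * A ^ 5 ≤ T ∧ A ≤ T * κ :=
    ⟨max (2 * A ^ 5) (A / κ), le_max_left _ _, (div_le_iff₀ hκ).mp (le_max_right _ _)⟩
  have hT : 0 < T := (by positivity : 0 < 2 * A ^ 5).trans_le hTA
  refine ⟨T, hT, 1 + Real.log A - Real.log κ, fun z hz w hw hTQ => ?_⟩
  have hδz := sys.height_pos z hz
  have hδw := sys.height_pos w hw
  have hQ := sys.pos z hz w hw
  obtain ⟨p, hp⟩ := sys.exists_foot z hz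
  obtain ⟨q, hq⟩ := sys.exists_foot w hw
  have hsmall {x : ℝ} (hx : 0 < x) (hle : x ≤ δ z + δ w) : A * x ≤ κ * Q z w := by
    calc A * x ≤ T * κ * x := by gcongr
      _ ≤ T * κ * (δ z + δ w) := by gcongr
      _ = κ * (T * (δ z + δ w)) := by ring
      _ ≤ κ * Q z w := by gcongr
  have hkob := sys.sub_log_sub_log_le_kobayashi_of_isFoot hΩ (hlevel z hz w hw) hz hw hp hq
    (by nlinarith) (hsmall hδz (by linarith)) (hsmall hδw (by linarith))
  rw [Real.log_mul hκ.ne' hQ.ne', Real.log_mul hA.ne' hδz.ne', Real.log_mul hA.ne' hδw.ne'] at hkob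
  linarith

lemma exists_log_sub_le_kobayashi (sys : IsPeakSystem Ω K Q δ a η c A r)
    (hΩ : AnalyticDiscConnected Ω) :
    ∃ B, ∀ z ∈ collar Ω K r, ∀ w ∈ collar Ω K r,
      Real.log (Q z w) - Real.log (δ z) / 2 - Real.log (δ w) / 2 - B ≤ kobayashi Ω z w := by
  obtain ⟨T, hT, B₁, hB₁⟩ := sys.exists_log_sub_le_kobayashi_of_mul_lt hΩ
  obtain ⟨B₂, hB₂⟩ := sys.exists_log_sub_le_kobayashi_of_le_mul hΩ hT
  refine ⟨max B₁ B₂, fun z hz w hw => ?_⟩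
  rcases le_or_gt (Q z w) (T * (δ z + δ w)) with hle | hlt
  · linarith [hB₂ z hz w hw hle, le_max_right B₁ B₂]
  · linarith [hB₁ z hz w hw hlt, le_max_left B₁ B₂]

end IsPeakSystem

end LowerEstimate

section BoundaryEstimates

variable {E : Type*} [NormedAddCommGroup E] [NormedSpace ℂ E] {Ω K : Set E} {ρ : E → ℝ}
  {ℓ : E → E →L[ℂ] ℂ} {a : E → E → ℂ} {η c M : ℝ} {p q z w : E}

/-- The Balogh–Bonk quasi-metric near the boundary `ρ = 0`, with `ℓ z` the complex differential of
`ρ` at `z`: complex tangential displacements are counted quadratically, the complex normal ones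
linearly. -/
noncomputable def quasiDist (ρ : E → ℝ) (ℓ : E → E →L[ℂ] ℂ) (z w : E) : ℝ :=
  -ρ z + -ρ w + ‖z - w‖ ^ 2 + ‖ℓ z (w - z)‖

/-- Uniform quantitative strict pseudoconvexity of the bounded set `Ω` along the part `K` of its
boundary: `ρ` is a defining function near `K` with complex differentials `ℓ z = 2 ∂ρ(z)`, and
`a p` is a peak function at `p`, equal to `-ℓ p (x - p)` up to second order. -/
structure BoundaryEstimates (Ω K : Set E) (ρ : E → ℝ) (ℓ : E → E →L[ℂ] ℂ) (a : E → E → ℂ)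
    (η c M : ℝ) : Prop where
  η_pos : 0 < η
  c_pos : 0 < c
  one_le : 1 ≤ M
  dist_le : ∀ x ∈ Ω, ∀ y ∈ Ω, dist x y ≤ M
  eq_zero : ∀ p ∈ K, ρ p = 0
  mem_iff : ∀ p ∈ K, ∀ x, dist x p < η → (x ∈ Ω ↔ ρ x < 0)
  exists_dist_le : ∀ x ∈ Ω, ∀ q ∈ K, dist x q < η → ∃ p ∈ K, dist x p ≤ M * -ρ x
  norm_sub_le : ∀ z w, ‖ℓ z - ℓ w‖ ≤ M * ‖z - w‖
  norm_le : ∀ z, ‖ℓ z‖ ≤ M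
  taylor : ∀ z v, |ρ (z + v) - ρ z - (ℓ z v).re| ≤ M * ‖v‖ ^ 2
  exists_inward : ∀ p ∈ K, ∀ z, dist z p < η → ∃ ν, ℓ z ν = -1 ∧ ‖ν‖ ≤ M
  isPeakFunction : ∀ p ∈ K, IsPeakFunction Ω p η c (a p)
  norm_add_le : ∀ p ∈ K, ∀ x, ‖a p x + ℓ p (x - p)‖ ≤ M * ‖x - p‖ ^ 2

namespace BoundaryEstimates

lemma norm_apply_le (H : BoundaryEstimates Ω K ρ ℓ a η c M) (z v : E) : ‖ℓ z v‖ ≤ M * ‖v‖ :=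
  ((ℓ z).le_opNorm v).trans (by gcongr; exact H.norm_le z)

lemma norm_apply_le_add (H : BoundaryEstimates Ω K ρ ℓ a η c M) (z w v : E) :
    ‖ℓ z v‖ ≤ ‖ℓ w v‖ + M * ‖z - w‖ * ‖v‖ := by
  have hsplit : ℓ z v = ℓ w v + (ℓ z - ℓ w) v := by simp
  rw [hsplit]
  refine (_root_.norm_add_le _ _).trans ?_
  gcongr
  exact ((ℓ z - ℓ w).le_opNorm v).trans (by gcongr; exact H.norm_sub_le z w)

lemma quasiDist_symm_le (H : BoundaryEstimates Ω K ρ ℓ a η c M) (hz : ρ z ≤ 0) (hw : ρ w ≤ 0) :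
    quasiDist ρ ℓ w z ≤ (M + 2) * quasiDist ρ ℓ z w := by
  have hM := H.one_le
  have hℓ := H.norm_apply_le_add w z (z - w)
  have hneg : ‖ℓ z (z - w)‖ = ‖ℓ z (w - z)‖ := by rw [← norm_neg, ← map_neg, neg_sub]
  rw [hneg, norm_sub_rev w z] at hℓ
  unfold quasiDist
  rw [norm_sub_rev w z]
  nlinarith [norm_nonneg (ℓ z (w - z)), sq_nonneg ‖z - w‖]

lemma quasiDist_triangle_le (H : BoundaryEstimates Ω K ρ ℓ a η c M) {u : E} (hz : ρ z ≤ 0)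
    (hu : ρ u ≤ 0) (hw : ρ w ≤ 0) :
    quasiDist ρ ℓ z w ≤ (M + 2) * (quasiDist ρ ℓ z u + quasiDist ρ ℓ u w) := by
  have hM := H.one_le
  have hℓ : ‖ℓ z (w - z)‖ ≤
      ‖ℓ z (u - z)‖ + (‖ℓ u (w - u)‖ + M * ‖z - u‖ * ‖u - w‖) := by
    rw [← sub_add_sub_cancel w u z, add_comm (w - u), map_add, norm_sub_rev u w]
    exact (_root_.norm_add_le _ _).trans (by gcongr; exact H.norm_apply_le_add z u (w - u))
  have hnorm : ‖z - w‖ ^ 2 ≤ 2 * ‖z - u‖ ^ 2 + 2 * ‖u - w‖ ^ 2 := by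
    have := norm_sub_le_norm_sub_add_norm_sub z u w
    nlinarith [sq_nonneg (‖z - u‖ - ‖u - w‖), norm_nonneg (z - w)]
  have hmul : M * ‖z - u‖ * ‖u - w‖ ≤ M * (‖z - u‖ ^ 2 + ‖u - w‖ ^ 2) := by
    rw [mul_assoc]
    gcongr
    nlinarith [sq_nonneg (‖z - u‖ - ‖u - w‖), sq_nonneg (‖z - u‖ + ‖u - w‖)]
  unfold quasiDist
  nlinarith [norm_nonneg (ℓ z (u - z)), norm_nonneg (ℓ u (w - u))]

lemma neg_le_mul_dist (H : BoundaryEstimates Ω K ρ ℓ a η c M) (hq : q ∈ K) (hz : dist z q ≤ 1) :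
    -ρ z ≤ 2 * M * dist z q := by
  have hM := H.one_le
  have htaylor := (abs_le.1 (H.taylor q (z - q))).1
  rw [add_sub_cancel, H.eq_zero q hq, sub_zero] at htaylor
  rw [dist_eq_norm] at hz ⊢
  have hsq : M * ‖z - q‖ ^ 2 ≤ M * ‖z - q‖ := by
    gcongr
    nlinarith [norm_nonneg (z - q)]
  linarith [(abs_le.1 ((Complex.abs_re_le_norm _).trans (H.norm_apply_le q (z - q)))).1]

lemma quasiDist_le_mul_norm (H : BoundaryEstimates Ω K ρ ℓ a η c M) (hp : p ∈ K) (hz : z ∈ Ω)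
    (hzp : dist z p < η) : quasiDist ρ ℓ p z ≤ (2 + (3 * M + 1) / c) * ‖a p z‖ := by
  have hM := H.one_le
  have hc := H.c_pos
  have htaylor := (abs_le.1 (H.taylor p (z - p))).1
  rw [add_sub_cancel, H.eq_zero p hp, sub_zero] at htaylor
  have hre := (abs_le.1 (Complex.abs_re_le_norm (ℓ p (z - p)))).1
  have hℓ : ‖ℓ p (z - p)‖ ≤ ‖a p z‖ + M * ‖z - p‖ ^ 2 := by
    rw [← add_sub_cancel_left (a p z) (ℓ p (z - p))]
    exact (_root_.norm_sub_le _ _).trans (by linarith [H.norm_add_le p hp z])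
  have hsq : ‖z - p‖ ^ 2 ≤ ‖a p z‖ / c := by
    rw [le_div_iff₀ hc, mul_comm, ← dist_eq_norm]
    exact ((H.isPeakFunction p hp).le_re z hz hzp).trans (Complex.re_le_norm _)
  have hmul : (3 * M + 1) * ‖z - p‖ ^ 2 ≤ (3 * M + 1) * (‖a p z‖ / c) := by gcongr
  rw [quasiDist, H.eq_zero p hp, norm_sub_rev p z]
  calc -0 + -ρ z + ‖z - p‖ ^ 2 + ‖ℓ p (z - p)‖
      ≤ 2 * ‖a p z‖ + (3 * M + 1) * (‖a p z‖ / c) := by linarith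
    _ = (2 + (3 * M + 1) / c) * ‖a p z‖ := by ring

lemma norm_le_mul_quasiDist (H : BoundaryEstimates Ω K ρ ℓ a η c M) (hp : p ∈ K)
    (hz : ρ z ≤ 0) : ‖a p z‖ ≤ M * quasiDist ρ ℓ p z := by
  have hM := H.one_le
  have ha : ‖a p z‖ ≤ ‖ℓ p (z - p)‖ + M * ‖z - p‖ ^ 2 := by
    rw [← add_sub_cancel_right (a p z) (ℓ p (z - p))]
    exact (_root_.norm_sub_le _ _).trans (by linarith [H.norm_add_le p hp z])
  rw [quasiDist, H.eq_zero p hp, norm_sub_rev p z]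
  nlinarith [norm_nonneg (ℓ p (z - p))]

lemma lt_zero_of_mem_collar (H : BoundaryEstimates Ω K ρ ℓ a η c M) (hz : z ∈ collar Ω K η) :
    ρ z < 0 := by
  obtain ⟨hzΩ, q, hq, hzq⟩ := hz
  exact (H.mem_iff q hq z hzq).1 hzΩ

lemma nonpos_of_mem (H : BoundaryEstimates Ω K ρ ℓ a η c M) (hz : z ∈ K ∪ collar Ω K η) :
    ρ z ≤ 0 :=
  hz.elim (fun hz => (H.eq_zero z hz).le) fun hz => (H.lt_zero_of_mem_collar hz).le

lemma isQuasiMetricOn (H : BoundaryEstimates Ω K ρ ℓ a η c M) :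
    IsQuasiMetricOn (K ∪ collar Ω K η) (M + 2) (quasiDist ρ ℓ) where
  one_le := by linarith [H.one_le]
  symm_le _ hx _ hy := H.quasiDist_symm_le (H.nonpos_of_mem hx) (H.nonpos_of_mem hy)
  triangle_le _ hx _ hy _ hz :=
    H.quasiDist_triangle_le (H.nonpos_of_mem hx) (H.nonpos_of_mem hy) (H.nonpos_of_mem hz)

lemma quasiDist_le (H : BoundaryEstimates Ω K ρ ℓ a η c M) (hz : z ∈ Ω) (hw : w ∈ Ω)
    (hρz : -ρ z ≤ 1) (hρw : -ρ w ≤ 1) : quasiDist ρ ℓ z w ≤ 2 + 2 * M ^ 2 := by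
  have hM := H.one_le
  have hdist := H.dist_le z hz w hw
  rw [dist_eq_norm] at hdist
  have hℓ : ‖ℓ z (w - z)‖ ≤ M * M := by
    refine (H.norm_apply_le z (w - z)).trans ?_
    rw [norm_sub_rev]
    gcongr
  have hsq : ‖z - w‖ ^ 2 ≤ M ^ 2 := by gcongr
  unfold quasiDist
  linarith

lemma neg_le_quasiDist_left (hw : ρ w ≤ 0) : -ρ z ≤ quasiDist ρ ℓ z w := by
  unfold quasiDist
  linarith [norm_nonneg (ℓ z (w - z)), sq_nonneg ‖z - w‖]

lemma neg_le_quasiDist_right (hz : ρ z ≤ 0) : -ρ w ≤ quasiDist ρ ℓ z w := by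
  unfold quasiDist
  linarith [norm_nonneg (ℓ z (w - z)), sq_nonneg ‖z - w‖]

lemma exists_isFoot (H : BoundaryEstimates Ω K ρ ℓ a η c M) {r : ℝ} (hr₁ : r * M ^ 2 ≤ 1 / 2)
    (hrη : r * M ^ 2 ≤ η / 16) (hz : z ∈ collar Ω K r) :
    ∃ p, IsFoot K (quasiDist ρ ℓ) (fun x => -ρ x) a η
      (M * (M + 2) * (1 + M + M ^ 2)) z p := by
  have hM := H.one_le
  obtain ⟨hzΩ, q, hq, hzq⟩ := hz
  have hr : r ≤ r * M ^ 2 := le_mul_of_one_le_right (by linarith [dist_nonneg (x := z) (y := q)])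
    (one_le_pow₀ hM)
  have hρ : ρ z < 0 := (H.mem_iff q hq z (by linarith [H.η_pos])).1 hzΩ
  obtain ⟨p, hp, hzp⟩ := H.exists_dist_le z hzΩ q hq (by linarith [H.η_pos])
  have hdist : dist z p ≤ 2 * (r * M ^ 2) := by
    calc dist z p ≤ M * -ρ z := hzp
      _ ≤ M * (2 * M * r) := by
          gcongr
          exact (H.neg_le_mul_dist hq (by linarith)).trans (by gcongr)
      _ = 2 * (r * M ^ 2) := by ring
  have hzp1 : dist z p ≤ 1 := by linarith
  have hquasi : quasiDist ρ ℓ z p ≤ (1 + M + M ^ 2) * -ρ z := by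
    have hℓ := H.norm_apply_le z (p - z)
    rw [norm_sub_rev, ← dist_eq_norm] at hℓ
    rw [quasiDist, H.eq_zero p hp, ← dist_eq_norm]
    nlinarith [dist_nonneg (x := z) (y := p), hzp1]
  have hnorm : ‖a p z‖ ≤ M * (M + 2) * (1 + M + M ^ 2) * -ρ z := by
    calc ‖a p z‖ ≤ M * ((M + 2) * quasiDist ρ ℓ z p) := (H.norm_le_mul_quasiDist hp hρ.le).trans
          (by gcongr; exact H.quasiDist_symm_le hρ.le (H.eq_zero p hp).le)
      _ ≤ M * ((M + 2) * ((1 + M + M ^ 2) * -ρ z)) := by gcongr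
      _ = M * (M + 2) * (1 + M + M ^ 2) * -ρ z := by ring
  refine ⟨p, hp, by linarith [H.η_pos], hquasi.trans ?_, hnorm⟩
  have : 0 ≤ -ρ z := by linarith
  gcongr
  exact le_mul_of_one_le_left (by positivity) (by nlinarith)

lemma exists_isPeakSystem (H : BoundaryEstimates Ω K ρ ℓ a η c M) :
    ∃ A, ∃ r > 0, IsPeakSystem Ω K (quasiDist ρ ℓ) (fun x => -ρ x) a η c A r := by
  have hM := H.one_le
  have hη := H.η_pos
  have hc := H.c_pos
  obtain ⟨C, hC, hloc⟩ := exists_localizesDiscs (E := E) hη hc (zero_le_one.trans hM)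
  obtain ⟨r, hr, hr₁, hrη⟩ : ∃ r > 0, r * M ^ 2 ≤ 1 / 2 ∧ r * M ^ 2 ≤ η / 16 := by
    refine ⟨min (1 / 2) (η / 16) / M ^ 2, by positivity, ?_⟩
    rw [div_mul_cancel₀ _ (by positivity)]
    exact ⟨min_le_left _ _, min_le_right _ _⟩
  have hM2 : r ≤ r * M ^ 2 := le_mul_of_one_le_right hr.le (one_le_pow₀ hM)
  have hrη' : r ≤ η := by linarith
  have hneg : ∀ z ∈ collar Ω K r, ρ z < 0 := fun z hz =>
    H.lt_zero_of_mem_collar ⟨hz.1, hz.2.imp fun _ hq => ⟨hq.1, hq.2.trans_le hrη'⟩⟩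
  have hle_one : ∀ z ∈ collar Ω K r, -ρ z ≤ 1 := by
    rintro z ⟨-, q, hq, hzq⟩
    calc -ρ z ≤ 2 * M * dist z q := H.neg_le_mul_dist hq (by linarith)
      _ ≤ 2 * M * r := by gcongr
      _ ≤ 1 := by nlinarith
  obtain ⟨A, hA⟩ : ∃ A, A = (M + 2) + (2 + (3 * M + 1) / c) + (2 + 2 * M ^ 2) +
    M * (M + 2) * (1 + M + M ^ 2) + C := ⟨_, rfl⟩
  have hquot : 0 ≤ (3 * M + 1) / c := by positivity
  have hfoot : 0 ≤ M * (M + 2) * (1 + M + M ^ 2) := by positivity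
  have hM0 := sq_nonneg M
  refine ⟨A, r, hr, hη, hc, hrη', H.isQuasiMetricOn.mono ?_ (by linarith), H.isPeakFunction,
    fun p hp => (H.isPeakFunction p hp).localizesDiscs_mono
      (hloc Ω p _ H.dist_le (H.isPeakFunction p hp)) (by linarith),
    fun p hp x hx hxp => (H.quasiDist_le_mul_norm hp hx hxp).trans (by gcongr; linarith),
    fun z hz => (H.exists_isFoot hr₁ hrη hz).imp fun p hp => hp.mono
      (by linarith [hneg z hz]) (by linarith),
    fun z hz => by linarith [hneg z hz],
    fun z hz w hw => (neg_pos.2 (hneg z hz)).trans_le (neg_le_quasiDist_left (hneg w hw).le),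
    fun z hz w hw => (H.quasiDist_le hz.1 hw.1 (hle_one z hz) (hle_one w hw)).trans (by linarith)⟩
  exact fun x hx y hy => (neg_nonneg.2 (H.nonpos_of_mem hx)).trans
    (neg_le_quasiDist_left (H.nonpos_of_mem hy))

end BoundaryEstimates

end BoundaryEstimates

section Lifts

variable {E : Type*} [NormedAddCommGroup E] [NormedSpace ℂ E] {Ω K : Set E} {ρ : E → ℝ}
  {ℓ : E → E →L[ℂ] ℂ} {a : E → E → ℂ} {η c M h d : ℝ} {q z w ν ν' : E}

/-- The heights `h` to which points near the boundary can be lifted along inward vectors with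
control by `BoundaryEstimates Ω K ρ ℓ a η c M`. -/
structure IsLiftHeight (η M h : ℝ) : Prop where
  pos : 0 < h
  le_one : 200 * M ^ 4 * h ≤ 1
  le_radius : 20 * h * M ≤ η
  le_radius_sq : 64 * h ≤ η ^ 2

/-- Bounds, for every `ε > 0`, of the Kobayashi distance between points of `Ω` at distance at
least `ε` from `K`. -/
def KobayashiBoundedAwayFrom (Ω K : Set E) : Prop :=
  ∀ ε > 0, ∃ C, ∀ x ∈ Ω, ∀ y ∈ Ω, (∀ q ∈ K, ε ≤ dist x q) → (∀ q ∈ K, ε ≤ dist y q) →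
    kobayashi Ω x y ≤ C

namespace IsLiftHeight

lemma anti {h' : ℝ} (hh : IsLiftHeight η M h) (hM : 0 ≤ M) (hpos : 0 < h') (hle : h' ≤ h) :
    IsLiftHeight η M h' where
  pos := hpos
  le_one := le_trans (by gcongr) hh.le_one
  le_radius := le_trans (by gcongr) hh.le_radius
  le_radius_sq := le_trans (by gcongr) hh.le_radius_sq

lemma four_mul_le_one (hh : IsLiftHeight η M h) (hM : 1 ≤ M) : 4 * M ^ 3 * h ≤ 1 := by
  have hpos := hh.pos
  refine le_trans ?_ hh.le_one
  gcongr <;> norm_num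

end IsLiftHeight

lemma exists_isLiftHeight (hη : 0 < η) (hM : 0 < M) : ∃ h, IsLiftHeight η M h := by
  refine ⟨min (1 / (200 * M ^ 4)) (min (η / (20 * M)) (η ^ 2 / 64)), by positivity, ?_, ?_, ?_⟩
  · rw [mul_comm, ← le_div_iff₀ (by positivity)]
    exact min_le_left _ _
  · rw [mul_right_comm, mul_comm, ← le_div_iff₀ (by positivity)]
    exact (min_le_right _ _).trans (min_le_left _ _)
  · rw [mul_comm, ← le_div_iff₀ (by positivity)]
    exact (min_le_right _ _).trans (min_le_right _ _)

lemma artanh_div_add_le (hd : 0 < d) (hdh : d ≤ h) :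
    artanh (h / (h + d / 4)) ≤ Real.log h / 2 - Real.log d / 2 + Real.log 9 / 2 := by
  have hh : 0 < h := hd.trans_le hdh
  have hquot : (1 + h / (h + d / 4)) / (1 - h / (h + d / 4)) = (8 * h + d) / d := by
    have hnum : 1 + h / (h + d / 4) = (8 * h + d) / 4 / (h + d / 4) := by field_simp; ring
    have hden : 1 - h / (h + d / 4) = d / 4 / (h + d / 4) := by field_simp; ring
    rw [hnum, hden]
    field_simp
  have hlog : Real.log (8 * h + d) ≤ Real.log (9 * h) :=
    Real.log_le_log (by positivity) (by linarith)
  rw [Real.log_mul (by norm_num) hh.ne'] at hlog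
  rw [artanh, hquot, Real.log_div (by positivity) hd.ne']
  linarith

lemma sub_re_add_mul_norm_sq_neg {N : ℝ} {t : ℂ} (hN : 0 ≤ N) (hd : 0 < d) (hdh : d ≤ h)
    (hNh : 4 * N * h ≤ 1) (ht : ‖t - h‖ < h + d / 4) : -d - t.re + N * ‖t‖ ^ 2 < 0 := by
  have hre : -(d / 4) < t.re := by
    have := (abs_le.1 (Complex.abs_re_le_norm (t - h))).1
    simp only [Complex.sub_re, Complex.ofReal_re] at this
    linarith
  have hsq : ‖t‖ ^ 2 ≤ 2 * h * t.re + h * d / 2 + d ^ 2 / 16 := by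
    have hlt : ‖t - h‖ ^ 2 < (h + d / 4) ^ 2 := by gcongr
    rw [← Complex.normSq_eq_norm_sq, Complex.normSq_apply] at hlt ⊢
    simp only [Complex.sub_re, Complex.sub_im, Complex.ofReal_re, Complex.ofReal_im] at hlt
    nlinarith
  have hmul : N * ‖t‖ ^ 2 ≤ 2 * (N * h) * t.re + N * h * d / 2 + N * d * d / 16 :=
    (mul_le_mul_of_nonneg_left hsq hN).trans_eq (by ring)
  have hprod : 0 ≤ (t.re + d / 4) * (1 - 2 * (N * h)) :=
    mul_nonneg (by linarith) (by linarith)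
  have hNh' : N * h * d ≤ 1 / 4 * d := by gcongr; linarith
  have hNd : N * d * d ≤ N * h * d := by gcongr
  nlinarith

lemma two_mul_add_add_mul_sq_lt {D x : ℝ} (hM : 1 ≤ M) (hpos : 0 < h)
    (hh : 200 * M ^ 4 * h ≤ 1) (hD : 40 * (M * D) ≤ h) (hxD : x ^ 2 ≤ D) :
    2 * (D + h * (M ^ 2 * x)) + M * (5 * h * M + 2 * x) ^ 2 < h := by
  have hDM : D ≤ M * D := le_mul_of_one_le_left ((sq_nonneg x).trans hxD) hM
  have hlin : h * (M ^ 2 * x) ≤ h * (1 / 10) := by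
    gcongr
    refine le_of_sq_le_sq ?_ (by norm_num)
    calc (M ^ 2 * x) ^ 2 = M ^ 4 * x ^ 2 := by ring
      _ ≤ M ^ 4 * h := by gcongr; linarith
      _ ≤ (1 / 10) ^ 2 := by linarith
  have hsq : M * (5 * h * M + 2 * x) ^ 2 ≤ h / 4 + h / 5 := by
    have hpow : M ^ 3 * h * h ≤ M ^ 4 * h * h := by gcongr; norm_num
    have hone : M ^ 4 * h * h ≤ 1 / 200 * h := by gcongr; linarith
    calc M * (5 * h * M + 2 * x) ^ 2 ≤ M * (50 * h ^ 2 * M ^ 2 + 8 * D) := by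
          gcongr
          nlinarith [sq_nonneg (5 * h * M - 2 * x)]
      _ = 50 * (M ^ 3 * h * h) + 8 * (M * D) := by ring
      _ ≤ h / 4 + h / 5 := by linarith
  linarith

namespace BoundaryEstimates

lemma add_mem (H : BoundaryEstimates Ω K ρ ℓ a η c M) (hq : q ∈ K) (hzq : dist z q < η / 2)
    {v : E} (hv : ‖v‖ ≤ η / 2) (hρ : ρ (z + v) < 0) : z + v ∈ Ω := by
  refine (H.mem_iff q hq _ ?_).2 hρ
  have hdist : dist (z + v) z = ‖v‖ := by rw [dist_eq_norm, add_sub_cancel_left]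
  linarith [dist_triangle (z + v) z q]

lemma apply_add_smul_le (H : BoundaryEstimates Ω K ρ ℓ a η c M) (hν : ℓ z ν = -1) (hνM : ‖ν‖ ≤ M)
    (t : ℂ) : ρ (z + t • ν) ≤ ρ z - t.re + M ^ 3 * ‖t‖ ^ 2 := by
  have hM := H.one_le
  have htaylor := (abs_le.1 (H.taylor z (t • ν))).2
  have hre : (t • (-1 : ℂ)).re = -t.re := by simp
  rw [map_smul, hν, hre, norm_smul] at htaylor
  have hnorm : M * (‖t‖ * ‖ν‖) ^ 2 ≤ M * (‖t‖ * M) ^ 2 := by gcongr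
  linarith

lemma add_smul_mem (H : BoundaryEstimates Ω K ρ ℓ a η c M) (hz : z ∈ Ω) (hq : q ∈ K)
    (hzq : dist z q < η / 2) (hν : ℓ z ν = -1) (hνM : ‖ν‖ ≤ M) (hh : IsLiftHeight η M h)
    (hzh : -ρ z ≤ h) {t : ℂ} (ht : ‖t - h‖ < h + -ρ z / 4) : z + t • ν ∈ Ω := by
  have hM := H.one_le
  have hpos := hh.pos
  have hρ : ρ z < 0 := (H.mem_iff q hq z (by linarith [H.η_pos])).1 hz
  refine H.add_mem hq hzq ?_ ((H.apply_add_smul_le hν hνM t).trans_lt ?_)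
  · have htnorm : ‖t‖ ≤ 3 * h := by
      have := norm_le_norm_sub_add t h
      rw [Complex.norm_real, Real.norm_of_nonneg hpos.le] at this
      linarith
    rw [norm_smul]
    calc ‖t‖ * ‖ν‖ ≤ 3 * h * M := by gcongr
      _ ≤ η / 2 := by linarith [hh.le_radius, mul_pos hpos (zero_lt_one.trans_le hM)]
  · have := sub_re_add_mul_norm_sq_neg (by positivity) (neg_pos.2 hρ) hzh (hh.four_mul_le_one hM) ht
    rwa [neg_neg] at this

lemma lift_mem (H : BoundaryEstimates Ω K ρ ℓ a η c M) (hz : z ∈ Ω) (hq : q ∈ K)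
    (hzq : dist z q < η / 2) (hν : ℓ z ν = -1) (hνM : ‖ν‖ ≤ M) (hh : IsLiftHeight η M h)
    (hzh : -ρ z ≤ h) : z + (h : ℂ) • ν ∈ Ω := by
  have hρ : ρ z < 0 := (H.mem_iff q hq z (by linarith [H.η_pos])).1 hz
  exact H.add_smul_mem hz hq hzq hν hνM hh hzh (by simp; linarith [hh.pos])

lemma half_le_neg_lift (H : BoundaryEstimates Ω K ρ ℓ a η c M) (hρ : ρ z ≤ 0) (hν : ℓ z ν = -1)
    (hνM : ‖ν‖ ≤ M) (hh : IsLiftHeight η M h) : h / 2 ≤ -ρ (z + (h : ℂ) • ν) := by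
  have hpos := hh.pos
  have hle := H.apply_add_smul_le hν hνM h
  rw [Complex.norm_real, Real.norm_of_nonneg hpos.le, Complex.ofReal_re] at hle
  nlinarith [hh.four_mul_le_one H.one_le]

lemma kobayashi_lift_le (H : BoundaryEstimates Ω K ρ ℓ a η c M) (hz : z ∈ Ω) (hq : q ∈ K)
    (hzq : dist z q < η / 2) (hν : ℓ z ν = -1) (hνM : ‖ν‖ ≤ M) (hh : IsLiftHeight η M h)
    (hzh : -ρ z ≤ h) : kobayashi Ω z (z + (h : ℂ) • ν) ≤
      Real.log h / 2 - Real.log (-ρ z) / 2 + Real.log 9 / 2 := by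
  have hpos := hh.pos
  have hρ : ρ z < 0 := (H.mem_iff q hq z (by linarith [H.η_pos])).1 hz
  obtain ⟨R, hR⟩ : ∃ R, R = h + -ρ z / 4 := ⟨_, rfl⟩
  have hRpos : 0 < R := by linarith
  have hdisc : IsAnalyticDisc Ω fun ζ : ℂ => z + ((h : ℂ) + R * ζ) • ν := by
    refine ⟨by fun_prop, fun ζ hζ => H.add_smul_mem hz hq hzq hν hνM hh hzh ?_⟩
    rw [mem_ball_zero_iff] at hζ
    rw [add_sub_cancel_left, norm_mul, Complex.norm_real, Real.norm_of_nonneg hRpos.le, ← hR]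
    exact mul_lt_of_lt_one_right hRpos hζ
  have hnorm : ‖((-(h / R) : ℝ) : ℂ)‖ = h / R := by
    rw [Complex.norm_real, norm_neg, Real.norm_of_nonneg (by positivity)]
  have hcancel : (h : ℂ) + R * ((-(h / R) : ℝ) : ℂ) = 0 := by
    rw [← Complex.ofReal_mul, ← Complex.ofReal_add, mul_neg, mul_div_cancel₀ _ hRpos.ne']
    simp
  have hle := hdisc.kobayashi_le (α := ((-(h / R) : ℝ) : ℂ))
    (by rw [hnorm, div_lt_one hRpos]; linarith)
  beta_reduce at hle
  rw [hnorm, hcancel, mul_zero, zero_smul, add_zero, add_zero, kobayashi_symm, hR] at hle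
  exact hle.trans (artanh_div_add_le (neg_pos.2 hρ) hzh)

lemma norm_sub_sq_le_quasiDist (hz : ρ z ≤ 0) (hw : ρ w ≤ 0) :
    ‖w - z‖ ^ 2 ≤ quasiDist ρ ℓ z w := by
  rw [quasiDist, norm_sub_rev w z]
  linarith [norm_nonneg (ℓ z (w - z))]

lemma norm_apply_sub_le_quasiDist (hz : ρ z ≤ 0) (hw : ρ w ≤ 0) :
    ‖ℓ z (w - z)‖ ≤ quasiDist ρ ℓ z w := by
  rw [quasiDist]
  linarith [sq_nonneg ‖z - w‖]

lemma norm_apply_lift_sub_lift_le (H : BoundaryEstimates Ω K ρ ℓ a η c M) (hh : 0 ≤ h)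
    (hν : ℓ z ν = -1) (hν' : ℓ w ν' = -1) (hνM' : ‖ν'‖ ≤ M) :
    ‖ℓ z (w + (h : ℂ) • ν' - (z + (h : ℂ) • ν))‖ ≤
      ‖ℓ z (w - z)‖ + h * (M ^ 2 * ‖w - z‖) := by
  have hM := H.one_le
  have hsplit : ℓ z (w + (h : ℂ) • ν' - (z + (h : ℂ) • ν)) =
      ℓ z (w - z) + (h : ℂ) * ((ℓ z - ℓ w) ν') := by
    rw [_root_.sub_apply, hν', add_sub_add_comm, ← smul_sub, map_add, map_smul, map_sub _ ν', hν,
      smul_eq_mul]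
  rw [hsplit]
  refine (_root_.norm_add_le _ _).trans ?_
  rw [norm_mul, Complex.norm_real, Real.norm_of_nonneg hh]
  gcongr
  calc ‖(ℓ z - ℓ w) ν'‖ ≤ ‖ℓ z - ℓ w‖ * ‖ν'‖ := (ℓ z - ℓ w).le_opNorm ν'
    _ ≤ M * ‖z - w‖ * M := by gcongr; exact H.norm_sub_le z w
    _ = M ^ 2 * ‖w - z‖ := by rw [norm_sub_rev]; ring

lemma lift_add_smul_mem (H : BoundaryEstimates Ω K ρ ℓ a η c M) (hq : q ∈ K)
    (hzq : dist z q < η / 2) (hν : ℓ z ν = -1) (hνM : ‖ν‖ ≤ M) (hν' : ℓ w ν' = -1)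
    (hνM' : ‖ν'‖ ≤ M) (hρz : ρ z ≤ 0) (hρw : ρ w ≤ 0) (hh : IsLiftHeight η M h)
    (hQ : 40 * M * quasiDist ρ ℓ z w ≤ h) {ζ : ℂ} (hζ : ‖ζ‖ ≤ 2) :
    z + (h : ℂ) • ν + ζ • (w + (h : ℂ) • ν' - (z + (h : ℂ) • ν)) ∈ Ω := by
  have hM := H.one_le
  have hpos := hh.pos
  have hxD := norm_sub_sq_le_quasiDist (ℓ := ℓ) hρz hρw
  have hDM : quasiDist ρ ℓ z w ≤ M * quasiDist ρ ℓ z w :=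
    le_mul_of_one_le_left ((sq_nonneg _).trans hxD) hM
  have hnum := two_mul_add_add_mul_sq_lt hM hpos hh.le_one
    (by linarith) hxD
  have hℓy := H.norm_apply_lift_sub_lift_le hpos.le hν hν' hνM'
  rw [add_assoc]
  obtain ⟨y, hy⟩ : ∃ y, w + (h : ℂ) • ν' - (z + (h : ℂ) • ν) = y := ⟨_, rfl⟩
  rw [hy] at hℓy ⊢
  have hynorm : ‖y‖ ≤ ‖w - z‖ + 2 * h * M := by
    rw [← hy, add_sub_add_comm, ← smul_sub]
    refine (_root_.norm_add_le _ _).trans ?_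
    rw [norm_smul, Complex.norm_real, Real.norm_of_nonneg hpos.le]
    have : h * ‖ν' - ν‖ ≤ h * (M + M) := by
      gcongr
      exact (_root_.norm_sub_le _ _).trans (add_le_add hνM' hνM)
    linarith
  have hv : ‖(h : ℂ) • ν + ζ • y‖ ≤ 5 * h * M + 2 * ‖w - z‖ := by
    refine (_root_.norm_add_le _ _).trans ?_
    rw [norm_smul, norm_smul, Complex.norm_real, Real.norm_of_nonneg hpos.le]
    calc h * ‖ν‖ + ‖ζ‖ * ‖y‖ ≤ h * M + 2 * (‖w - z‖ + 2 * h * M) := by gcongr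
      _ = 5 * h * M + 2 * ‖w - z‖ := by ring
  refine H.add_mem hq hzq (hv.trans ?_) ?_
  · have := le_of_sq_le_sq (a := 8 * ‖w - z‖) (b := η) (by linarith [hh.le_radius_sq])
      H.η_pos.le
    linarith [hh.le_radius]
  · have hre : (ℓ z ((h : ℂ) • ν + ζ • y)).re ≤
        -h + 2 * (quasiDist ρ ℓ z w + h * (M ^ 2 * ‖w - z‖)) := by
      have hmul : ‖ζ • ℓ z y‖ ≤ 2 * (quasiDist ρ ℓ z w + h * (M ^ 2 * ‖w - z‖)) := by
        rw [norm_smul]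
        gcongr
        linarith [norm_apply_sub_le_quasiDist (ℓ := ℓ) hρz hρw]
      have hneg : ((h : ℂ) • (-1 : ℂ)).re = -h := by simp
      rw [map_add, map_smul, map_smul, hν, Complex.add_re, hneg]
      linarith [Complex.re_le_norm (ζ • ℓ z y)]
    have hsq : M * ‖(h : ℂ) • ν + ζ • y‖ ^ 2 ≤ M * (5 * h * M + 2 * ‖w - z‖) ^ 2 := by gcongr
    linarith [(abs_le.1 (H.taylor z ((h : ℂ) • ν + ζ • y))).2]

lemma kobayashi_lift_lift_le (H : BoundaryEstimates Ω K ρ ℓ a η c M) (hq : q ∈ K)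
    (hzq : dist z q < η / 2) (hν : ℓ z ν = -1) (hνM : ‖ν‖ ≤ M) (hν' : ℓ w ν' = -1)
    (hνM' : ‖ν'‖ ≤ M) (hρz : ρ z ≤ 0) (hρw : ρ w ≤ 0) (hh : IsLiftHeight η M h)
    (hQ : 40 * M * quasiDist ρ ℓ z w ≤ h) :
    kobayashi Ω (z + (h : ℂ) • ν) (w + (h : ℂ) • ν') ≤ artanh (1 / 2) := by
  obtain ⟨y, hy⟩ : ∃ y, w + (h : ℂ) • ν' - (z + (h : ℂ) • ν) = y := ⟨_, rfl⟩
  have hdisc : IsAnalyticDisc Ω fun ζ : ℂ => z + (h : ℂ) • ν + (2 * ζ) • y := by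
    refine ⟨by fun_prop, fun ζ hζ =>
      hy ▸ H.lift_add_smul_mem hq hzq hν hνM hν' hνM' hρz hρw hh hQ ?_⟩
    rw [mem_ball_zero_iff] at hζ
    rw [norm_mul, Complex.norm_ofNat]
    linarith
  have hle := hdisc.kobayashi_le (α := (1 / 2 : ℂ)) (by norm_num)
  have hhalf : (2 * (1 / 2) : ℂ) = 1 := by norm_num
  have hnorm : ‖(1 / 2 : ℂ)‖ = 1 / 2 := by norm_num
  beta_reduce at hle
  rwa [hhalf, hnorm, mul_zero, zero_smul, add_zero, one_smul, ← hy, add_sub_cancel] at hle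

lemma le_dist_of_le_neg (H : BoundaryEstimates Ω K ρ ℓ a η c M) {ε : ℝ} (hε : ε ≤ 1)
    (hρ : 2 * M * ε ≤ -ρ z) (hq : q ∈ K) : ε ≤ dist z q := by
  have hM := H.one_le
  by_contra! hlt
  have := H.neg_le_mul_dist hq (hlt.le.trans hε)
  have : 2 * M * dist z q < 2 * M * ε := by gcongr
  linarith

lemma kobayashi_le_of_kobayashi_lift_le (H : BoundaryEstimates Ω K ρ ℓ a η c M)
    (hh : IsLiftHeight η M h) (hz : z ∈ collar Ω K (η / 2)) (hw : w ∈ collar Ω K (η / 2))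
    (hzh : -ρ z ≤ h) (hwh : -ρ w ≤ h) {C : ℝ}
    (hC : ∀ q ∈ K, dist z q < η / 2 → ∀ ν ν' : E, ℓ z ν = -1 → ‖ν‖ ≤ M →
      ℓ w ν' = -1 → ‖ν'‖ ≤ M → z + (h : ℂ) • ν ∈ Ω → w + (h : ℂ) • ν' ∈ Ω →
      kobayashi Ω (z + (h : ℂ) • ν) (w + (h : ℂ) • ν') ≤ C) :
    kobayashi Ω z w ≤
      Real.log h - Real.log (-ρ z) / 2 - Real.log (-ρ w) / 2 + Real.log 9 + C := by
  have hη := H.η_pos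
  obtain ⟨hzΩ, q, hq, hzq⟩ := hz
  obtain ⟨hwΩ, q', hq', hwq⟩ := hw
  obtain ⟨ν, hν, hνM⟩ := H.exists_inward q hq z (by linarith)
  obtain ⟨ν', hν', hνM'⟩ := H.exists_inward q' hq' w (by linarith)
  have hz' := H.lift_mem hzΩ hq hzq hν hνM hh hzh
  have hw' := H.lift_mem hwΩ hq' hwq hν' hνM' hh hwh
  have htri := kobayashi_triangle hzΩ hz' hwΩ
  have htri' := kobayashi_triangle hz' hw' hwΩ
  rw [kobayashi_symm Ω (w + _) w] at htri'
  linarith [H.kobayashi_lift_le hzΩ hq hzq hν hνM hh hzh,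
    H.kobayashi_lift_le hwΩ hq' hwq hν' hνM' hh hwh, hC q hq hzq ν ν' hν hνM hν' hνM' hz' hw']

lemma exists_forall_collar_neg_le (H : BoundaryEstimates Ω K ρ ℓ a η c M) (hh : 0 < h) :
    ∃ r > 0, ∀ z ∈ collar Ω K r, z ∈ collar Ω K (η / 2) ∧ 0 < -ρ z ∧ -ρ z ≤ h := by
  have hM := H.one_le
  have hη := H.η_pos
  refine ⟨min (min 1 (η / 2)) (h / (2 * M)), by positivity, ?_⟩
  rintro z ⟨hz, q, hq, hzq⟩
  simp only [lt_min_iff, lt_div_iff₀ (by linarith : 0 < 2 * M)] at hzq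
  obtain ⟨⟨hz₁, hzη⟩, hzh⟩ := hzq
  exact ⟨⟨hz, q, hq, hzη⟩, neg_pos.2 (H.lt_zero_of_mem_collar ⟨hz, q, hq, by linarith⟩),
    by linarith [H.neg_le_mul_dist hq hz₁.le]⟩

lemma exists_kobayashi_le_log (H : BoundaryEstimates Ω K ρ ℓ a η c M)
    (hΩ : KobayashiBoundedAwayFrom Ω K) :
    ∃ r > 0, ∃ C, ∀ z ∈ collar Ω K r, ∀ w ∈ collar Ω K r, kobayashi Ω z w ≤
      Real.log (quasiDist ρ ℓ z w) - Real.log (-ρ z) / 2 - Real.log (-ρ w) / 2 + C := by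
  have hM := H.one_le
  obtain ⟨h₀, hh₀⟩ := exists_isLiftHeight H.η_pos (zero_lt_one.trans_le hM)
  have hh₀pos := hh₀.pos
  obtain ⟨ε, hε, hε₁, hεh⟩ : ∃ ε > 0, ε ≤ 1 ∧ 2 * M * ε ≤ h₀ / 2 := by
    refine ⟨min 1 (h₀ / 2 / (2 * M)), by positivity, min_le_left _ _, ?_⟩
    rw [mul_comm, ← le_div_iff₀ (by positivity)]
    exact min_le_right _ _
  obtain ⟨C, hC⟩ := hΩ ε hε
  obtain ⟨r, hr, hcollar⟩ := H.exists_forall_collar_neg_le hh₀pos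
  refine ⟨r, hr, |C| + artanh (1 / 2) + Real.log 9 + Real.log (40 * M), ?_⟩
  intro z hz w hw
  obtain ⟨hz, hρz, hzh⟩ := hcollar z hz
  obtain ⟨hw, hρw, hwh⟩ := hcollar w hw
  have hzQ : -ρ z ≤ quasiDist ρ ℓ z w := neg_le_quasiDist_left (by linarith)
  have hwQ : -ρ w ≤ quasiDist ρ ℓ z w := neg_le_quasiDist_right (by linarith)
  have hQ : 0 < quasiDist ρ ℓ z w := hρz.trans_le hzQ
  have hlog : Real.log (40 * M * quasiDist ρ ℓ z w) =
      Real.log (40 * M) + Real.log (quasiDist ρ ℓ z w) :=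
    Real.log_mul (by positivity) hQ.ne'
  have hartanh : 0 ≤ artanh (1 / 2) := artanh_nonneg (by norm_num) (by norm_num)
  obtain hnear | hfar := le_or_gt (40 * M * quasiDist ρ ℓ z w) h₀
  · have hQle : quasiDist ρ ℓ z w ≤ 40 * M * quasiDist ρ ℓ z w :=
      le_mul_of_one_le_left hQ.le (by linarith)
    have hh := hh₀.anti (zero_le_one.trans hM) (by positivity) hnear
    have := H.kobayashi_le_of_kobayashi_lift_le hh hz hw (hzQ.trans hQle) (hwQ.trans hQle)
      fun q hq hzq ν ν' hν hνM hν' hνM' _ _ => H.kobayashi_lift_lift_le hq hzq hν hνM hν' hνM'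
        (by linarith) (by linarith) hh le_rfl
    linarith [abs_nonneg C]
  · have := H.kobayashi_le_of_kobayashi_lift_le hh₀ hz hw hzh hwh
      fun _ _ _ ν ν' hν hνM hν' hνM' hz' hw' => hC _ hz' _ hw'
        (fun q => H.le_dist_of_le_neg hε₁
          (hεh.trans (H.half_le_neg_lift (by linarith) hν hνM hh₀)))
        (fun q => H.le_dist_of_le_neg hε₁
          (hεh.trans (H.half_le_neg_lift (by linarith) hν' hνM' hh₀)))
    linarith [le_abs_self C, Real.log_le_log hh₀pos hfar.le]

end BoundaryEstimates

end Lifts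

section FourPoint

variable {X : Type*} {S Ω : Set X} {A B C : ℝ} {d : X → X → ℝ}

/-- Gromov's four-point inequality on `S`, with additive constant `A`. -/
def FourPointOn (S : Set X) (A : ℝ) (d : X → X → ℝ) : Prop :=
  ∀ p ∈ S, ∀ q ∈ S, ∀ x ∈ S, ∀ w ∈ S,
    d p q + d x w ≤ d p x + d w q + A ∨ d p q + d x w ≤ d x q + d p w + A

lemma FourPointOn.gromovHyperbolicWith (h : FourPointOn S A d)
    (hsymm : ∀ x ∈ S, ∀ y ∈ S, d x y = d y x) : GromovHyperbolicWith S d := by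
  refine ⟨A, fun p hp q hq x hx w hw => ?_⟩
  have := hsymm x hx w hw
  obtain h | h := h p hp q hq x hx w hw
  · linarith [min_le_left (d p w + d w x - d p x) (d x w + d w q - d x q)]
  · linarith [min_le_right (d p w + d w x - d p x) (d x w + d w q - d x q)]

lemma FourPointOn.of_le (hnonneg : ∀ x ∈ S, ∀ y ∈ S, 0 ≤ d x y)
    (hle : ∀ x ∈ S, ∀ y ∈ S, d x y ≤ C) : FourPointOn S (2 * C) d := fun p hp q hq x hx w hw =>
  .inl (by linarith [hle p hp q hq, hle x hx w hw, hnonneg p hp x hx, hnonneg w hw q hq])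

lemma FourPointOn.of_forall_exists_le (h : FourPointOn S A d) (hS : S ⊆ Ω)
    (hsymm : ∀ x ∈ Ω, ∀ y ∈ Ω, d x y = d y x)
    (htri : ∀ x ∈ Ω, ∀ y ∈ Ω, ∀ z ∈ Ω, d x z ≤ d x y + d y z)
    (hC : ∀ x ∈ Ω, ∃ y ∈ S, d x y ≤ C) : FourPointOn Ω (A + 8 * C) d := by
  have hcomp : ∀ x ∈ Ω, ∀ y ∈ Ω, ∀ x' ∈ Ω, ∀ y' ∈ Ω, d x x' ≤ C → d y y' ≤ C →
      d x y ≤ d x' y' + 2 * C ∧ d x' y' ≤ d x y + 2 * C := by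
    intro x hx y hy x' hx' y' hy' hxx' hyy'
    constructor
    · linarith [htri x hx x' hx' y hy, htri x' hx' y' hy' y hy, hsymm y hy y' hy']
    · linarith [htri x' hx' x hx y' hy', htri x hx y hy y' hy', hsymm x hx x' hx']
  intro p hp q hq x hx w hw
  obtain ⟨p', hp', hpp'⟩ := hC p hp
  obtain ⟨q', hq', hqq'⟩ := hC q hq
  obtain ⟨x', hx', hxx'⟩ := hC x hx
  obtain ⟨w', hw', hww'⟩ := hC w hw
  have hpq := hcomp p hp q hq p' (hS hp') q' (hS hq') hpp' hqq'
  have hxw := hcomp x hx w hw x' (hS hx') w' (hS hw') hxx' hww'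
  have hpx := hcomp p hp x hx p' (hS hp') x' (hS hx') hpp' hxx'
  have hwq := hcomp w hw q hq w' (hS hw') q' (hS hq') hww' hqq'
  have hxq := hcomp x hx q hq x' (hS hx') q' (hS hq') hxx' hqq'
  have hpw := hcomp p hp w hw p' (hS hp') w' (hS hw') hpp' hww'
  exact (h p' hp' q' hq' x' hx' w' hw').imp (fun h => by linarith) fun h => by linarith

lemma mul_le_four_mul_mul_or {T a b c e f g : ℝ} (hT : 0 ≤ T) (hf : 0 ≤ f) (hg : 0 ≤ g)
    (hf₁ : f ≤ T * (a + c)) (hf₂ : f ≤ T * (e + b)) (hg₁ : g ≤ T * (a + e))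
    (hg₂ : g ≤ T * (c + b)) :
    f * g ≤ 4 * T ^ 2 * (a * b) ∨ f * g ≤ 4 * T ^ 2 * (c * e) := by
  have hle_left : ∀ {s u v : ℝ}, s ≤ T * (u + v) → v ≤ u → s ≤ 2 * T * u := fun hs huv =>
    hs.trans (by nlinarith)
  have hle_right : ∀ {s u v : ℝ}, s ≤ T * (u + v) → u ≤ v → s ≤ 2 * T * v := fun hs huv =>
    hs.trans (by nlinarith)
  have hmul : ∀ {u v : ℝ}, f ≤ 2 * T * u → g ≤ 2 * T * v → f * g ≤ 4 * T ^ 2 * (u * v) := by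
    intro u v hu hv
    calc f * g ≤ 2 * T * u * (2 * T * v) := mul_le_mul hu hv hg (hf.trans hu)
      _ = 4 * T ^ 2 * (u * v) := by ring
  have hmul' : ∀ {u v : ℝ}, f ≤ 2 * T * u → g ≤ 2 * T * v → f * g ≤ 4 * T ^ 2 * (v * u) :=
    fun hu hv => (hmul hu hv).trans_eq (by ring)
  rcases le_total a c with hac | hca <;> rcases le_total e b with heb | hbe
  · rcases le_total a e with hae | hea
    · exact .inr (hmul (hle_right hf₁ hac) (hle_right hg₁ hae))
    · exact .inl (hmul' (hle_right hf₂ heb) (hle_left hg₁ hea))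
  · rcases le_total b c with hbc | hcb
    · exact .inr (hmul' (hle_left hf₂ hbe) (hle_left hg₂ hbc))
    · exact .inr (hmul (hle_right hf₁ hac) (hle_right hg₁ (hac.trans (hcb.trans hbe))))
  · rcases le_total c b with hcb | hbc
    · exact .inl (hmul (hle_left hf₁ hca) (hle_right hg₂ hcb))
    · exact .inl (hmul' (hle_right hf₂ heb) (hle_left hg₁ (heb.trans (hbc.trans hca))))
  · rcases le_total c b with hcb | hbc
    · exact .inl (hmul (hle_left hf₁ hca) (hle_right hg₂ hcb))
    · exact .inr (hmul' (hle_left hf₂ hbe) (hle_left hg₂ hbc))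

lemma IsQuasiMetricOn.mul_le_or {Q : X → X → ℝ} (hQ : IsQuasiMetricOn S A Q)
    (hpos : ∀ x ∈ S, ∀ y ∈ S, 0 < Q x y) {p q x w : X} (hp : p ∈ S) (hq : q ∈ S) (hx : x ∈ S)
    (hw : w ∈ S) :
    Q p q * Q x w ≤ 4 * (A ^ 2) ^ 2 * (Q p x * Q w q) ∨
      Q p q * Q x w ≤ 4 * (A ^ 2) ^ 2 * (Q x q * Q p w) := by
  have hA := hQ.one_le
  have hle : ∀ {s t t' u u' : ℝ}, t' ≤ A * t → u' ≤ A * u → s ≤ A * (t' + u') →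
      s ≤ A ^ 2 * (t + u) := by
    intro s t t' u u' ht hu hs
    calc s ≤ A * (A * t + A * u) := hs.trans (by gcongr)
      _ = A ^ 2 * (t + u) := by ring
  have hself : ∀ {y z : X}, y ∈ S → z ∈ S → Q y z ≤ A * Q y z := fun hy hz =>
    le_mul_of_one_le_left (hpos _ hy _ hz).le hA
  exact mul_le_four_mul_mul_or (sq_nonneg A) (hpos p hp q hq).le (hpos x hx w hw).le
    (hle (hself hp hx) (hself hx hq) (hQ.triangle_le p hp x hx q hq))
    (hle (hself hp hw) (hself hw hq) (hQ.triangle_le p hp w hw q hq))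
    (hle (hQ.symm_le p hp x hx) (hself hp hw) (hQ.triangle_le x hx p hp w hw))
    (hle (hself hx hq) (hQ.symm_le w hw q hq) (hQ.triangle_le x hx q hq w hw))

lemma IsQuasiMetricOn.fourPointOn_of_log {Q : X → X → ℝ} {g : X → ℝ} (hQ : IsQuasiMetricOn S A Q)
    (hpos : ∀ x ∈ S, ∀ y ∈ S, 0 < Q x y)
    (hlower : ∀ x ∈ S, ∀ y ∈ S, Real.log (Q x y) - g x - g y - B ≤ d x y)
    (hupper : ∀ x ∈ S, ∀ y ∈ S, d x y ≤ Real.log (Q x y) - g x - g y + C) :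
    FourPointOn S (2 * B + 2 * C + Real.log (4 * (A ^ 2) ^ 2)) d := by
  have hA := hQ.one_le
  intro p hp q hq x hx w hw
  have hlog : ∀ {s s' t t' : ℝ}, 0 < s → 0 < s' → 0 < t → 0 < t' →
      s * s' ≤ 4 * (A ^ 2) ^ 2 * (t * t') →
      Real.log s + Real.log s' ≤ Real.log (4 * (A ^ 2) ^ 2) + (Real.log t + Real.log t') := by
    intro s s' t t' hs hs' ht ht' hle
    rw [← Real.log_mul hs.ne' hs'.ne', ← Real.log_mul ht.ne' ht'.ne',
      ← Real.log_mul (by positivity) (by positivity)]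
    exact Real.log_le_log (by positivity) hle
  have hupq := hupper p hp q hq
  have huxw := hupper x hx w hw
  refine (hQ.mul_le_or hpos hp hq hx hw).imp (fun h => ?_) fun h => ?_
  · linarith [hlower p hp x hx, hlower w hw q hq, hlog (hpos p hp q hq) (hpos x hx w hw)
      (hpos p hp x hx) (hpos w hw q hq) h]
  · linarith [hlower x hx q hq, hlower p hp w hw, hlog (hpos p hp q hq) (hpos x hx w hw)
      (hpos x hx q hq) (hpos p hp w hw) h]

end FourPoint

section Hyperbolicity

variable {E : Type*} [NormedAddCommGroup E] [NormedSpace ℂ E] {Ω K : Set E} {ρ : E → ℝ}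
  {ℓ : E → E →L[ℂ] ℂ} {a : E → E → ℂ} {η c M r : ℝ}

namespace BoundaryEstimates

lemma exists_fourPointOn_collar (H : BoundaryEstimates Ω K ρ ℓ a η c M)
    (hconn : AnalyticDiscConnected Ω) (hΩ : KobayashiBoundedAwayFrom Ω K) :
    ∃ r > 0, r ≤ η ∧ ∃ A, FourPointOn (collar Ω K r) A (kobayashi Ω) := by
  obtain ⟨A, r₀, hr₀, sys⟩ := H.exists_isPeakSystem
  obtain ⟨B, hB⟩ := sys.exists_log_sub_le_kobayashi hconn
  obtain ⟨r₁, hr₁, C, hC⟩ := H.exists_kobayashi_le_log hΩ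
  have hsub₀ : collar Ω K (min r₀ r₁) ⊆ collar Ω K r₀ := collar_mono (min_le_left _ _)
  have hsub₁ : collar Ω K (min r₀ r₁) ⊆ collar Ω K r₁ := collar_mono (min_le_right _ _)
  have hquasi := sys.isQuasiMetricOn.subset ((hsub₀.trans (collar_mono sys.r_le)).trans
    subset_union_right)
  exact ⟨_, lt_min hr₀ hr₁, (min_le_left _ _).trans sys.r_le, _,
    hquasi.fourPointOn_of_log (g := fun z => Real.log (-ρ z) / 2)
      (fun z hz w hw => sys.pos z (hsub₀ hz) w (hsub₀ hw))
      (fun z hz w hw => hB z (hsub₀ hz) w (hsub₀ hw))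
      fun z hz w hw => hC z (hsub₁ hz) w (hsub₁ hw)⟩

lemma exists_kobayashi_le_of_notMem_collar (H : BoundaryEstimates Ω K ρ ℓ a η c M)
    (hΩ : KobayashiBoundedAwayFrom Ω K) (hr : 0 < r) {o : E} (ho : o ∈ Ω) (hρ : ρ o < 0) :
    ∃ C, 0 ≤ C ∧ ∀ z ∈ Ω, z ∉ collar Ω K r → kobayashi Ω z o ≤ C := by
  have hM := H.one_le
  obtain ⟨ε, hε, hεr, hε₁, hερ⟩ : ∃ ε > 0, ε ≤ r ∧ ε ≤ 1 ∧ 2 * M * ε ≤ -ρ o := by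
    have hpos := neg_pos.2 hρ
    refine ⟨min r (min 1 (-ρ o / (2 * M))), by positivity, min_le_left _ _,
      (min_le_right _ _).trans (min_le_left _ _), ?_⟩
    rw [mul_comm, ← le_div_iff₀ (by positivity)]
    exact (min_le_right _ _).trans (min_le_right _ _)
  obtain ⟨C, hC⟩ := hΩ ε hε
  refine ⟨|C|, abs_nonneg C, fun z hz hzr => (hC z hz o ho (fun q hq => ?_) fun q hq => ?_).trans
    (le_abs_self C)⟩
  · exact hεr.trans (le_dist_of_notMem_collar hz hzr hq)
  · exact H.le_dist_of_le_neg hε₁ hερ hq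

theorem gromovHyperbolicWith (H : BoundaryEstimates Ω K ρ ℓ a η c M)
    (hconn : AnalyticDiscConnected Ω) (hΩ : KobayashiBoundedAwayFrom Ω K) :
    GromovHyperbolicWith Ω (kobayashi Ω) := by
  obtain ⟨r, hr, hrη, A, hA⟩ := H.exists_fourPointOn_collar hconn hΩ
  suffices ∃ B, FourPointOn Ω B (kobayashi Ω) from
    this.elim fun B hB => hB.gromovHyperbolicWith fun x _ y _ => kobayashi_symm Ω x y
  obtain hempty | ⟨o, ho⟩ := (collar Ω K r).eq_empty_or_nonempty
  · obtain ⟨C, hC⟩ := hΩ r hr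
    have hfar : ∀ z ∈ Ω, ∀ q ∈ K, r ≤ dist z q := fun z hz q hq =>
      le_dist_of_notMem_collar hz (by simp [hempty]) hq
    exact ⟨_, .of_le (fun x _ y _ => kobayashi_nonneg Ω x y) fun x hx y hy =>
      hC x hx y hy (hfar x hx) (hfar y hy)⟩
  · obtain ⟨C, hC0, hC⟩ := H.exists_kobayashi_le_of_notMem_collar hΩ hr ho.1
      (H.lt_zero_of_mem_collar (collar_mono hrη ho))
    refine ⟨_, hA.of_forall_exists_le (fun _ hz => hz.1) (fun x _ y _ => kobayashi_symm Ω x y)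
      (fun x hx y hy z hz => kobayashi_triangle hx hy hz) (C := C) fun x hx => ?_⟩
    by_cases hxr : x ∈ collar Ω K r
    · exact ⟨x, hxr, (kobayashi_self hx).trans_le hC0⟩
    · exact ⟨o, ho, hC x hx hxr⟩

end BoundaryEstimates

end Hyperbolicity

/-- The second derivative of `ρ` at `p` as a real bilinear form. -/
noncomputable abbrev realHessian {E : Type*} [NormedAddCommGroup E] [NormedSpace ℝ E] (ρ : E → ℝ)
    (p : E) : E →L[ℝ] E →L[ℝ] ℝ :=
  fderiv ℝ (fderiv ℝ ρ) p

section ComplexHessian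

variable {E : Type*} [NormedAddCommGroup E] [NormedSpace ℂ E]

lemma smul_eq_re_smul_add_im_smul (c : ℂ) (u : E) : c • u = c.re • u + c.im • (Complex.I • u) := by
  conv_lhs => rw [← Complex.re_add_im c]
  rw [add_smul, mul_smul, Complex.coe_smul, Complex.coe_smul]

lemma I_smul_smul_eq (c : ℂ) (u : E) :
    Complex.I • c • u = c.re • (Complex.I • u) - c.im • u := by
  rw [smul_eq_re_smul_add_im_smul c u, smul_add, smul_comm Complex.I c.re u,
    smul_comm Complex.I c.im, smul_smul Complex.I, Complex.I_mul_I, neg_one_smul, smul_neg,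
    sub_eq_add_neg]

lemma norm_I_smul (u : E) : ‖Complex.I • u‖ = ‖u‖ := by rw [norm_smul, Complex.norm_I, one_mul]

/-- The part of type `(1,1)` of a real bilinear form `B`, normalised so that the `(1,1)`-part of
the Hessian of `ρ` is the Levi form of `ρ`. -/
noncomputable def hermitianPart (B : E →L[ℝ] E →L[ℝ] ℝ) : E →ₗ[ℂ] E →ₗ⋆[ℂ] ℂ :=
  LinearMap.mk₂'ₛₗ (RingHom.id ℂ) (starRingEnd ℂ)
    (fun u v => (((B u v + B (Complex.I • u) (Complex.I • v) : ℝ) : ℂ) +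
      Complex.I * ((B u (Complex.I • v) - B (Complex.I • u) v : ℝ) : ℂ)) / 4)
    (fun u u' v => by simp only [map_add, smul_add, add_apply]; push_cast; ring)
    (fun c u v => by
      rw [I_smul_smul_eq, smul_eq_re_smul_add_im_smul c u]
      simp only [map_add, map_sub, map_smul, add_apply, sub_apply, smul_apply, smul_eq_mul,
        RingHom.id_apply]
      apply Complex.ext <;> simp <;> ring)
    (fun u v v' => by simp only [map_add, smul_add]; push_cast; ring)
    (fun c u v => by
      rw [I_smul_smul_eq, smul_eq_re_smul_add_im_smul c v]
      simp only [map_add, map_sub, map_smul, smul_eq_mul]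
      apply Complex.ext <;> simp <;> ring)

lemma hermitianPart_apply (B : E →L[ℝ] E →L[ℝ] ℝ) (u v : E) :
    hermitianPart B u v = (((B u v + B (Complex.I • u) (Complex.I • v) : ℝ) : ℂ) +
      Complex.I * ((B u (Complex.I • v) - B (Complex.I • u) v : ℝ) : ℂ)) / 4 := rfl

lemma re_hermitianPart_self (B : E →L[ℝ] E →L[ℝ] ℝ) (v : E) :
    (hermitianPart B v v).re = (B v v + B (Complex.I • v) (Complex.I • v)) / 4 := by
  rw [hermitianPart_apply]
  simp

/-- The part of type `(2,0)` of a real bilinear form `B`. -/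
noncomputable def bilinearPart (B : E →L[ℝ] E →L[ℝ] ℝ) : E →L[ℂ] E →L[ℂ] ℂ :=
  LinearMap.mkContinuous₂ (LinearMap.mk₂ ℂ
    (fun u v => (((B u v - B (Complex.I • u) (Complex.I • v) : ℝ) : ℂ) -
      Complex.I * ((B u (Complex.I • v) + B (Complex.I • u) v : ℝ) : ℂ)) / 4)
    (fun u u' v => by simp only [map_add, smul_add, add_apply]; push_cast; ring)
    (fun c u v => by
      rw [I_smul_smul_eq, smul_eq_re_smul_add_im_smul c u]
      simp only [map_add, map_sub, map_smul, add_apply, sub_apply, smul_apply, smul_eq_mul]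
      apply Complex.ext <;> simp <;> ring)
    (fun u v v' => by simp only [map_add, smul_add]; push_cast; ring)
    (fun c u v => by
      rw [I_smul_smul_eq, smul_eq_re_smul_add_im_smul c v]
      simp only [map_add, map_sub, map_smul, smul_eq_mul]
      apply Complex.ext <;> simp <;> ring)) ‖B‖ (fun u v => by
    have huv := B.le_opNorm₂ u v
    have hIuIv := B.le_opNorm₂ (Complex.I • u) (Complex.I • v)
    have huIv := B.le_opNorm₂ u (Complex.I • v)
    have hIuv := B.le_opNorm₂ (Complex.I • u) v
    simp only [norm_I_smul] at hIuIv huIv hIuv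
    rw [LinearMap.mk₂_apply, norm_div, Complex.norm_ofNat, div_le_iff₀ (by norm_num)]
    refine (norm_sub_le _ _).trans ?_
    rw [norm_mul, Complex.norm_I, one_mul, Complex.norm_real, Complex.norm_real]
    linarith [norm_sub_le (B u v) (B (Complex.I • u) (Complex.I • v)),
      norm_add_le (B u (Complex.I • v)) (B (Complex.I • u) v)])

lemma bilinearPart_apply (B : E →L[ℝ] E →L[ℝ] ℝ) (u v : E) :
    bilinearPart B u v = (((B u v - B (Complex.I • u) (Complex.I • v) : ℝ) : ℂ) -
      Complex.I * ((B u (Complex.I • v) + B (Complex.I • u) v : ℝ) : ℂ)) / 4 := rfl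

lemma re_bilinearPart_self (B : E →L[ℝ] E →L[ℝ] ℝ) (v : E) :
    (bilinearPart B v v).re = (B v v - B (Complex.I • v) (Complex.I • v)) / 4 := by
  rw [bilinearPart_apply]
  simp

lemma norm_bilinearPart_apply_le (B : E →L[ℝ] E →L[ℝ] ℝ) (u v : E) :
    ‖bilinearPart B u v‖ ≤ ‖B‖ * ‖u‖ * ‖v‖ := by
  refine ((bilinearPart B).le_opNorm₂ u v).trans ?_
  gcongr
  exact LinearMap.mkContinuous₂_norm_le _ (norm_nonneg B) _

lemma apply_self_div_two_eq (B : E →L[ℝ] E →L[ℝ] ℝ) (v : E) :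
    B v v / 2 = (bilinearPart B v v).re + (hermitianPart B v v).re := by
  rw [re_bilinearPart_self, re_hermitianPart_self]
  ring

/-- The `ℂ`-linear functional `v ↦ 2 ∑ⱼ (∂ρ/∂zⱼ)(z) vⱼ`, whose real part is the real
differential of `ρ` at `z`. -/
noncomputable def complexDifferential (ρ : E → ℝ) (z : E) : E →L[ℂ] ℂ :=
  StrongDual.extendRCLikeₗᵢ (𝕜 := ℂ) (fderiv ℝ ρ z)

lemma complexDifferential_apply (ρ : E → ℝ) (z v : E) : complexDifferential ρ z v =
    (fderiv ℝ ρ z v : ℂ) - Complex.I * (fderiv ℝ ρ z (Complex.I • v) : ℂ) := rfl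

lemma re_complexDifferential_apply (ρ : E → ℝ) (z v : E) :
    (complexDifferential ρ z v).re = fderiv ℝ ρ z v := by
  rw [complexDifferential_apply]
  simp

lemma norm_complexDifferential (ρ : E → ℝ) (z : E) :
    ‖complexDifferential ρ z‖ = ‖fderiv ℝ ρ z‖ :=
  (StrongDual.extendRCLikeₗᵢ (𝕜 := ℂ)).norm_map _

lemma norm_complexDifferential_sub (ρ : E → ℝ) (z w : E) :
    ‖complexDifferential ρ z - complexDifferential ρ w‖ = ‖fderiv ℝ ρ z - fderiv ℝ ρ w‖ := by
  rw [complexDifferential, complexDifferential,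
    ← map_sub (StrongDual.extendRCLikeₗᵢ (𝕜 := ℂ) (F := E))]
  exact (StrongDual.extendRCLikeₗᵢ (𝕜 := ℂ)).norm_map _

/-- The Levi form of `ρ` at `p` on the diagonal, in an arbitrary complex normed space. -/
noncomputable def realLeviForm (ρ : E → ℝ) (p v : E) : ℝ :=
  (hermitianPart (realHessian ρ p) v v).re

lemma realLeviForm_smul (ρ : E → ℝ) (p v : E) (ζ : ℂ) :
    realLeviForm ρ p (ζ • v) = ‖ζ‖ ^ 2 * realLeviForm ρ p v := by
  simp only [realLeviForm, map_smulₛₗ, LinearMap.smul_apply, smul_eq_mul, RingHom.id_apply]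
  rw [mul_left_comm, ← mul_assoc, Complex.mul_conj', ← Complex.ofReal_pow, Complex.re_ofReal_mul]

end ComplexHessian

section EuclideanLeviForm

variable {n : ℕ}

lemma sum_smul_stdBasis (X : EuclideanSpace ℂ (Fin n)) : ∑ j, X j • stdBasis j = X := by
  simpa [stdBasis] using (EuclideanSpace.basisFun (Fin n) ℂ).sum_repr X

lemma leviForm_eq_hermitianPart (ρ : EuclideanSpace ℂ (Fin n) → ℝ)
    (p X : EuclideanSpace ℂ (Fin n)) :
    leviForm ρ p X = hermitianPart (realHessian ρ p) X X := by
  conv_rhs => rw [← sum_smul_stdBasis X]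
  simp only [map_sum, LinearMap.sum_apply, map_smulₛₗ, LinearMap.smul_apply, leviForm, wirtinger2,
    iteratedFDeriv_two_apply, hermitianPart_apply, smul_eq_mul, RingHom.id_apply]
  rw [Finset.sum_comm]
  refine Finset.sum_congr rfl fun j _ => ?_
  rw [Finset.mul_sum]
  refine Finset.sum_congr rfl fun k _ => ?_
  simp only [Matrix.cons_val_zero, Matrix.cons_val_one]
  ring

lemma sum_wirtingerDeriv_mul (ρ : EuclideanSpace ℂ (Fin n) → ℝ)
    (p X : EuclideanSpace ℂ (Fin n)) :
    ∑ j, wirtingerDeriv ρ p j * X j = complexDifferential ρ p X / 2 := by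
  conv_rhs => rw [← sum_smul_stdBasis X]
  rw [map_sum, Finset.sum_div]
  refine Finset.sum_congr rfl fun j _ => ?_
  rw [map_smul, complexDifferential_apply, wirtingerDeriv, smul_eq_mul]
  ring

end EuclideanLeviForm

section C2Bound

variable {E : Type*} [NormedAddCommGroup E] [NormedSpace ℝ E] {f : E → ℝ} {M : ℝ}

/-- The function `f` is `C²` on the whole space, with first derivative bounded by `M ≥ 1` and
Lipschitz with constant `M`. -/
structure HasC2Bound (f : E → ℝ) (M : ℝ) : Prop where
  contDiff : ContDiff ℝ 2 f
  one_le : 1 ≤ M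
  norm_fderiv_le : ∀ z, ‖fderiv ℝ f z‖ ≤ M
  norm_fderiv_sub_le : ∀ z w, ‖fderiv ℝ f z - fderiv ℝ f w‖ ≤ M * ‖z - w‖

lemma exists_hasC2Bound (hf : ContDiff ℝ 2 f) (hcs : HasCompactSupport f) :
    ∃ M, HasC2Bound f M := by
  have hf' : ContDiff ℝ 1 (fderiv ℝ f) := hf.fderiv_right (by norm_num)
  have hcs' := hcs.fderiv ℝ
  obtain ⟨K, hK⟩ := hf'.lipschitzWith_of_hasCompactSupport hcs' one_ne_zero
  obtain ⟨C, hC⟩ := hf'.continuous.bounded_above_of_compact_support hcs'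
  refine ⟨max 1 (max K C), hf, le_max_left _ _, fun z => ?_, fun z w => ?_⟩
  · exact (hC z).trans ((le_max_right _ _).trans (le_max_right _ _))
  · refine (hK.norm_sub_le z w).trans ?_
    gcongr
    exact (le_max_left _ _).trans (le_max_right _ _)

namespace HasC2Bound

lemma pos (h : HasC2Bound f M) : 0 < M := one_pos.trans_le h.one_le

lemma differentiable (h : HasC2Bound f M) : Differentiable ℝ f :=
  h.contDiff.differentiable two_ne_zero

lemma norm_realHessian_le (h : HasC2Bound f M) (z : E) : ‖realHessian f z‖ ≤ M := by
  lift M to NNReal using h.pos.le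
  exact norm_fderiv_le_of_lipschitz ℝ (LipschitzWith.of_dist_le_mul fun z w => by
    simpa only [dist_eq_norm] using h.norm_fderiv_sub_le z w)

lemma abs_sub_sub_le (h : HasC2Bound f M) (z v : E) :
    |f (z + v) - f z - fderiv ℝ f z v| ≤ M * ‖v‖ ^ 2 := by
  have hz : z ∈ closedBall z ‖v‖ := mem_closedBall_self (norm_nonneg v)
  have hzv : z + v ∈ closedBall z ‖v‖ := by simp
  have hM := h.pos
  have hbound : ∀ x ∈ closedBall z ‖v‖, ‖fderiv ℝ f x - fderiv ℝ f z‖ ≤ M * ‖v‖ := fun x hx =>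
    (h.norm_fderiv_sub_le x z).trans (by gcongr; exact mem_closedBall_iff_norm.mp hx)
  have hmvt := (convex_closedBall z ‖v‖).norm_image_sub_le_of_norm_fderiv_le'
    (fun x _ => h.differentiable x) hbound hz hzv
  rwa [add_sub_cancel_left, mul_assoc, ← sq, Real.norm_eq_abs] at hmvt

end HasC2Bound

lemma norm_fderiv_add_sub_sub_le {F : Type*} [NormedAddCommGroup F] [NormedSpace ℝ F] {g : E → F}
    {δ ε : ℝ} (hg : Differentiable ℝ g)
    (hδ : ∀ z w, dist z w < δ → dist (fderiv ℝ g z) (fderiv ℝ g w) < ε) {z v : E} (hv : ‖v‖ < δ) :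
    ‖g (z + v) - g z - fderiv ℝ g z v‖ ≤ ε * ‖v‖ := by
  have hmvt := (convex_ball z δ).norm_image_sub_le_of_norm_fderiv_le' (fun x _ => hg x)
    (fun x hx => (dist_eq_norm (fderiv ℝ g x) _ ▸ hδ x z hx).le)
    (mem_ball_self ((norm_nonneg v).trans_lt hv)) (show z + v ∈ ball z δ by simpa using hv)
  rwa [add_sub_cancel_left] at hmvt

lemma eventually_abs_sub_sub_sub_le (hf : ContDiff ℝ 2 f) (huc : UniformContinuous (realHessian f))
    {ε : ℝ} (hε : 0 < ε) : ∀ᶠ v in 𝓝 (0 : E), ∀ z,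
      |f (z + v) - f z - fderiv ℝ f z v - realHessian f z v v / 2| ≤ ε * ‖v‖ ^ 2 := by
  obtain ⟨δ, hδ, hclose⟩ := (Metric.uniformContinuous_iff (f := realHessian f)).mp huc ε hε
  filter_upwards [ball_mem_nhds 0 hδ] with v hv z
  rw [mem_ball_zero_iff] at hv
  have hf' : Differentiable ℝ (fderiv ℝ f) :=
    (hf.fderiv_right (m := 1) (by norm_num)).differentiable one_ne_zero
  have hderiv : ∀ t : ℝ, HasDerivAt
      (fun t : ℝ => f (z + t • v) - t * fderiv ℝ f z v - t ^ 2 * (realHessian f z v v / 2))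
      ((fderiv ℝ f (z + t • v) - fderiv ℝ f z - realHessian f z (t • v)) v) t := fun t => by
    have hline : HasDerivAt (fun t : ℝ => z + t • v) v t := by
      simpa using ((hasDerivAt_id t).smul_const v).const_add z
    have hfline := (hf.differentiable two_ne_zero _).hasFDerivAt.comp_hasDerivAt t hline
    refine ((hfline.sub ((hasDerivAt_id t).mul_const _)).sub
      ((hasDerivAt_pow 2 t).mul_const _)).congr_deriv ?_
    simp only [sub_apply, map_smul, smul_apply, smul_eq_mul]
    ring
  have hbound : ∀ t ∈ Ico (0 : ℝ) 1,
      ‖(fderiv ℝ f (z + t • v) - fderiv ℝ f z - realHessian f z (t • v)) v‖ ≤ ε * ‖v‖ ^ 2 := by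
    intro t ht
    have htv : ‖t • v‖ ≤ ‖v‖ := by
      rw [norm_smul, Real.norm_of_nonneg ht.1]
      exact mul_le_of_le_one_left (norm_nonneg v) ht.2.le
    have hfst := norm_fderiv_add_sub_sub_le (z := z) hf' (fun _ _ h => hclose h) (htv.trans_lt hv)
    calc _ ≤ (ε * ‖v‖) * ‖v‖ :=
          ContinuousLinearMap.le_of_opNorm_le _ (hfst.trans (by gcongr)) v
      _ = _ := by ring
  have hmvt := norm_image_sub_le_of_norm_deriv_le_segment_01'
    (fun t _ => (hderiv t).hasDerivWithinAt) hbound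
  convert hmvt using 1
  rw [Real.norm_eq_abs]
  congr 1
  simp only [one_smul, zero_smul, add_zero]
  ring

end C2Bound

lemma exists_pos_le_add_mul_of_isCompact {X : Type*} [TopologicalSpace X] {T : Set X}
    (hT : IsCompact T) {F g : X → ℝ} (hF : Continuous F) (hg : Continuous g) (hg0 : ∀ x, 0 ≤ g x)
    (hpos : ∀ x ∈ T, g x = 0 → 0 < F x) :
    ∃ A ≥ (0 : ℝ), ∃ c > 0, ∀ x ∈ T, c ≤ F x + A * g x := by
  obtain ⟨n, hn⟩ : ∃ n : ℕ, T ⊆ {x | 0 < F x + n * g x} := by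
    refine hT.elim_directed_cover _ (fun n => isOpen_lt continuous_const (by fun_prop))
      (fun x hx => mem_iUnion.mpr ?_) (directed_of_isDirected_le fun i j hij x hx => ?_)
    · rcases (hg0 x).eq_or_lt' with hzero | hgpos
      · exact ⟨0, by simpa [hzero] using hpos x hx hzero⟩
      · obtain ⟨n, hn⟩ := exists_nat_gt (-F x / g x)
        exact ⟨n, neg_lt_iff_pos_add'.mp ((div_lt_iff₀ hgpos).mp hn)⟩
    · have : (i : ℝ) * g x ≤ j * g x := by gcongr; exact hg0 x
      exact (show 0 < F x + i * g x from hx).trans_le (by gcongr)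
  obtain ⟨c, hc, hle⟩ := hT.exists_forall_le' (hF.add (hg.const_mul (n : ℝ))).continuousOn hn
  exact ⟨n, n.cast_nonneg, c, hc, hle⟩

open scoped Manifold ContDiff in
lemma exists_contDiff_hasCompactSupport_tsupport_subset {E : Type*} [NormedAddCommGroup E]
    [NormedSpace ℝ E] [FiniteDimensional ℝ E] {K U : Set E} (hK : IsCompact K) (hU : IsOpen U)
    (hKU : K ⊆ U) {k : ℕ∞} :
    ∃ χ : E → ℝ, ContDiff ℝ k χ ∧ HasCompactSupport χ ∧ tsupport χ ⊆ U ∧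
      ∀ᶠ x in 𝓝ˢ K, χ x = 1 := by
  obtain ⟨δ, hδ, hδU⟩ := hK.exists_cthickening_subset_open hU hKU
  obtain ⟨χ, hone, hzero, -⟩ := exists_contMDiffMap_one_nhds_of_subset_interior (n := k) 𝓘(ℝ, E)
    hK.isClosed ((self_subset_thickening hδ K).trans (thickening_subset_interior_cthickening δ K))
  have hsupp : tsupport χ ⊆ cthickening δ K :=
    closure_minimal (fun x hx => by_contra fun hxK => hx (hzero x hxK)) isClosed_cthickening
  exact ⟨χ, χ.contMDiff.contDiff, hK.cthickening.of_isClosed_subset (isClosed_tsupport _) hsupp,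
    hsupp.trans hδU, hone⟩

lemma contDiff_mul_of_tsupport_subset {E : Type*} [NormedAddCommGroup E] [NormedSpace ℝ E]
    {U : Set E} {k : WithTop ℕ∞} {χ f : E → ℝ} (hχ : ContDiff ℝ k χ) (hU : IsOpen U)
    (hf : ContDiffOn ℝ k f U) (hsupp : tsupport χ ⊆ U) : ContDiff ℝ k fun z => χ z * f z := by
  refine contDiff_iff_contDiffAt.mpr fun z => ?_
  by_cases hz : z ∈ U
  · exact hχ.contDiffAt.mul (hf.contDiffAt (hU.mem_nhds hz))
  · refine (contDiffAt_const (c := (0 : ℝ))).congr_of_eventuallyEq ?_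
    filter_upwards [(isClosed_tsupport χ).isOpen_compl.mem_nhds fun h => hz (hsupp h)] with w hw
    rw [image_eq_zero_of_notMem_tsupport hw, zero_mul]

/-- The function `ρ` is a compactly supported `C²` function on the whole space, defining the
bounded set `D` near its boundary, with non-vanishing differential and with positive Levi form on
the complex tangent spaces there. -/
structure IsPseudoconvexDefiningFunction {E : Type*} [NormedAddCommGroup E] [NormedSpace ℂ E]
    (D : Set E) (ρ : E → ℝ) : Prop where
  isBounded : Bornology.IsBounded D
  contDiff : ContDiff ℝ 2 ρ
  hasCompactSupport : HasCompactSupport ρ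
  eventually_mem_iff : ∀ p ∈ frontier D, ∀ᶠ z in 𝓝 p, (z ∈ D ↔ ρ z < 0)
  fderiv_ne_zero : ∀ p ∈ frontier D, fderiv ℝ ρ p ≠ 0
  realLeviForm_pos : ∀ p ∈ frontier D, ∀ X : E, X ≠ 0 → complexDifferential ρ p X = 0 →
    0 < realLeviForm ρ p X

lemma IsStrictlyPseudoconvex.exists_isPseudoconvexDefiningFunction {n : ℕ}
    {D : Set (EuclideanSpace ℂ (Fin n))} (hD : IsStrictlyPseudoconvex D) :
    ∃ ρ, IsPseudoconvexDefiningFunction D ρ := by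
  obtain ⟨hbdd, U, ρ, hU, hfr, hρ, hne, hDU, hlevi⟩ := hD
  obtain ⟨χ, hχ, hcs, hsupp, hone⟩ := exists_contDiff_hasCompactSupport_tsupport_subset (k := 2)
    (isCompact_of_isClosed_isBounded isClosed_frontier
      (hbdd.closure.subset frontier_subset_closure)) hU hfr
  have heq : ∀ p ∈ frontier D, (fun z => χ z * ρ z) =ᶠ[𝓝 p] ρ := fun p hp => by
    filter_upwards [hone.filter_mono (nhds_le_nhdsSet hp)] with z hz
    rw [hz, one_mul]
  refine ⟨fun z => χ z * ρ z, hbdd, contDiff_mul_of_tsupport_subset hχ hU hρ hsupp,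
    hcs.mul_right, fun p hp => ?_, fun p hp => ?_, fun p hp X hX hpX => ?_⟩
  · filter_upwards [heq p hp, hU.mem_nhds (hfr hp)] with z hz hzU
    rw [hz]
    simpa [hzU] using Set.ext_iff.mp hDU z
  · rw [(heq p hp).fderiv_eq]
    exact hne p hp
  · rw [complexDifferential, (heq p hp).fderiv_eq, ← complexDifferential] at hpX
    rw [realLeviForm, realHessian, (heq p hp).fderiv.fderiv_eq, ← leviForm_eq_hermitianPart]
    exact hlevi p hp X hX (by rw [sum_wirtingerDeriv_mul, hpX, zero_div])

namespace IsPseudoconvexDefiningFunction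

variable {E : Type*} [NormedAddCommGroup E] [NormedSpace ℂ E] {D : Set E} {ρ : E → ℝ} {p : E}

lemma contDiff_fderiv (H : IsPseudoconvexDefiningFunction D ρ) : ContDiff ℝ 1 (fderiv ℝ ρ) :=
  H.contDiff.fderiv_right (by norm_num)

lemma continuous_complexDifferential (H : IsPseudoconvexDefiningFunction D ρ) :
    Continuous (complexDifferential ρ) :=
  (StrongDual.extendRCLikeₗᵢ (𝕜 := ℂ)).continuous.comp H.contDiff_fderiv.continuous

lemma continuous_realHessian (H : IsPseudoconvexDefiningFunction D ρ) :
    Continuous (realHessian ρ) :=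
  H.contDiff_fderiv.continuous_fderiv one_ne_zero

lemma uniformContinuous_realHessian (H : IsPseudoconvexDefiningFunction D ρ) :
    UniformContinuous (realHessian ρ) :=
  ((H.hasCompactSupport.fderiv ℝ).fderiv ℝ).uniformContinuous_of_continuous
    H.continuous_realHessian

lemma continuous_realLeviForm (H : IsPseudoconvexDefiningFunction D ρ) :
    Continuous fun x : E × E => realLeviForm ρ x.1 x.2 := by
  have := H.continuous_realHessian
  simp only [realLeviForm, re_hermitianPart_self]
  fun_prop

lemma isCompact_frontier [ProperSpace E] (H : IsPseudoconvexDefiningFunction D ρ) :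
    IsCompact (frontier D) :=
  isCompact_of_isClosed_isBounded isClosed_frontier
    (H.isBounded.closure.subset frontier_subset_closure)

lemma eventually_notMem_closure_of_pos (H : IsPseudoconvexDefiningFunction D ρ)
    (hp : p ∈ frontier D) : ∀ᶠ z in 𝓝 p, 0 < ρ z → z ∉ closure D := by
  filter_upwards [(H.eventually_mem_iff p hp).eventually_nhds] with z hz hpos hcl
  refine mem_closure_iff_frequently.mp hcl ?_
  filter_upwards [hz, H.contDiff.continuous.continuousAt.eventually_const_lt hpos]
    with w hw hwpos hwD using (hw.mp hwD).not_gt hwpos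

lemma eventually_nonneg_of_notMem (H : IsPseudoconvexDefiningFunction D ρ)
    (hp : p ∈ frontier D) : ∀ᶠ z in 𝓝 p, z ∉ D → 0 ≤ ρ z := by
  filter_upwards [H.eventually_mem_iff p hp] with z hz hzD
  exact not_lt.mp (mt hz.mpr hzD)

lemma eq_zero (H : IsPseudoconvexDefiningFunction D ρ) (hD : IsOpen D) (hp : p ∈ frontier D) :
    ρ p = 0 := by
  have hpD : p ∉ D := fun h => disjoint_left.mp (disjoint_frontier_iff_isOpen.mpr hD) hp h
  refine le_antisymm (not_lt.mp fun hpos => ?_)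
    ((H.eventually_nonneg_of_notMem hp).self_of_nhds hpD)
  exact (H.eventually_notMem_closure_of_pos hp).self_of_nhds hpos (frontier_subset_closure hp)

lemma exists_le_norm_complexDifferential [ProperSpace E]
    (H : IsPseudoconvexDefiningFunction D ρ) :
    ∃ m > 0, ∀ p ∈ frontier D, m ≤ ‖complexDifferential ρ p‖ :=
  H.isCompact_frontier.exists_forall_le' H.continuous_complexDifferential.norm.continuousOn
    fun p hp => by
      rw [norm_complexDifferential]
      exact norm_pos_iff.mpr (H.fderiv_ne_zero p hp)

lemma exists_le_realLeviForm_add [ProperSpace E] (H : IsPseudoconvexDefiningFunction D ρ) :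
    ∃ A ≥ (0 : ℝ), ∃ c > 0, ∀ p ∈ frontier D, ∀ v,
      c * ‖v‖ ^ 2 ≤ realLeviForm ρ p v + A * ‖complexDifferential ρ p v‖ ^ 2 := by
  have hcd := H.continuous_complexDifferential
  obtain ⟨A, hA, c, hc, hle⟩ := exists_pos_le_add_mul_of_isCompact
    (H.isCompact_frontier.prod (isCompact_sphere (0 : E) 1)) H.continuous_realLeviForm
    (g := fun x => ‖complexDifferential ρ x.1 x.2‖ ^ 2) (by fun_prop) (fun x => by positivity)
    (fun x hx hzero => H.realLeviForm_pos x.1 hx.1 x.2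
      (ne_of_mem_sphere hx.2 one_ne_zero) (norm_eq_zero.mp (sq_eq_zero_iff.mp hzero)))
  refine ⟨A, hA, c, hc, fun p hp v => ?_⟩
  rcases eq_or_ne v 0 with rfl | hv
  · simp [realLeviForm]
  obtain ⟨u, hu, hvu⟩ : ∃ u ∈ sphere (0 : E) 1, ((‖v‖ : ℝ) : ℂ) • u = v :=
    ⟨((‖v‖⁻¹ : ℝ) : ℂ) • v, by simp [norm_smul, hv], by simp [smul_smul, hv]⟩
  have hunit := hle (p, u) ⟨hp, hu⟩
  conv_rhs => rw [← hvu, realLeviForm_smul, map_smul, norm_smul]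
  rw [Complex.norm_real, norm_norm]
  calc c * ‖v‖ ^ 2 = ‖v‖ ^ 2 * c := mul_comm _ _
    _ ≤ ‖v‖ ^ 2 * (realLeviForm ρ p u + A * ‖complexDifferential ρ p u‖ ^ 2) := by gcongr
    _ = _ := by ring

end IsPseudoconvexDefiningFunction

section LeviPolynomial

variable {E : Type*} [NormedAddCommGroup E] [NormedSpace ℂ E] {ρ : E → ℝ} {A c M : ℝ} {p v : E}

/-- The negative of the Levi polynomial of `ρ` at `p`, i.e. of the holomorphic part of the second
order Taylor expansion of `ρ`, corrected by `A` times the square of its linear part. The correction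
compensates negative eigenvalues of the Levi form transverse to the boundary. -/
noncomputable def leviPolynomial (A : ℝ) (ρ : E → ℝ) (p x : E) : ℂ :=
  -(complexDifferential ρ p (x - p) + bilinearPart (realHessian ρ p) (x - p) (x - p) +
    A * complexDifferential ρ p (x - p) ^ 2)

lemma differentiable_leviPolynomial (A : ℝ) (ρ : E → ℝ) (p : E) :
    Differentiable ℂ (leviPolynomial A ρ p) := by
  unfold leviPolynomial
  fun_prop

lemma HasC2Bound.norm_leviPolynomial_add_le (h : HasC2Bound ρ M) (hA : 0 ≤ A) (p x : E) :
    ‖leviPolynomial A ρ p x + complexDifferential ρ p (x - p)‖ ≤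
      (M + A * M ^ 2) * ‖x - p‖ ^ 2 := by
  have hbil : ‖bilinearPart (realHessian ρ p) (x - p) (x - p)‖ ≤ M * ‖x - p‖ * ‖x - p‖ :=
    (norm_bilinearPart_apply_le _ _ _).trans (by gcongr; exact h.norm_realHessian_le p)
  have hlin : ‖complexDifferential ρ p (x - p)‖ ≤ M * ‖x - p‖ :=
    ContinuousLinearMap.le_of_opNorm_le _
      ((norm_complexDifferential ρ p).trans_le (h.norm_fderiv_le p)) _
  calc ‖leviPolynomial A ρ p x + complexDifferential ρ p (x - p)‖
      = ‖bilinearPart (realHessian ρ p) (x - p) (x - p) +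
          A * complexDifferential ρ p (x - p) ^ 2‖ := by
        rw [← norm_neg, leviPolynomial]
        ring_nf
    _ ≤ M * ‖x - p‖ * ‖x - p‖ + A * (M * ‖x - p‖) ^ 2 := by
        refine (norm_add_le _ _).trans ?_
        rw [norm_mul, norm_pow, Complex.norm_real, Real.norm_of_nonneg hA]
        gcongr
    _ = (M + A * M ^ 2) * ‖x - p‖ ^ 2 := by ring

lemma re_leviPolynomial_add (A : ℝ) (ρ : E → ℝ) (p v : E) :
    (leviPolynomial A ρ p (p + v)).re = -fderiv ℝ ρ p v -
      (bilinearPart (realHessian ρ p) v v).re + A * ‖complexDifferential ρ p v‖ ^ 2 -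
      2 * A * fderiv ℝ ρ p v ^ 2 := by
  rw [leviPolynomial, add_sub_cancel_left, ← re_complexDifferential_apply,
    ← Complex.normSq_eq_norm_sq, Complex.normSq_apply]
  rw [Complex.neg_re, Complex.add_re, Complex.add_re, Complex.re_ofReal_mul, sq, Complex.mul_re]
  ring

lemma HasC2Bound.two_mul_mul_sq_fderiv_le (h : HasC2Bound ρ M) (hA : 0 ≤ A) (hp : ρ p = 0)
    (hneg : ρ (p + v) ≤ 0) (hsmall : 4 * A * -ρ (p + v) ≤ 1)
    (hv : 8 * A * M ^ 2 * ‖v‖ ^ 2 ≤ c) :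
    2 * A * fderiv ℝ ρ p v ^ 2 ≤ -ρ (p + v) + c / 2 * ‖v‖ ^ 2 := by
  have htaylor := h.abs_sub_sub_le p v
  rw [hp, sub_zero, abs_sub_comm] at htaylor
  have hsq : fderiv ℝ ρ p v ^ 2 ≤ 2 * ρ (p + v) ^ 2 + 2 * (M * ‖v‖ ^ 2) ^ 2 := by
    have := sq_le_sq' (abs_le.mp htaylor).1 (abs_le.mp htaylor).2
    nlinarith [sq_nonneg (fderiv ℝ ρ p v - 2 * ρ (p + v))]
  calc 2 * A * fderiv ℝ ρ p v ^ 2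
      ≤ 2 * A * (2 * ρ (p + v) ^ 2 + 2 * (M * ‖v‖ ^ 2) ^ 2) := by gcongr
    _ = 4 * A * -ρ (p + v) * -ρ (p + v) + 8 * A * M ^ 2 * ‖v‖ ^ 2 * ‖v‖ ^ 2 / 2 := by ring
    _ ≤ 1 * -ρ (p + v) + c * ‖v‖ ^ 2 / 2 := by gcongr; linarith
    _ = -ρ (p + v) + c / 2 * ‖v‖ ^ 2 := by ring

lemma HasC2Bound.le_re_leviPolynomial (h : HasC2Bound ρ M) (hA : 0 ≤ A) (hp : ρ p = 0)
    (hneg : ρ (p + v) ≤ 0) (hsmall : 4 * A * -ρ (p + v) ≤ 1)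
    (hv : 8 * A * M ^ 2 * ‖v‖ ^ 2 ≤ c)
    (hlevi : 2 * c * ‖v‖ ^ 2 ≤ realLeviForm ρ p v + A * ‖complexDifferential ρ p v‖ ^ 2)
    (htaylor : |ρ (p + v) - ρ p - fderiv ℝ ρ p v - realHessian ρ p v v / 2| ≤
      c / 2 * ‖v‖ ^ 2) :
    c * ‖v‖ ^ 2 ≤ (leviPolynomial A ρ p (p + v)).re := by
  have hsq := h.two_mul_mul_sq_fderiv_le hA hp hneg hsmall hv
  rw [hp, apply_self_div_two_eq, ← realLeviForm] at htaylor
  rw [re_leviPolynomial_add]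
  linarith [(abs_le.mp htaylor).1]

end LeviPolynomial

lemma exists_apply_eq_neg_one {E : Type*} [NormedAddCommGroup E]
    [NormedSpace ℂ E] (l : E →L[ℂ] ℂ) {m : ℝ} (hm : 0 < m) (hl : m < ‖l‖) :
    ∃ ν, l ν = -1 ∧ ‖ν‖ ≤ m⁻¹ := by
  obtain ⟨u, hu, hlu⟩ := l.exists_lt_apply_of_lt_opNorm hl
  have hlu0 : l u ≠ 0 := norm_pos_iff.mp (hm.trans hlu)
  refine ⟨-(l u)⁻¹ • u, by simp [hlu0], ?_⟩
  rw [norm_smul, norm_neg, norm_inv]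
  calc ‖l u‖⁻¹ * ‖u‖ ≤ m⁻¹ * 1 := by gcongr
    _ = m⁻¹ := mul_one _

lemma exists_forall_dist_lt_of_eventually_nhdsSet {X : Type*} [PseudoMetricSpace X] {K : Set X}
    (hK : IsCompact K) {P : X → Prop} (hP : ∀ᶠ x in 𝓝ˢ K, P x) :
    ∃ η > 0, ∀ p ∈ K, ∀ x, dist x p < η → P x := by
  obtain ⟨η, hη, hsub⟩ := (hasBasis_nhdsSet_thickening hK).eventually_iff.mp hP
  exact ⟨η, hη, fun p hp x hx => hsub (mem_thickening_iff.mpr ⟨p, hp, hx⟩)⟩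

namespace IsPseudoconvexDefiningFunction

variable {E : Type*} [NormedAddCommGroup E] [NormedSpace ℂ E] {G L : Set E} {ρ : E → ℝ} {M : ℝ}
  {q ν : E}

/-- Moving from `x` by `2 ρ(x) ν` makes `ρ` positive, so that `Gᶜ` is entered on the way. -/
lemma eventually_exists_dist_le [FiniteDimensional ℂ E]
    (H : IsPseudoconvexDefiningFunction G ρ) (b : HasC2Bound ρ M) (hG : IsOpen G)
    (hGne : G ≠ univ) (hq : q ∈ frontier G) (hν : fderiv ℝ ρ q ν = -1) :
    ∀ᶠ x in 𝓝 q, x ∈ G → ∃ p ∈ frontier G, dist x p ≤ 2 * ‖ν‖ * -ρ x := by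
  have hρ := H.contDiff.continuous
  have hρ' := H.contDiff_fderiv.continuous
  have hρq := H.eq_zero hG hq
  have hexit : Tendsto (fun x => x + (2 * ρ x) • ν) (𝓝 q) (𝓝 q) := by
    have : Continuous fun x => x + (2 * ρ x) • ν := by fun_prop
    simpa [hρq] using this.tendsto q
  have hslope : ∀ᶠ x in 𝓝 q, fderiv ℝ ρ x ν < -(3 / 4) :=
    (hρ'.clm_apply continuous_const).continuousAt.eventually_lt_const (by simp only [hν]; norm_num)
  have hsmall : ∀ᶠ x in 𝓝 q, 4 * M * ‖ν‖ ^ 2 * -ρ x < 1 / 2 := by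
    have : Continuous fun x => 4 * M * ‖ν‖ ^ 2 * -ρ x := by fun_prop
    exact this.continuousAt.eventually_lt_const (by simp [hρq])
  filter_upwards [H.eventually_mem_iff q hq, hexit.eventually (H.eventually_mem_iff q hq), hslope,
    hsmall] with x hx hy hslope hsmall hxG
  have hneg := hx.mp hxG
  have hyG : x + (2 * ρ x) • ν ∈ Gᶜ := fun hyG => by
    have htaylor := (abs_le.mp (b.abs_sub_sub_le x ((2 * ρ x) • ν))).1
    rw [norm_smul, mul_pow, Real.norm_eq_abs, sq_abs, map_smul, smul_eq_mul] at htaylor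
    nlinarith [hy.mp hyG]
  obtain ⟨p, hp, hpx⟩ := exists_mem_frontier_infDist_compl_eq_dist hxG hGne
  refine ⟨p, hp, hpx ▸ (infDist_le_dist_of_mem hyG).trans_eq ?_⟩
  rw [dist_self_add_right, norm_smul, Real.norm_of_nonpos (by linarith)]
  ring

lemma exists_eventually_inward [ProperSpace E] (H : IsPseudoconvexDefiningFunction G ρ) :
    ∃ N > 0, ∀ᶠ z in 𝓝ˢ (frontier G), ∃ ν, complexDifferential ρ z ν = -1 ∧ ‖ν‖ ≤ N := by
  obtain ⟨m, hm, hle⟩ := H.exists_le_norm_complexDifferential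
  refine ⟨(m / 2)⁻¹, by positivity, eventually_nhdsSet_iff_forall.mpr fun p hp => ?_⟩
  filter_upwards [H.continuous_complexDifferential.norm.continuousAt.eventually_const_lt
    ((half_lt_self hm).trans_le (hle p hp))] with z hz
  exact exists_apply_eq_neg_one _ (half_pos hm) hz

lemma eventually_mem_diff_iff (H : IsPseudoconvexDefiningFunction G ρ) (hG : IsOpen G)
    (hL : IsClosed L) (hLG : L ⊆ G) :
    ∀ᶠ x in 𝓝ˢ (frontier G), (x ∈ G \ L ↔ ρ x < 0) := by
  refine eventually_nhdsSet_iff_forall.mpr fun p hp => ?_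
  have hpL : p ∉ L := fun h =>
    disjoint_left.mp (disjoint_frontier_iff_isOpen.mpr hG) hp (hLG h)
  filter_upwards [H.eventually_mem_iff p hp, hL.isOpen_compl.mem_nhds hpL] with x hx hxL
  exact (and_iff_left hxL).trans hx

lemma exists_isPeakFunction_leviPolynomial [ProperSpace E]
    (H : IsPseudoconvexDefiningFunction G ρ) (b : HasC2Bound ρ M) (hG : IsOpen G) :
    ∃ A ≥ 0, ∃ c > 0, ∃ η > 0, ∀ p ∈ frontier G, IsPeakFunction G p η c (leviPolynomial A ρ p) := by
  obtain ⟨A, hA, c, hc, hlevi⟩ := H.exists_le_realLeviForm_add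
  have htaylor := eventually_abs_sub_sub_sub_le H.contDiff H.uniformContinuous_realHessian
    (show 0 < c / 2 / 2 by positivity)
  have hv : ∀ᶠ v in 𝓝 (0 : E), 8 * A * M ^ 2 * ‖v‖ ^ 2 < c / 2 :=
    ((continuous_norm.pow 2).const_mul _).continuousAt.eventually_lt_const (by simpa using hc)
  obtain ⟨η₁, hη₁, hnear⟩ := Metric.eventually_nhds_iff.mp (htaylor.and hv)
  have hx : ∀ᶠ x in 𝓝ˢ (frontier G), (x ∈ G → ρ x < 0) ∧ 4 * A * -ρ x < 1 := by
    refine eventually_nhdsSet_iff_forall.mpr fun p hp => ?_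
    have hcont : Continuous fun x => 4 * A * -ρ x := H.contDiff.continuous.neg.const_mul _
    exact ((H.eventually_mem_iff p hp).mono fun x hx => hx.mp).and
      (hcont.continuousAt.eventually_lt_const (by simp [H.eq_zero hG hp]))
  obtain ⟨η₂, hη₂, hfar⟩ := exists_forall_dist_lt_of_eventually_nhdsSet H.isCompact_frontier hx
  refine ⟨A, hA, c / 2, half_pos hc, min η₁ η₂, lt_min hη₁ hη₂, fun p hp => ⟨half_pos hc,
    disjoint_left.mp (disjoint_frontier_iff_isOpen.mpr hG) hp,
    differentiable_leviPolynomial A ρ p, fun x hxG hxp => ?_⟩⟩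
  obtain ⟨v, rfl⟩ : ∃ v, x = p + v := ⟨x - p, (add_sub_cancel p x).symm⟩
  rw [dist_self_add_left] at hxp ⊢
  obtain ⟨htaylor, hv⟩ := hnear (y := v) (by simpa using hxp.trans_le (min_le_left _ _))
  obtain ⟨hneg, hsmall⟩ := hfar p hp (p + v) (by simpa using hxp.trans_le (min_le_right _ _))
  exact b.le_re_leviPolynomial hA (H.eq_zero hG hp) (hneg hxG).le hsmall.le hv.le
    (by simpa only [mul_div_cancel₀ c two_ne_zero] using hlevi p hp v) (htaylor p)

theorem exists_boundaryEstimates [FiniteDimensional ℂ E]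
    (H : IsPseudoconvexDefiningFunction G ρ) (hG : IsOpen G) (hGne : G ≠ univ) (hL : IsClosed L)
    (hLG : L ⊆ G) :
    ∃ a η c M, BoundaryEstimates (G \ L) (frontier G) ρ (complexDifferential ρ) a η c M := by
  have : ProperSpace E := FiniteDimensional.proper ℂ E
  obtain ⟨M, b⟩ := exists_hasC2Bound H.contDiff H.hasCompactSupport
  obtain ⟨A, hA, c, hc, η₁, hη₁, hpeak⟩ := H.exists_isPeakFunction_leviPolynomial b hG
  obtain ⟨N, hN, hinward⟩ := H.exists_eventually_inward
  have hdist : ∀ᶠ x in 𝓝ˢ (frontier G), x ∈ G → ∃ p ∈ frontier G, dist x p ≤ 2 * N * -ρ x := by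
    refine eventually_nhdsSet_iff_forall.mpr fun q hq => ?_
    obtain ⟨ν, hν, hνN⟩ := (eventually_nhdsSet_iff_forall.mp hinward q hq).self_of_nhds
    have hν' : fderiv ℝ ρ q ν = -1 := by rw [← re_complexDifferential_apply, hν]; simp
    filter_upwards [H.eventually_exists_dist_le b hG hGne hq hν', H.eventually_mem_iff q hq]
      with x hx hneg hxG
    obtain ⟨p, hp, hxp⟩ := hx hxG
    exact ⟨p, hp, hxp.trans (by gcongr; linarith [hneg.mp hxG])⟩
  obtain ⟨η₂, hη₂, hnear⟩ := exists_forall_dist_lt_of_eventually_nhdsSet H.isCompact_frontier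
    ((H.eventually_mem_diff_iff hG hL hLG).and (hinward.and hdist))
  have hM := b.pos
  have hMA : 0 ≤ A * M ^ 2 := by positivity
  have hdiam : 0 ≤ diam G := diam_nonneg
  refine ⟨leviPolynomial A ρ, min η₁ η₂, c, M + A * M ^ 2 + 2 * N + diam G, lt_min hη₁ hη₂, hc,
    by linarith [b.one_le], fun x hx y hy => ?_, fun p => H.eq_zero hG,
    fun p hp x hx => (hnear p hp x (hx.trans_le (min_le_right _ _))).1,
    fun x hx q hq hxq => ?_, fun z w => ?_, fun z => ?_, fun z v => ?_, fun p hp z hz => ?_,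
    fun p hp => (hpeak p hp).mono sdiff_subset (min_le_left _ _), fun p _ x => ?_⟩
  · linarith [dist_le_diam_of_mem H.isBounded hx.1 hy.1]
  · obtain ⟨hneg, -, hdist⟩ := hnear q hq x (hxq.trans_le (min_le_right _ _))
    obtain ⟨p, hp, hxp⟩ := hdist hx.1
    exact ⟨p, hp, hxp.trans (by gcongr <;> linarith [hneg.mp hx])⟩
  · rw [norm_complexDifferential_sub]
    exact (b.norm_fderiv_sub_le z w).trans (by gcongr; linarith)
  · rw [norm_complexDifferential]
    linarith [b.norm_fderiv_le z]
  · rw [re_complexDifferential_apply]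
    exact (b.abs_sub_sub_le z v).trans (by gcongr; linarith)
  · obtain ⟨ν, hν, hνN⟩ := (hnear p hp z (hz.trans_le (min_le_right _ _))).2.1
    exact ⟨ν, hν, by linarith⟩
  · exact (b.norm_leviPolynomial_add_le hA p x).trans
      (mul_le_mul_of_nonneg_right (by linarith) (by positivity))

end IsPseudoconvexDefiningFunction

section ExteriorDiscs

variable {E : Type*} [NormedAddCommGroup E] [NormedSpace ℂ E]

/-- A family `φ z` of entire discs centred at the points `z` which, for `z` outside `L` and close to
`q`, stay outside `L` and close to `q`, and such that `φ q` leaves `L` even if `q ∈ L`. -/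
structure IsExteriorDiscFamily (L : Set E) (q : E) (ε : ℝ) (φ : E → ℂ → E) : Prop where
  differentiable (z : E) : Differentiable ℂ (φ z)
  apply_zero (z : E) : φ z 0 = z
  continuousAt (ζ : ℂ) : ContinuousAt (fun z => φ z ζ) q
  apply_half_mem : φ q (1 / 2) ∈ Lᶜ ∩ ball q ε
  eventually_mapsTo : ∀ᶠ z in 𝓝 q, z ∉ L → MapsTo (φ z) (ball 0 1) (Lᶜ ∩ ball q ε)

/-- Existence of arbitrarily small families of discs attached to `L` from outside at each of its
boundary points. This is the only property of `closure D` needed to see that `Lᶜ` is connected and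
that its Kobayashi distance stays bounded near `L`. -/
def HasExteriorDiscs (L : Set E) : Prop :=
  ∀ q ∈ frontier L, ∀ ε > 0, ∃ φ, IsExteriorDiscFamily L q ε φ

end ExteriorDiscs

section SecondOrderDiscs

variable {E : Type*} [NormedAddCommGroup E] [NormedSpace ℂ E] {D : Set E} {ρ : E → ℝ}
  {X Y : E → E} {M ε : ℝ} {p z w y : E}

/-- The second order term `y` compensates the pluriharmonic part of `ρ` along `w`, so that only the
Levi form contributes to second order. -/
lemma HasC2Bound.add_realLeviForm_sub_le (b : HasC2Bound ρ M)
    (hw : complexDifferential ρ z w = 0)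
    (hy : complexDifferential ρ z y = -bilinearPart (realHessian ρ z) w w)
    (htaylor : |ρ (z + (w + y)) - ρ z - fderiv ℝ ρ z (w + y) -
      realHessian ρ z (w + y) (w + y) / 2| ≤ ε * ‖w + y‖ ^ 2) :
    ρ z + realLeviForm ρ z w - M * (‖w‖ * ‖y‖ + ‖y‖ ^ 2 / 2) - ε * ‖w + y‖ ^ 2 ≤
      ρ (z + (w + y)) := by
  have hlin : fderiv ℝ ρ z (w + y) = -(bilinearPart (realHessian ρ z) w w).re := by
    rw [← re_complexDifferential_apply, map_add, hw, hy, zero_add, Complex.neg_re]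
  have hquad : realHessian ρ z (w + y) (w + y) / 2 = (bilinearPart (realHessian ρ z) w w).re +
      realLeviForm ρ z w +
        (realHessian ρ z w y + realHessian ρ z y w + realHessian ρ z y y) / 2 := by
    rw [realLeviForm, ← apply_self_div_two_eq]
    simp only [map_add, add_apply]
    ring
  have hbound (u v : E) : -(M * ‖u‖ * ‖v‖) ≤ realHessian ρ z u v :=
    (abs_le.mp (((realHessian ρ z).le_opNorm₂ u v).trans
      (by gcongr; exact b.norm_realHessian_le z))).1
  rw [hlin, hquad] at htaylor
  linarith [hbound w y, hbound y w, hbound y y, (abs_le.mp htaylor).1]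

lemma tendsto_smul_add_sq_smul (hX : ContinuousAt X p) (hY : ContinuousAt Y p) :
    Tendsto (fun x : E × ℂ => x.2 • X x.1 + x.2 ^ 2 • Y x.1) (𝓝 (p, 0)) (𝓝 0) := by
  have hX' : ContinuousAt (fun x : E × ℂ => X x.1) (p, 0) := hX.comp continuousAt_fst
  have hY' : ContinuousAt (fun x : E × ℂ => Y x.1) (p, 0) := hY.comp continuousAt_fst
  simpa using ((continuousAt_snd.smul hX').tendsto.add
    ((continuousAt_snd.pow 2).smul hY').tendsto)

namespace IsPseudoconvexDefiningFunction

lemma continuous_bilinearPart_realHessian (H : IsPseudoconvexDefiningFunction D ρ) :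
    Continuous fun x : E × E => bilinearPart (realHessian ρ x.1) x.2 x.2 := by
  have := H.continuous_realHessian
  simp only [bilinearPart_apply]
  fun_prop

lemma complexDifferential_ne_zero (H : IsPseudoconvexDefiningFunction D ρ) (hp : p ∈ frontier D) :
    complexDifferential ρ p ≠ 0 := by
  rw [← norm_ne_zero_iff, norm_complexDifferential, norm_ne_zero_iff]
  exact H.fderiv_ne_zero p hp

lemma exists_tangent_fields (H : IsPseudoconvexDefiningFunction D ρ)
    (hE : 1 < Module.finrank ℂ E) (hp : p ∈ frontier D) :
    ∃ X Y : E → E, ContinuousAt X p ∧ ContinuousAt Y p ∧ 0 < realLeviForm ρ p (X p) ∧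
      ∀ᶠ z in 𝓝 p, complexDifferential ρ z (X z) = 0 ∧
        complexDifferential ρ z (Y z) = -bilinearPart (realHessian ρ z) (X z) (X z) := by
  obtain ⟨X₀, hX₀, hX₀ne⟩ : ∃ X₀ ∈ LinearMap.ker (complexDifferential ρ p : E →ₗ[ℂ] ℂ), X₀ ≠ 0 := by
    have : FiniteDimensional ℂ E := FiniteDimensional.of_finrank_pos (by omega)
    exact Submodule.exists_mem_ne_zero_of_ne_bot
      (LinearMap.ker_ne_bot_of_finrank_lt (by simpa using hE))
  obtain ⟨ν, hν⟩ : ∃ ν, complexDifferential ρ p ν ≠ 0 :=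
    DFunLike.ne_iff.mp (H.complexDifferential_ne_zero hp)
  have happly (v : E) : Continuous fun z => complexDifferential ρ z v :=
    H.continuous_complexDifferential.clm_apply continuous_const
  let X (z : E) : E := X₀ - (complexDifferential ρ z X₀ / complexDifferential ρ z ν) • ν
  have hX : ContinuousAt X p := continuousAt_const.sub
    (((happly X₀).continuousAt.div (happly ν).continuousAt hν).smul continuousAt_const)
  have hbil : ContinuousAt (fun z => bilinearPart (realHessian ρ z) (X z) (X z)) p :=
    (H.continuous_bilinearPart_realHessian.continuousAt (x := (p, X p))).comp
      (f := fun z => (z, X z)) (continuousAt_id.prodMk hX)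
  have hXp : X p = X₀ := by simp [X, show complexDifferential ρ p X₀ = 0 from hX₀]
  refine ⟨X, fun z => -(bilinearPart (realHessian ρ z) (X z) (X z) /
    complexDifferential ρ z ν) • ν, hX,
    ((hbil.div (happly ν).continuousAt hν).neg).smul continuousAt_const,
    by rw [hXp]; exact H.realLeviForm_pos p hp X₀ hX₀ne hX₀, ?_⟩
  filter_upwards [(happly ν).continuousAt.eventually_ne hν] with z hz
  exact ⟨by simp [X, hz], by simp [hz]⟩

lemma exists_eventually_add_mul_sq_le (H : IsPseudoconvexDefiningFunction D ρ)
    (hX : ContinuousAt X p) (hY : ContinuousAt Y p) (hpos : 0 < realLeviForm ρ p (X p))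
    (hXY : ∀ᶠ z in 𝓝 p, complexDifferential ρ z (X z) = 0 ∧
      complexDifferential ρ z (Y z) = -bilinearPart (realHessian ρ z) (X z) (X z)) :
    ∃ s > 0, ∀ᶠ x : E × ℂ in 𝓝 (p, 0),
      ρ x.1 + s * ‖x.2‖ ^ 2 ≤ ρ (x.1 + (x.2 • X x.1 + x.2 ^ 2 • Y x.1)) := by
  obtain ⟨M, b⟩ := exists_hasC2Bound H.contDiff H.hasCompactSupport
  obtain ⟨ε, hε, hεX⟩ := exists_pos_mul_lt hpos (‖X p‖ ^ 2)
  have hX' : ContinuousAt (fun x : E × ℂ => X x.1) (p, 0) := hX.comp continuousAt_fst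
  have : ContinuousAt (fun x : E × ℂ => Y x.1) (p, 0) := hY.comp continuousAt_fst
  have hlevi : ContinuousAt (fun x : E × ℂ => realLeviForm ρ x.1 (X x.1)) (p, 0) :=
    ContinuousAt.comp (f := fun x : E × ℂ => (x.1, X x.1))
      (g := fun x : E × E => realLeviForm ρ x.1 x.2) H.continuous_realLeviForm.continuousAt
      (continuousAt_fst.prodMk hX')
  have hcoeff : ContinuousAt (fun x : E × ℂ => realLeviForm ρ x.1 (X x.1) -
      M * (‖x.2‖ * ‖X x.1‖ * ‖Y x.1‖ + ‖x.2‖ ^ 2 * ‖Y x.1‖ ^ 2 / 2) -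
      ε * ‖X x.1 + x.2 • Y x.1‖ ^ 2) (p, 0) := by fun_prop
  obtain ⟨s, hs, hsX⟩ := exists_between (sub_pos.mpr hεX)
  refine ⟨s, hs, ?_⟩
  filter_upwards [continuousAt_fst.eventually hXY,
    hcoeff.eventually_const_lt (show s < _ by simpa [mul_comm] using hsX),
    (tendsto_smul_add_sq_smul hX hY).eventually
      (eventually_abs_sub_sub_sub_le H.contDiff H.uniformContinuous_realHessian hε)]
    with x ⟨hXx, hYx⟩ hcoeff htaylor
  have hlower := b.add_realLeviForm_sub_le (w := x.2 • X x.1) (y := x.2 ^ 2 • Y x.1)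
    (by rw [map_smul, hXx, smul_zero])
    (by simp only [map_smul, smul_apply, hYx, smul_eq_mul]; ring) (htaylor x.1)
  refine le_trans ?_ hlower
  rw [show x.2 • X x.1 + x.2 ^ 2 • Y x.1 = x.2 • (X x.1 + x.2 • Y x.1) by module]
  simp only [realLeviForm_smul, norm_smul, norm_pow]
  nlinarith [sq_nonneg ‖x.2‖]

lemma exists_isExteriorDiscFamily (H : IsPseudoconvexDefiningFunction D ρ) (hD : IsOpen D)
    (hE : 1 < Module.finrank ℂ E) (hp : p ∈ frontier D) (hε : 0 < ε) :
    ∃ φ, IsExteriorDiscFamily (closure D) p ε φ := by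
  obtain ⟨X, Y, hX, hY, hpos, hXY⟩ := H.exists_tangent_fields hE hp
  obtain ⟨s, hs, hlower⟩ := H.exists_eventually_add_mul_sq_le hX hY hpos hXY
  let ψ (z : E) (ζ : ℂ) : E := z + (ζ • X z + ζ ^ 2 • Y z)
  have hψ : Tendsto (fun x : E × ℂ => ψ x.1 x.2) (𝓝 (p, 0)) (𝓝 p) := by
    simpa only [add_zero] using
      continuousAt_fst.tendsto.add (tendsto_smul_add_sq_smul hX hY)
  have hnear := hlower.and (hψ.eventually
    ((H.eventually_notMem_closure_of_pos hp).and (ball_mem_nhds p hε)))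
  rw [nhds_prod_eq] at hnear
  obtain ⟨P, hP, Q, hQ, hPQ⟩ := eventually_prod_iff.mp hnear
  obtain ⟨r, hr, hrQ⟩ := Metric.eventually_nhds_iff.mp hQ
  have hmem {z : E} (hz : P z) (hρ : 0 ≤ ρ z) {ζ : ℂ} (hζ : ζ ∈ ball 0 1) :
      ψ z (r * ζ) ∈ ball p ε ∧ (ζ ≠ 0 → ψ z (r * ζ) ∉ closure D) := by
    have hrζ : dist (r * ζ) 0 < r := by
      rw [dist_zero_right, norm_mul, Complex.norm_real, Real.norm_of_nonneg hr.le]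
      exact mul_lt_of_lt_one_right hr (by simpa using hζ)
    obtain ⟨hlower, hout, hball⟩ := hPQ hz (hrQ hrζ)
    refine ⟨hball, fun hζ0 => hout (lt_of_lt_of_le ?_ hlower)⟩
    have : 0 < ‖r * ζ‖ := norm_pos_iff.mpr (mul_ne_zero (by exact_mod_cast hr.ne') hζ0)
    positivity
  refine ⟨fun z ζ => ψ z (r * ζ), fun z => by fun_prop, fun z => by simp [ψ], fun ζ => ?_, ?_, ?_⟩
  · exact continuousAt_id.add ((hX.const_smul _).add (hY.const_smul _))
  · obtain ⟨hball, hout⟩ := hmem hP.self_of_nhds (H.eq_zero hD hp).ge (ζ := 1 / 2) (by norm_num)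
    exact ⟨hout (by norm_num), hball⟩
  · filter_upwards [hP, H.eventually_nonneg_of_notMem hp] with z hz hρ hzD ζ hζ
    obtain ⟨hball, hout⟩ := hmem hz (hρ fun h => hzD (subset_closure h)) hζ
    refine ⟨?_, hball⟩
    rcases eq_or_ne ζ 0 with rfl | hζ0
    · simpa [ψ] using hzD
    · exact hout hζ0

theorem hasExteriorDiscs_closure (H : IsPseudoconvexDefiningFunction D ρ) (hD : IsOpen D)
    (hE : 1 < Module.finrank ℂ E) : HasExteriorDiscs (closure D) :=
  fun _ hq _ hε => H.exists_isExteriorDiscFamily hD hE (frontier_closure_subset hq) hε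

end IsPseudoconvexDefiningFunction

end SecondOrderDiscs

section KobayashiBound

variable {E : Type*} [NormedAddCommGroup E] [NormedSpace ℂ E] {Ω G L : Set E} {w y z : E} {R : ℝ}

lemma kobayashi_le_of_dist_lt (hR : ball y R ⊆ Ω) (hz : dist y z < R / 2) :
    kobayashi Ω y z ≤ artanh (1 / 2) := by
  have hdisc : IsAnalyticDisc Ω fun ζ : ℂ => y + ζ • (2 : ℂ) • (z - y) := by
    refine ⟨by fun_prop, fun ζ hζ => hR ?_⟩
    rw [mem_ball_zero_iff] at hζ
    rw [dist_eq_norm_sub'] at hz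
    rw [mem_ball, dist_self_add_left, norm_smul, norm_smul, Complex.norm_ofNat]
    nlinarith [norm_nonneg (z - y)]
  simpa [smul_smul] using hdisc.kobayashi_le (α := 1 / 2) (by norm_num)

namespace IsExteriorDiscFamily

variable {ε : ℝ} {φ : E → ℂ → E}

lemma eventually_kobayashi_le (h : IsExteriorDiscFamily L w ε φ) (hL : IsClosed L)
    (hG : IsOpen G) (hε : ball w ε ⊆ G) :
    ∀ᶠ z in 𝓝 w, z ∈ G \ L →
      kobayashi (G \ L) z (φ w (1 / 2)) ≤ artanh (1 / 2) + artanh (1 / 2) := by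
  have hy : φ w (1 / 2) ∈ G \ L := ⟨hε h.apply_half_mem.2, h.apply_half_mem.1⟩
  obtain ⟨R, hR, hRΩ⟩ := Metric.isOpen_iff.mp (hG.sdiff hL) _ hy
  filter_upwards [h.eventually_mapsTo,
    (h.continuousAt (1 / 2)).eventually (ball_mem_nhds _ (half_pos hR))] with z hmaps hdist hz
  have hdisc : IsAnalyticDisc (G \ L) (φ z) :=
    ⟨(h.differentiable z).differentiableOn,
      fun ζ hζ => ⟨hε (hmaps hz.2 hζ).2, (hmaps hz.2 hζ).1⟩⟩
  have hfirst := hdisc.kobayashi_le (α := 1 / 2) (by norm_num)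
  have hsecond := kobayashi_le_of_dist_lt hRΩ (mem_ball'.mp hdist)
  rw [kobayashi_symm] at hsecond
  rw [h.apply_zero, show ‖(1 / 2 : ℂ)‖ = 1 / 2 by norm_num] at hfirst
  linarith [kobayashi_triangle hz (hdisc.mem (α := 1 / 2) (by norm_num)) hy]

end IsExteriorDiscFamily

namespace HasExteriorDiscs

lemma exists_eventually_kobayashi_le (h : HasExteriorDiscs L) (hL : IsClosed L) (hG : IsOpen G)
    (hw : w ∈ G) (hwL : w ∉ interior L) :
    ∃ y ∈ G \ L, ∃ C, ∀ᶠ z in 𝓝 w, z ∈ G \ L → kobayashi (G \ L) z y ≤ C := by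
  by_cases hwL' : w ∈ L
  · obtain ⟨ε, hε, hεG⟩ := Metric.isOpen_iff.mp hG w hw
    obtain ⟨φ, hφ⟩ := h w (hL.frontier_eq ▸ ⟨hwL', hwL⟩) ε hε
    exact ⟨φ w (1 / 2), ⟨hεG hφ.apply_half_mem.2, hφ.apply_half_mem.1⟩, _,
      hφ.eventually_kobayashi_le hL hG hεG⟩
  · obtain ⟨R, hR, hRΩ⟩ := Metric.isOpen_iff.mp (hG.sdiff hL) w ⟨hw, hwL'⟩
    refine ⟨w, ⟨hw, hwL'⟩, artanh (1 / 2), ?_⟩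
    filter_upwards [ball_mem_nhds w (half_pos hR)] with z hz _
    rw [kobayashi_symm]
    exact kobayashi_le_of_dist_lt hRΩ (mem_ball'.mp hz)

lemma bddAbove_kobayashi_image (h : HasExteriorDiscs L) (hL : IsClosed L) (hG : IsOpen G)
    {K : Set E} (hK : IsCompact K) (hKG : K ⊆ G \ interior L) (hz : z ∈ G \ L) :
    BddAbove ((kobayashi (G \ L) · z) '' (K ∩ (G \ L))) := by
  refine hK.induction_on (p := fun s => BddAbove ((kobayashi (G \ L) · z) '' (s ∩ (G \ L))))
    (by simp) (fun s t hst ht => ht.mono (by gcongr)) (fun s t hs ht => ?_) fun w hw => ?_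
  · rw [union_inter_distrib_right, image_union]
    exact hs.union ht
  · obtain ⟨y, hy, C, hC⟩ := h.exists_eventually_kobayashi_le hL hG (hKG hw).1 (hKG hw).2
    refine ⟨_, mem_nhdsWithin_of_mem_nhds hC, C + kobayashi (G \ L) y z, ?_⟩
    rintro _ ⟨x, ⟨hxC, hx⟩, rfl⟩
    exact (kobayashi_triangle hx hy hz).trans (by gcongr; exact hxC hx)

theorem kobayashiBoundedAwayFrom [ProperSpace E] (h : HasExteriorDiscs L) (hL : IsClosed L)
    (hG : IsOpen G) (hGb : Bornology.IsBounded G) :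
    KobayashiBoundedAwayFrom (G \ L) (frontier G) := by
  intro ε hε
  rcases (G \ L).eq_empty_or_nonempty with hempty | ⟨z, hz⟩
  · exact ⟨0, by simp [hempty]⟩
  have hK : IsCompact (closure (G \ L) \ thickening ε (frontier G)) :=
    (hGb.subset sdiff_subset).isCompact_closure.diff isOpen_thickening
  have hKG : closure (G \ L) \ thickening ε (frontier G) ⊆ G \ interior L := by
    refine fun x hx => ⟨?_, fun hxL => ?_⟩
    · by_contra hxG
      exact hx.2 (self_subset_thickening hε _
        (hG.frontier_eq ▸ ⟨closure_mono sdiff_subset hx.1, hxG⟩))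
    · obtain ⟨y, hyL, hy⟩ := mem_closure_iff.mp hx.1 _ isOpen_interior hxL
      exact hy.2 (interior_subset hyL)
  obtain ⟨C, hC⟩ := h.bddAbove_kobayashi_image hL hG hK hKG hz
  have hbound {x : E} (hx : x ∈ G \ L) (hxε : ∀ q ∈ frontier G, ε ≤ dist x q) :
      kobayashi (G \ L) x z ≤ C := by
    refine hC ⟨x, ⟨⟨subset_closure hx, fun hx => ?_⟩, hx⟩, rfl⟩
    obtain ⟨q, hq, hxq⟩ := mem_thickening_iff.mp hx
    exact (hxε q hq).not_gt hxq
  refine ⟨C + C, fun x hx y hy hxε hyε => (kobayashi_triangle hx hz hy).trans ?_⟩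
  rw [kobayashi_symm _ z y]
  exact add_le_add (hbound hx hxε) (hbound hy hyε)

end HasExteriorDiscs

end KobayashiBound

section Intersection

lemma sub_eq_sub_of_coe_addCircle_eq {X : Type*} [TopologicalSpace X] {S : Set X}
    (hS : IsPreconnected S) {f g : X → ℝ} (hf : ContinuousOn f S) (hg : ContinuousOn g S)
    (hfg : ∀ x ∈ S, (f x : UnitAddCircle) = g x) {a b : X} (ha : a ∈ S) (hb : b ∈ S) :
    f b - g b = f a - g a := by
  have hlift : S.EqOn (fun x => f x - g x) fun _ => f a - g a :=
    (AddCircle.isCoveringMap_coe (1 : ℝ)).eqOn_of_comp_eqOn hS (hf.sub hg) continuousOn_const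
      (fun x hx => by simp [hfg x hx, hfg a ha]) ha rfl
  exact hlift hb

variable {E : Type*} [NormedAddCommGroup E] [NormedSpace ℝ E] {G W : Set E}

/-- A continuous map to the circle which is only given locally, by real representatives on `G` and
on `W`, lifts to the line because `E` is simply connected. -/
lemma exists_continuous_coe_addCircle_eq (hG : IsOpen G) (hW : IsOpen W) (hGW : G ∪ W = univ)
    {f g : E → ℝ} (hf : ContinuousOn f G) (hg : ContinuousOn g W)
    (hfg : ∀ x, (f x : UnitAddCircle) = g x) :
    ∃ θ : E → ℝ, Continuous θ ∧ ∀ x, (θ x : UnitAddCircle) = f x := by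
  have hcont : Continuous fun x => (f x : UnitAddCircle) := by
    rw [← continuousOn_univ, ← hGW]
    have hcoe : Continuous ((↑) : ℝ → UnitAddCircle) := AddCircle.continuous_mk' 1
    refine ContinuousOn.union_of_isOpen (hcoe.comp_continuousOn hf) ?_ hG hW
    simpa only [hfg, Function.comp_def] using hcoe.comp_continuousOn hg
  obtain ⟨θ, ⟨-, hθ⟩, -⟩ := (AddCircle.isCoveringMap_coe (1 : ℝ)).existsUnique_continuousMap_lifts
    ⟨_, hcont⟩ (0 : E) (f 0) rfl
  exact ⟨θ, θ.continuous, fun x => congrFun hθ x⟩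

lemma continuousOn_indicator_of_eqOn_zero {X : Type*} [TopologicalSpace X] {A B U Z : Set X}
    {χ : X → ℝ} (hχ : Continuous χ) (hχZ : EqOn χ 0 Z) (hA : IsOpen A) (hB : IsOpen B)
    (hAB : Disjoint A B) (hU : U ⊆ A ∪ B ∪ Z) : ContinuousOn (B.indicator χ) U := by
  classical
  refine ContinuousOn.piecewise (fun x hx => hχZ ((hU hx.1).resolve_left ?_)) hχ.continuousOn
    continuousOn_const
  rintro (hxA | hxB)
  · exact (hAB.symm.closure_left hA).le_bot ⟨frontier_subset_closure hx.2, hxA⟩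
  · exact (hB.frontier_eq ▸ hx.2).2 hxB

omit [NormedAddCommGroup E] [NormedSpace ℝ E] in
lemma isPreconnected_of_isOpen_of_forall_disjoint [TopologicalSpace E] (hG : IsOpen G)
    (h : ∀ A B, IsOpen A → IsOpen B → Disjoint A B → A ∪ B = G → A = ∅ ∨ B = ∅) :
    IsPreconnected G := by
  rw [isPreconnected_iff_subset_of_disjoint]
  intro u v hu hv hGuv huv
  have hdisj : Disjoint (G ∩ u) (G ∩ v) := by
    rwa [disjoint_iff_inter_eq_empty, ← inter_inter_distrib_left]
  have hcover : G ∩ u ∪ G ∩ v = G := by rwa [← inter_union_distrib_left, inter_eq_left]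
  rcases h _ _ (hG.inter hu) (hG.inter hv) hdisj hcover with hempty | hempty
  · exact Or.inr (inter_eq_left.mp (by simpa [hempty] using hcover))
  · exact Or.inl (inter_eq_left.mp (by simpa [hempty] using hcover))

/-- If `G ∩ W` were split into `A` and `B`, there would be a circle-valued map on `E` that winds
once around along a loop passing through `G`, `A`, `W`, `B`, contradicting the existence of a lift
to the line. -/
theorem isPreconnected_inter_of_union_eq_univ (hG : IsOpen G) (hW : IsOpen W)
    (hGc : IsPreconnected G) (hWc : IsPreconnected W) (hGW : G ∪ W = univ) :
    IsPreconnected (G ∩ W) := by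
  refine isPreconnected_of_isOpen_of_forall_disjoint (hG.inter hW) fun A B hA hB hAB hABU => ?_
  by_contra! hne
  obtain ⟨⟨a, ha⟩, b, hb⟩ := hne
  have haB : a ∉ B := hAB.notMem_of_mem_left ha
  have haGW : a ∈ G ∩ W := hABU ▸ Or.inl ha
  have hbGW : b ∈ G ∩ W := hABU ▸ Or.inr hb
  have hdisj : Disjoint Wᶜ Gᶜ :=
    disjoint_compl_left_iff_subset.mpr (compl_subset_iff_union.mpr hGW)
  obtain ⟨χ, hχW, hχG, -⟩ :=
    exists_continuous_zero_one_of_isClosed hW.isClosed_compl hG.isClosed_compl hdisj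
  have hψ : ContinuousOn (B.indicator χ) G :=
    continuousOn_indicator_of_eqOn_zero χ.continuous hχW hA hB hAB
      (by rw [hABU, inter_union_distrib_right]; simp)
  have hψ' : ContinuousOn (B.indicator fun x => χ x - 1) W :=
    continuousOn_indicator_of_eqOn_zero (χ.continuous.sub continuous_const)
      (Z := Gᶜ) (fun x hx => by simp [hχG hx]) hA hB hAB
      (by rw [hABU, inter_union_distrib_right]; simp)
  have hcoe (x : E) : ((B.indicator χ x : ℝ) : UnitAddCircle) =
      (B.indicator (fun x => χ x - 1) x : ℝ) := by
    by_cases hx : x ∈ B <;> simp [hx, AddCircle.coe_period]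
  obtain ⟨θ, hθ, hθψ⟩ := exists_continuous_coe_addCircle_eq hG hW hGW hψ hψ' hcoe
  have hθG := sub_eq_sub_of_coe_addCircle_eq hGc hθ.continuousOn hψ (fun x _ => hθψ x)
    haGW.1 hbGW.1
  have hθW := sub_eq_sub_of_coe_addCircle_eq hWc hθ.continuousOn hψ'
    (fun x _ => (hθψ x).trans (hcoe x)) haGW.2 hbGW.2
  simp only [haB, hb, indicator_of_mem, indicator_of_notMem, not_false_eq_true] at hθG hθW
  linarith

end Intersection

section Exterior

lemma isPreconnected_compl_closedBall {E : Type*} [NormedAddCommGroup E] [NormedSpace ℝ E]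
    (hE : 1 < Module.rank ℝ E) {R : ℝ} (hR : 0 ≤ R) : IsPreconnected (closedBall (0 : E) R)ᶜ := by
  have himage : (fun p : E × ℝ => p.2 • p.1) '' (sphere (0 : E) 1 ×ˢ Ioi R) =
      (closedBall (0 : E) R)ᶜ := by
    ext x
    simp only [mem_image, mem_prod, mem_sphere_zero_iff_norm, mem_Ioi, Prod.exists, mem_compl_iff,
      mem_closedBall_zero_iff, not_le]
    constructor
    · rintro ⟨y, t, ⟨hy, ht⟩, rfl⟩
      rwa [norm_smul, hy, mul_one, Real.norm_of_nonneg (hR.trans ht.le)]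
    · intro hx
      have : ‖x‖ ≠ 0 := (hR.trans_lt hx).ne'
      exact ⟨‖x‖⁻¹ • x, ‖x‖, ⟨norm_smul_inv_norm (𝕜 := ℝ) (norm_ne_zero_iff.mp this), hx⟩,
        smul_inv_smul₀ this x⟩
  rw [← himage]
  exact ((isPreconnected_sphere hE 0 1).prod isPreconnected_Ioi).image _
    (by fun_prop)

variable {E : Type*} [NormedAddCommGroup E] [NormedSpace ℂ E] {G L S T : Set E} {p : E}

lemma exists_mem_closure_forall_apply_half_eq [ProperSpace E] [StrictConvexSpace ℝ E]
    (hS : Bornology.IsBounded S) (hSne : S.Nonempty) :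
    ∃ p ∈ closure S, ∀ f : ℂ → E, DifferentiableOn ℂ f (ball 0 1) →
      MapsTo f (ball 0 1) (closure S) → f 0 = p → f (1 / 2) = p := by
  obtain ⟨p, hp, hmax⟩ :=
    hS.isCompact_closure.exists_isMaxOn hSne.closure continuous_norm.continuousOn
  refine ⟨p, hp, fun f hf hmaps hf0 => ?_⟩
  have hconst := Complex.eqOn_of_isPreconnected_of_isMaxOn_norm (f := f)
    (isPreconnected_ball (x := (0 : ℂ))) isOpen_ball hf (mem_ball_self one_pos)
    fun ζ hζ => by simpa [hf0] using hmax (hmaps hζ)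
  exact (hconst (show (1 / 2 : ℂ) ∈ ball 0 1 by norm_num)).trans hf0

lemma notMem_of_isOpen_of_forall_apply_half_eq [Nontrivial E] (hS : IsOpen S)
    (hp : ∀ f : ℂ → E, DifferentiableOn ℂ f (ball 0 1) →
      MapsTo f (ball 0 1) (closure S) → f 0 = p → f (1 / 2) = p) : p ∉ S := by
  intro hpS
  obtain ⟨r, hr, hrS⟩ := Metric.isOpen_iff.mp hS p hpS
  obtain ⟨w, hw⟩ := exists_norm_eq E (half_pos hr).le
  have hdisc : MapsTo (fun ζ : ℂ => p + ζ • w) (ball 0 1) (closure S) := fun ζ hζ => by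
    rw [mem_ball_zero_iff] at hζ
    refine subset_closure (hrS ?_)
    rw [mem_ball, dist_self_add_left, norm_smul, hw]
    nlinarith
  have hw0 := hp _ (by fun_prop) hdisc (by simp)
  simp only [add_eq_left, smul_eq_zero, one_div, inv_eq_zero, OfNat.ofNat_ne_zero, false_or] at hw0
  rw [hw0, norm_zero] at hw
  linarith

lemma HasExteriorDiscs.eq_empty_of_isBounded [ProperSpace E] [StrictConvexSpace ℝ E] [Nontrivial E]
    (h : HasExteriorDiscs L) (hL : IsClosed L) (hS : IsOpen S) (hT : IsOpen T)
    (hST : Disjoint S T) (hSTL : S ∪ T = Lᶜ) (hSb : Bornology.IsBounded S) : S = ∅ := by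
  by_contra hne
  obtain ⟨p, hp, hconst⟩ :=
    exists_mem_closure_forall_apply_half_eq hSb (nonempty_iff_ne_empty.mpr hne)
  have hpS : p ∉ S := notMem_of_isOpen_of_forall_apply_half_eq hS hconst
  have hpT : p ∉ T := fun hpT => (hST.closure_left hT).le_bot ⟨hp, hpT⟩
  have hSL : S ⊆ Lᶜ := hSTL ▸ subset_union_left
  have hpL : p ∈ frontier L := by
    rw [← frontier_compl, hL.isOpen_compl.frontier_eq, ← hSTL]
    exact ⟨closure_mono subset_union_left hp, fun hpST => hpST.elim hpS hpT⟩
  obtain ⟨φ, hφ⟩ := h p hpL 1 one_pos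
  have hmaps {z : E} (hz : z ∈ S) (hzL : MapsTo (φ z) (ball 0 1) (Lᶜ ∩ ball p 1)) :
      MapsTo (φ z) (ball 0 1) S := by
    have hpre : IsPreconnected (φ z '' ball 0 1) :=
      isPreconnected_ball.image _ (hφ.differentiable z).continuous.continuousOn
    refine mapsTo_iff_image_subset.mpr (hpre.subset_left_of_subset_union hS hT hST ?_ ?_)
    · rw [hSTL]
      exact image_subset_iff.mpr fun ζ hζ => (hzL hζ).1
    · exact ⟨φ z 0, mem_image_of_mem _ (mem_ball_self one_pos), by rwa [hφ.apply_zero]⟩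
  have hlimit : MapsTo (φ p) (ball 0 1) (closure S) := fun ζ hζ => by
    refine mem_closure_of_frequently_of_tendsto ?_ (hφ.continuousAt ζ)
    refine ((mem_closure_iff_frequently.mp hp).and_eventually hφ.eventually_mapsTo).mono ?_
    exact fun z ⟨hzS, hz⟩ => hmaps hzS (hz (hSL hzS)) hζ
  have hhalf := hφ.apply_half_mem.1
  rw [hconst _ (hφ.differentiable p).differentiableOn hlimit (hφ.apply_zero p)] at hhalf
  exact hhalf (hL.frontier_subset hpL)

lemma HasExteriorDiscs.isPreconnected_compl [FiniteDimensional ℂ E] [StrictConvexSpace ℝ E]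
    [Nontrivial E] (h : HasExteriorDiscs L) (hL : IsClosed L) (hLb : Bornology.IsBounded L) :
    IsPreconnected Lᶜ := by
  have : ProperSpace E := FiniteDimensional.proper ℂ E
  have : FiniteDimensional ℝ E := FiniteDimensional.complexToReal E
  have hrank : 1 < Module.rank ℝ E := by
    have := Module.finrank_pos (R := ℂ) (M := E)
    rw [← Module.finrank_eq_rank, finrank_real_of_complex]
    exact_mod_cast (by lia)
  obtain ⟨R, hR, hLR⟩ := hLb.subset_closedBall_lt 0 0
  refine isPreconnected_of_isOpen_of_forall_disjoint hL.isOpen_compl fun A B hA hB hAB hABL => ?_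
  have hbounded {S T : Set E} (hST : Disjoint S T) (hT : (closedBall 0 R)ᶜ ⊆ T) :
      Bornology.IsBounded S :=
    isBounded_closedBall.subset (disjoint_compl_right_iff_subset.mp (hST.mono_right hT))
  rcases (isPreconnected_compl_closedBall hrank hR.le).subset_or_subset hA hB hAB
    (hABL ▸ compl_subset_compl.mpr hLR) with hRA | hRB
  · exact Or.inr (h.eq_empty_of_isBounded hL hB hA hAB.symm (by rwa [union_comm])
      (hbounded hAB.symm hRA))
  · exact Or.inl (h.eq_empty_of_isBounded hL hA hB hAB hABL (hbounded hAB hRB))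

theorem HasExteriorDiscs.isConnected_sdiff [FiniteDimensional ℂ E] [StrictConvexSpace ℝ E]
    [Nontrivial E] (h : HasExteriorDiscs L) (hL : IsClosed L) (hG : IsOpen G)
    (hGc : IsConnected G) (hGb : Bornology.IsBounded G) (hLG : L ⊆ G) : IsConnected (G \ L) := by
  have hGne : G ≠ univ := by
    rintro rfl
    exact NormedSpace.unbounded_univ ℂ E hGb
  refine ⟨?_, isPreconnected_inter_of_union_eq_univ hG hL.isOpen_compl hGc.isPreconnected
    (h.isPreconnected_compl hL (hGb.subset hLG))
    (compl_subset_iff_union.mp (compl_subset_compl.mpr hLG))⟩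
  obtain ⟨q, hq⟩ := nonempty_frontier_iff.mpr ⟨hGc.nonempty, hGne⟩
  rw [hG.frontier_eq] at hq
  obtain ⟨x, hxL, hxG⟩ := mem_closure_iff.mp hq.1 _ hL.isOpen_compl fun hqL => hq.2 (hLG hqL)
  exact ⟨x, hxG, hxL⟩

end Exterior

theorem complement_of_strictly_pseudoconvex_gromov_hyperbolic_general
    (n : ℕ) (hn : 2 ≤ n) (D G : Set (EuclideanSpace ℂ (Fin n)))
    (hDopen : IsOpen D) (hDpsc : IsStrictlyPseudoconvex D)
    (hGopen : IsOpen G) (hGconn : IsConnected G) (hGpsc : IsStrictlyPseudoconvex G)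
    (hDG : closure D ⊆ G) :
    IsOpen (G \ closure D) ∧ IsConnected (G \ closure D) ∧
      GromovHyperbolicWith (G \ closure D) (kobayashi (G \ closure D)) := by
  obtain ⟨ρD, hρD⟩ := hDpsc.exists_isPseudoconvexDefiningFunction
  obtain ⟨ρG, hρG⟩ := hGpsc.exists_isPseudoconvexDefiningFunction
  have hfinrank : 1 < Module.finrank ℂ (EuclideanSpace ℂ (Fin n)) := by
    rwa [finrank_euclideanSpace_fin]
  have : Nontrivial (EuclideanSpace ℂ (Fin n)) :=
    Module.nontrivial_of_finrank_pos (R := ℂ) (zero_lt_one.trans hfinrank)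
  have hdiscs : HasExteriorDiscs (closure D) := hρD.hasExteriorDiscs_closure hDopen hfinrank
  have hopen : IsOpen (G \ closure D) := hGopen.sdiff isClosed_closure
  have hconn : IsConnected (G \ closure D) :=
    hdiscs.isConnected_sdiff isClosed_closure hGopen hGconn hρG.isBounded hDG
  have hGne : G ≠ univ := by
    rintro rfl
    exact NormedSpace.unbounded_univ ℂ _ hρG.isBounded
  obtain ⟨a, η, c, M, hestimates⟩ :=
    hρG.exists_boundaryEstimates hGopen hGne isClosed_closure hDG
  exact ⟨hopen, hconn, hestimates.gromovHyperbolicWith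
    (analyticDiscConnected_of_isOpen hopen hconn.isPreconnected)
    (hdiscs.kobayashiBoundedAwayFrom isClosed_closure hGopen hρG.isBounded)⟩

/-- **Corollary 6.** If `D ⋐ G` are strictly pseudoconvex domains in `ℂⁿ` (`n ≥ 2`),
then `G ∖ cl(D)` is a domain which is Gromov hyperbolic with respect to its Kobayashi
distance. -/
theorem complement_of_strictly_pseudoconvex_gromov_hyperbolic
    (n : ℕ) (hn : 2 ≤ n) (D G : Set (EuclideanSpace ℂ (Fin n)))
    (hDopen : IsOpen D) (hDconn : IsConnected D) (hDpsc : IsStrictlyPseudoconvex D)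
    (hGopen : IsOpen G) (hGconn : IsConnected G) (hGpsc : IsStrictlyPseudoconvex G)
    (hDG : closure D ⊆ G) :
    IsOpen (G \ closure D) ∧ IsConnected (G \ closure D) ∧
      GromovHyperbolicWith (G \ closure D) (kobayashi (G \ closure D)) := by
  exact complement_of_strictly_pseudoconvex_gromov_hyperbolic_general n hn D G hDopen hDpsc hGopen
    hGconn hGpsc hDG
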